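/- Let n ≥ 2, 0 < α < 1 and k, l ≥ 1 be integers. Let Ω ⊂ ℝⁿ be a bounded domain with 0 ∈ ∂Ω and let u solve Δu = f in Ω∩B₁ and u = g on ∂Ω∩B₁. Suppose u ∈ C^{k,α}(0), f ∈ C^{k+l−2,α}(0), g ∈ C^{k+l,α}(0), ∂Ω ∈ C^{l,α}(0), and u(0) = |Du(0)| = ⋯ = |D^k u(0)| = 0 and |Dg(0)| = ⋯ = |D^k g(0)| = 0. Then u ∈ C^{k+l,α}(0): there exist a constant C, depending only on n, k, l, α and ‖∂Ω∩B₁‖_{C^{l,α}(0)}, and a polynomial P of degree ≤ k+l such that |u(x) − P(x)| ≤ C|x|^{k+l+α}(‖u‖_{L^∞(Ω∩B₁)} + ‖f‖_{C^{k+l−2,α}(0)} + ‖g‖_{C^{k+l,α}(0)}) for all x ∈ Ω∩B₁, |D^{k+1}u(0)| + ⋯ + |D^{k+l}u(0)| ≤ C(‖u‖_{L^∞(Ω∩B₁)} + ‖f‖_{C^{k+l−2,α}(0)} + ‖g‖_{C^{k+l,α}(0)}), and moreover ΔP ≡ P_f and Π_{k+l}(P(x′, P_Ω(x′))) ≡ Π_{k+l}(P_g(x′,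 P_Ω(x′))) as polynomials in x′. -/

import Mathlib

open MvPolynomial Metric Set MeasureTheory Bornology

noncomputable section

/-- `ℝⁿ` with the Euclidean norm. -/
abbrev En (n : ℕ) := EuclideanSpace ℝ (Fin n)

variable {n : ℕ}

/-- Evaluation of a multivariate polynomial at a point of `ℝⁿ`. -/
def peval (P : MvPolynomial (Fin n) ℝ) (x : En n) : ℝ :=
  MvPolynomial.eval (fun i => x i) P

/-- Total degree of a monomial (multi-index). -/
def mdeg (d : Fin n →₀ ℕ) : ℕ := d.sum fun _ e => e

/-- `σ!` for a multi-index `σ`. -/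
def mfact (d : Fin n →₀ ℕ) : ℕ := d.prod fun _ e => Nat.factorial e

/-- The norm `‖P‖ = Σ_σ |a_σ|` of a polynomial `P = Σ_σ (a_σ/σ!) x^σ`. -/
def pnorm (P : MvPolynomial (Fin n) ℝ) : ℝ :=
  ∑ d ∈ P.support, (mfact d : ℝ) * |MvPolynomial.coeff d P|

/-- `|D^i P(0)|`, the Euclidean norm of the `i`-th derivative of `P` at `0`. -/
def derivNorm (i : ℕ) (P : MvPolynomial (Fin n) ℝ) : ℝ :=
  Real.sqrt (∑ d ∈ P.support.filter (fun d => mdeg d = i),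
    ((mfact d : ℝ) * MvPolynomial.coeff d P) ^ 2)

/-- Polynomial Laplacian. -/
def plap (P : MvPolynomial (Fin n) ℝ) : MvPolynomial (Fin n) ℝ :=
  ∑ i, MvPolynomial.pderiv i (MvPolynomial.pderiv i P)

/-- The index of the last coordinate. -/
def lastIdx (n : ℕ) [NeZero n] : Fin n :=
  ⟨n - 1, Nat.sub_lt (Nat.pos_of_ne_zero (NeZero.ne n)) Nat.one_pos⟩

variable [NeZero n]

/-- The last coordinate `x_n`. -/
def xn (x : En n) : ℝ := x (lastIdx n)

/-- `|x′|`, the norm of the first `n-1` coordinates. -/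
def xpn (x : En n) : ℝ :=
  Real.sqrt (∑ i ∈ Finset.univ.erase (lastIdx n), (x i) ^ 2)

/-- Substitution of the polynomial `q` for the last variable `x_n`. -/
def substLast (q P : MvPolynomial (Fin n) ℝ) : MvPolynomial (Fin n) ℝ :=
  MvPolynomial.aeval (fun i => if i = lastIdx n then q else MvPolynomial.X i) P

/-- The pointwise Laplacian of `u` at `x` (sum of pure second derivatives). -/
def lapAt (u : En n → ℝ) (x : En n) : ℝ :=
  ∑ i, fderiv ℝ (fderiv ℝ u) x (EuclideanSpace.single i 1) (EuclideanSpace.single i 1)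

/-- `u` is a (classical) solution of `Δu = f` in `Ω ∩ B₁`, `u = g` on `∂Ω ∩ B₁`. -/
def SolvesDirichlet (Ω : Set (En n)) (u f g : En n → ℝ) : Prop :=
  ContinuousOn u (closure Ω ∩ ball 0 1) ∧
  (∀ x ∈ Ω ∩ ball (0 : En n) 1,
    DifferentiableAt ℝ u x ∧ DifferentiableAt ℝ (fderiv ℝ u) x ∧ lapAt u x = f x) ∧
  (∀ x ∈ frontier Ω ∩ ball (0 : En n) 1, u x = g x)

/-- `u` is a (classical) solution of the oblique derivative problem `Δu = f` in `Ω ∩ B₁`,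
`β·Du = g` on `∂Ω ∩ B₁`, with `‖β‖_∞ ≤ 1` and `β·e_n ≥ a₀`; `Du` is the (continuous up to the
boundary) gradient of `u`. -/
def SolvesOblique (Ω : Set (En n)) (u f g : En n → ℝ) (β Du : En n → En n) (a₀ : ℝ) : Prop :=
  ContinuousOn u (closure Ω ∩ ball 0 1) ∧
  ContinuousOn Du (closure Ω ∩ ball 0 1) ∧
  (∀ x ∈ Ω ∩ ball (0 : En n) 1,
    DifferentiableAt ℝ u x ∧ (∀ i, fderiv ℝ u x (EuclideanSpace.single i 1) = Du x i) ∧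
    DifferentiableAt ℝ (fderiv ℝ u) x ∧ lapAt u x = f x) ∧
  (∀ x ∈ frontier Ω ∩ ball (0 : En n) 1,
    (∑ i, β x i * Du x i) = g x ∧ ‖β x‖ ≤ 1 ∧ a₀ ≤ β x (lastIdx n))

/-- `∂Ω ∈ C^{m,α}(0)` with polynomial `P_Ω = P` and constant `K`. -/
def DomainCmα (m : ℕ) (α K : ℝ) (P : MvPolynomial (Fin n) ℝ) (Ω : Set (En n)) : Prop :=
  P.totalDegree ≤ m ∧ MvPolynomial.coeff 0 P = 0 ∧
  MvPolynomial.pderiv (lastIdx n) P = 0 ∧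
  (1 ≤ m → ∀ i, MvPolynomial.coeff (Finsupp.single i 1) P = 0) ∧
  (∀ x : En n, ‖x‖ < 1 → xn x > peval P x + K * (xpn x) ^ ((m : ℝ) + α) → x ∈ Ω) ∧
  (∀ x : En n, ‖x‖ < 1 → xn x < peval P x - K * (xpn x) ^ ((m : ℝ) + α) → x ∉ Ω)

/-- `∂Ω ∈ C^{1,α}(0)` with constant `K` (the degree-one polynomial is necessarily `0`). -/
def Domain1α (α K : ℝ) (Ω : Set (En n)) : Prop :=
  (∀ x : En n, ‖x‖ < 1 → xn x > K * (xpn x) ^ ((1 : ℝ) + α) → x ∈ Ω) ∧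
  (∀ x : En n, ‖x‖ < 1 → xn x < -(K * (xpn x) ^ ((1 : ℝ) + α)) → x ∉ Ω)

/-- `[∂Ω∩B₁]_{C^{0,1}(0)} ≤ δ`. -/
def DomainLip (δ : ℝ) (Ω : Set (En n)) : Prop :=
  (∀ x : En n, ‖x‖ < 1 → xn x > δ * xpn x → x ∈ Ω) ∧
  (∀ x : En n, ‖x‖ < 1 → xn x < -(δ * xpn x) → x ∉ Ω)

/-- `osc_{B₁} ∂Ω ≤ δ`. -/
def FrontierOscLe (Ω : Set (En n)) (δ : ℝ) : Prop :=
  ∀ x ∈ frontier Ω ∩ ball (0 : En n) 1, ∀ y ∈ frontier Ω ∩ ball (0 : En n) 1,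
    xn x - xn y ≤ δ

/-- The `L^n` norm of `f` on a set `S ⊆ ℝⁿ`. -/
def LnNorm (n : ℕ) (S : Set (En n)) (f : En n → ℝ) : ℝ :=
  (∫ x in S, |f x| ^ (n : ℝ)) ^ ((n : ℝ)⁻¹)

/-- `∂Ω` is `C^{m,α}` at the point `x₀` with constants `K, r₀`: after an isometric change of
coordinates `φ` taking `x₀` to `0`, the boundary is trapped between `P_Ω(x′) ± K|x′|^{m+α}`. -/
def BoundaryPtCmα (m : ℕ) (α K r₀ : ℝ) (Ω : Set (En n)) (x₀ : En n) : Prop :=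
  ∃ (φ : En n ≃ᵢ En n) (P : MvPolynomial (Fin n) ℝ), φ x₀ = 0 ∧
    P.totalDegree ≤ m ∧ MvPolynomial.coeff 0 P = 0 ∧
    MvPolynomial.pderiv (lastIdx n) P = 0 ∧
    (1 ≤ m → ∀ i, MvPolynomial.coeff (Finsupp.single i 1) P = 0) ∧
    (∀ y : En n, ‖y‖ < r₀ → xn y > peval P y + K * (xpn y) ^ ((m : ℝ) + α) → φ.symm y ∈ Ω) ∧
    (∀ y : En n, ‖y‖ < r₀ → xn y < peval P y - K * (xpn y) ^ ((m : ℝ) + α) → φ.symm y ∉ Ω)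

/-- `∂Ω ∩ B₁ ∈ C^{m,α}`: pointwise `C^{m,α}` with constants uniform on compact subsets. -/
def BoundaryCmα (m : ℕ) (α : ℝ) (Ω : Set (En n)) : Prop :=
  ∀ S : Set (En n), IsCompact S → S ⊆ frontier Ω ∩ ball (0 : En n) 1 →
    ∃ K r₀ : ℝ, 0 ≤ K ∧ 0 < r₀ ∧ ∀ x₀ ∈ S, BoundaryPtCmα m α K r₀ Ω x₀

/-- `∂Ω ∩ B₁ ∈ C^∞`. -/
def BoundarySmooth (Ω : Set (En n)) : Prop :=
  ∀ m : ℕ, 1 ≤ m → ∀ α : ℝ, 0 < α → α ≤ 1 → BoundaryCmα m α Ω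

/-- `u ∈ C^∞(Ω̄ ∩ B₁)`: near every point of `Ω̄ ∩ B₁`, `u` agrees on `Ω` with a globally
smooth function. -/
def SmoothUpToBoundary (Ω : Set (En n)) (u : En n → ℝ) : Prop :=
  ∀ x₀ ∈ closure Ω ∩ ball (0 : En n) 1, ∃ ε : ℝ, 0 < ε ∧ ∃ v : En n → ℝ,
    ContDiff ℝ (⊤ : ℕ∞) v ∧ ∀ x ∈ Ω ∩ ball x₀ ε, v x = u x

end

/-!
Near `0` the domain is almost a half-space. If `u` is approximated to order `β` by a polynomial that
matches the data `P_f` and `P_g`, then at each scale `r` the remainder `v` almost solves the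
homogeneous Dirichlet problem up to an error of relative size `r ^ α`. Barriers bound `v` linearly
near the boundary, so its values on a half-sphere, cut off near `{x_n = 0}` and reflected oddly, are
continuous boundary data on the sphere. An odd harmonic polynomial that almost attains them stays
close to `v` by the maximum principle. Comparing consecutive dyadic scales, these polynomials
converge to an odd harmonic polynomial `a` with `v = a + O(|x| ^ γ)` for non-integral `γ ≤ β + α`.

The trace of `a` on the boundary graph vanishes to one order more than `a`, because the graph is
tangent to `{x_n = 0}`. It can thus be removed by a harmonic polynomial of higher order, after which
the data are matched again, and iteration reaches the order `k + l + α`. At every step the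
hypothesis `u = O(|x| ^ (k + α))` forces the approximating polynomial to vanish to order `k + 1`. It
is this vanishing that compensates for the boundary being only `C^{l,α}`: moving a point by
`O(|x| ^ (l + α))` changes a polynomial of order `k + 1` by `O(|x| ^ (k + l + α))` only.
-/

open Filter Topology

noncomputable section

variable {n : ℕ}

/-! ### The pointwise Laplacian and the maximum principle -/

theorem hasDerivAt_add_smul (x v : En n) (t : ℝ) :
    HasDerivAt (fun t : ℝ => x + t • v) v t := by
  simpa using ((hasDerivAt_id t).smul_const v).const_add x

theorem tendsto_add_smul_nhds_zero (x v : En n) :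
    Tendsto (fun t : ℝ => x + t • v) (𝓝 0) (𝓝 x) := by
  simpa using (hasDerivAt_add_smul x v 0).continuousAt.tendsto

/-- `w` has second derivative `a` at `x` in the direction `v`: it is differentiable along the
line `x + t v` for small `t`, and its derivative there is differentiable at `t = 0`. -/
def HasSecondDerivAlong (w : En n → ℝ) (x v : En n) (a : ℝ) : Prop :=
  ∃ w' : ℝ → ℝ, (∀ᶠ t in 𝓝 (0 : ℝ), HasDerivAt (fun t : ℝ => w (x + t • v)) (w' t) t) ∧
    HasDerivAt w' a 0

/-- `w` has Laplacian `L` at `x`, as the sum of its second derivatives along the coordinate axes.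
Only behaviour on lines through `x` is involved, so the notion is stable under sums without any
second-order differentiability of `w` near `x`. -/
def HasLap (w : En n → ℝ) (x : En n) (L : ℝ) : Prop :=
  ∃ a : Fin n → ℝ, (∀ i, HasSecondDerivAlong w x (EuclideanSpace.single i 1) (a i)) ∧ ∑ i, a i = L

section HasLap

variable {w v : En n → ℝ} {x : En n} {L L' : ℝ}

theorem HasLap.add (h : HasLap w x L) (h' : HasLap v x L') :
    HasLap (fun y => w y + v y) x (L + L') := by
  obtain ⟨a, ha, rfl⟩ := h
  obtain ⟨b, hb, rfl⟩ := h'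
  refine ⟨fun i => a i + b i, fun i => ?_, Finset.sum_add_distrib⟩
  obtain ⟨w', hw, hw'⟩ := ha i
  obtain ⟨v', hv, hv'⟩ := hb i
  exact ⟨fun t => w' t + v' t, hw.mp (hv.mono fun t h₁ h₂ => h₂.add h₁), hw'.add hv'⟩

theorem HasLap.const_mul (c : ℝ) (h : HasLap w x L) : HasLap (fun y => c * w y) x (c * L) := by
  obtain ⟨a, ha, rfl⟩ := h
  refine ⟨fun i => c * a i, fun i => ?_, (Finset.mul_sum _ _ _).symm⟩
  obtain ⟨w', hw, hw'⟩ := ha i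
  exact ⟨fun t => c * w' t, hw.mono fun t h => h.const_mul c, hw'.const_mul c⟩

theorem HasLap.neg (h : HasLap w x L) : HasLap (fun y => -w y) x (-L) := by
  simpa using h.const_mul (-1)

theorem HasLap.sub (h : HasLap w x L) (h' : HasLap v x L') :
    HasLap (fun y => w y - v y) x (L - L') := by
  simpa [sub_eq_add_neg] using h.add h'.neg

theorem hasLap_lapAt {V : Set (En n)} (hV : IsOpen V) (hx : x ∈ V)
    (hw : ∀ y ∈ V, DifferentiableAt ℝ w y) (hw' : DifferentiableAt ℝ (fderiv ℝ w) x) :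
    HasLap w x (lapAt w x) := by
  refine ⟨_, fun i => ?_, rfl⟩
  set e : En n := EuclideanSpace.single i 1
  refine ⟨fun t => fderiv ℝ w (x + t • e) e, ?_, ?_⟩
  · filter_upwards [(tendsto_add_smul_nhds_zero x e).eventually (hV.mem_nhds hx)] with t ht
    exact (hw _ ht).hasFDerivAt.comp_hasDerivAt t (hasDerivAt_add_smul x e t)
  · have hD : HasFDerivAt (fderiv ℝ w) (fderiv ℝ (fderiv ℝ w) x) (x + (0 : ℝ) • e) := by
      simpa using hw'.hasFDerivAt
    have hD' := hD.comp_hasDerivAt (0 : ℝ) (hasDerivAt_add_smul x e 0)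
    exact (hD'.clm_apply (hasDerivAt_const _ _)).congr_deriv (by simp)

theorem second_deriv_nonpos_of_isLocalMax {φ φ' : ℝ → ℝ} {t₀ a : ℝ} (hmax : IsLocalMax φ t₀)
    (hφ : ∀ᶠ t in 𝓝 t₀, HasDerivAt φ (φ' t) t) (hφ' : HasDerivAt φ' a t₀) : a ≤ 0 := by
  have hderiv : deriv φ =ᶠ[𝓝 t₀] φ' := hφ.mono fun t h => h.deriv
  have hderiv₂ : deriv (deriv φ) t₀ = a := by rw [hderiv.deriv_eq, hφ'.deriv]
  by_contra! ha
  -- A positive second derivative would make `t₀` a local minimum too, so `φ` locally constant.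
  have hmin : IsLocalMin φ t₀ := isLocalMin_of_deriv_deriv_pos (hderiv₂ ▸ ha)
    hmax.deriv_eq_zero hφ.self_of_nhds.continuousAt
  have hconst : φ =ᶠ[𝓝 t₀] fun _ => φ t₀ := by
    filter_upwards [hmax, hmin] with t h₁ h₂ using le_antisymm h₁ h₂
  have hderiv_zero : deriv φ =ᶠ[𝓝 t₀] fun _ => 0 := by simpa using hconst.deriv
  have : deriv (deriv φ) t₀ = 0 := by simpa using hderiv_zero.deriv_eq
  linarith

theorem HasLap.nonpos_of_isLocalMax (h : HasLap w x L) (hmax : IsLocalMax w x) : L ≤ 0 := by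
  obtain ⟨a, ha, rfl⟩ := h
  refine Finset.sum_nonpos fun i _ => ?_
  obtain ⟨w', hw, hw'⟩ := ha i
  refine second_deriv_nonpos_of_isLocalMax ?_ hw hw'
  simpa [IsLocalMax, IsMaxFilter] using (tendsto_add_smul_nhds_zero x _).eventually hmax

end HasLap

/-! ### Polynomials as functions on `ℝⁿ` -/

/-- Real polynomials in `n` variables. -/
abbrev RealPoly (n : ℕ) := MvPolynomial (Fin n) ℝ

section peval

variable (P Q : RealPoly n) (x : En n)

@[simp] theorem peval_add : peval (P + Q) x = peval P x + peval Q x := by simp [peval]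

@[simp] theorem peval_sub : peval (P - Q) x = peval P x - peval Q x := by simp [peval]

@[simp] theorem peval_neg : peval (-P) x = -peval P x := by simp [peval]

@[simp] theorem peval_mul : peval (P * Q) x = peval P x * peval Q x := by simp [peval]

@[simp] theorem peval_pow (k : ℕ) : peval (P ^ k) x = peval P x ^ k := by simp [peval]

@[simp] theorem peval_sum {ι : Type*} (s : Finset ι) (P : ι → RealPoly n) :
    peval (∑ i ∈ s, P i) x = ∑ i ∈ s, peval (P i) x := by simp [peval]

@[simp] theorem peval_C (c : ℝ) : peval (C c) x = c := by simp [peval]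

@[simp] theorem peval_X (i : Fin n) : peval (X i) x = x i := by simp [peval]

@[simp] theorem peval_zero : peval 0 x = 0 := by simp [peval]

theorem continuous_peval : Continuous (peval P) :=
  (MvPolynomial.continuous_eval P).comp (by fun_prop : Continuous fun x : En n => fun i => x i)

theorem hasDerivAt_peval_add_smul (v : En n) (t : ℝ) :
    HasDerivAt (fun t : ℝ => peval P (x + t • v))
      (∑ i, v i * peval (pderiv i P) (x + t • v)) t := by
  induction P using MvPolynomial.induction_on with
  | C a => simpa using hasDerivAt_const t a
  | add p q hp hq => simpa [mul_add, Finset.sum_add_distrib] using hp.fun_add hq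
  | mul_X p j hp =>
    have hX : HasDerivAt (fun t : ℝ => peval (X j) (x + t • v)) (v j) t := by
      simpa using ((hasDerivAt_id t).mul_const (v j)).const_add (x j)
    have hsingle (i : Fin n) : peval ((Pi.single i 1 : Fin n → RealPoly n) j) (x + t • v) =
        if j = i then 1 else 0 := by
      by_cases h : j = i <;> simp [h, peval]
    simp only [peval_mul]
    refine (hp.fun_mul hX).congr_deriv ?_
    simp only [pderiv_mul, pderiv_X, peval_add, peval_mul, hsingle, mul_add,
      Finset.sum_add_distrib, Finset.sum_mul]
    simp [mul_comm, mul_left_comm]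

theorem hasLap_peval : HasLap (peval P) x (peval (plap P) x) := by
  have hderiv (Q : RealPoly n) (i : Fin n) (t : ℝ) :
      HasDerivAt (fun t : ℝ => peval Q (x + t • EuclideanSpace.single i 1))
        (peval (pderiv i Q) (x + t • EuclideanSpace.single i 1)) t := by
    simpa using hasDerivAt_peval_add_smul Q x (EuclideanSpace.single i 1) t
  refine ⟨fun i => peval (pderiv i (pderiv i P)) x, fun i => ⟨_, .of_forall (hderiv P i), ?_⟩, ?_⟩
  · simpa using hderiv (pderiv i P) i 0
  · simp [plap]

end peval

theorem pderiv_pderiv_comm (i j : Fin n) (p : RealPoly n) :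
    pderiv i (pderiv j p) = pderiv j (pderiv i p) := by
  have hbracket : ⁅pderiv i, pderiv j⁆ = (0 : Derivation ℝ (RealPoly n) (RealPoly n)) :=
    MvPolynomial.derivation_ext fun k => by
      rw [Derivation.commutator_apply]
      simp [pderiv_X, Pi.single_apply, apply_ite]
  rw [← sub_eq_zero, ← Derivation.commutator_apply, hbracket, Derivation.zero_apply]

section plap

variable (p q : RealPoly n)

@[simp] theorem plap_zero : plap (0 : RealPoly n) = 0 := by simp [plap]

@[simp] theorem plap_add : plap (p + q) = plap p + plap q := by
  simp [plap, Finset.sum_add_distrib]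

@[simp] theorem plap_sub : plap (p - q) = plap p - plap q := by
  simp [plap, Finset.sum_sub_distrib]

@[simp] theorem plap_C_mul (c : ℝ) : plap (C c * p) = C c * plap p := by
  simp [plap, Finset.mul_sum]

theorem plap_mul : plap (p * q) =
    p * plap q + q * plap p + C 2 * ∑ i, pderiv i p * pderiv i q := by
  simp only [plap, Finset.mul_sum, ← Finset.sum_add_distrib]
  refine Finset.sum_congr rfl fun i _ => ?_
  simp only [pderiv_mul, map_add, map_ofNat]
  ring

theorem plap_pderiv (i : Fin n) : plap (pderiv i p) = pderiv i (plap p) := by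
  simp [plap, pderiv_pderiv_comm _ i]

end plap

/-- The polynomial `R² - |x|²`, which cuts off to the ball of radius `R`. -/
def ballCutoff (n : ℕ) (R : ℝ) : RealPoly n := C (R ^ 2) - ∑ i, X i ^ 2

section ballCutoff

variable (R : ℝ)

theorem peval_ballCutoff (x : En n) : peval (ballCutoff n R) x = R ^ 2 - ‖x‖ ^ 2 := by
  simp [ballCutoff, EuclideanSpace.real_norm_sq_eq]

theorem pderiv_ballCutoff (i : Fin n) : pderiv i (ballCutoff n R) = -(C 2 * X i) := by
  simp [ballCutoff, pderiv_X, Pi.single_apply, ← map_ofNat (C : ℝ →+* RealPoly n)]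

theorem plap_ballCutoff : plap (ballCutoff n R) = -C (2 * (n : ℝ)) := by
  simp [plap, pderiv_ballCutoff, mul_comm]

end ballCutoff

theorem hasLap_norm_sub_sq (z x : En n) : HasLap (fun y : En n => ‖y - z‖ ^ 2) x (2 * n) := by
  have heval : (fun y : En n => ‖y - z‖ ^ 2) = peval (∑ i, (X i - C (z i)) ^ 2) := by
    funext y
    simp [EuclideanSpace.real_norm_sq_eq]
  have hpderiv (i : Fin n) : pderiv i (∑ j, (X j - C (z j)) ^ 2) = C 2 * (X i - C (z i)) := by
    simp [pderiv_X, Pi.single_apply, ← map_ofNat (C : ℝ →+* RealPoly n)]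
  have hlap : peval (plap (∑ i, (X i - C (z i)) ^ 2)) x = 2 * n := by
    simp only [plap, peval_sum, hpderiv]
    simp [mul_comm]
  exact heval ▸ hlap ▸ hasLap_peval _ x

section MaximumPrinciple

variable {U : Set (En n)} {w : En n → ℝ} {m R δ : ℝ}

theorem le_of_hasLap_pos_of_le_frontier (hU : IsOpen U) (hbdd : IsBounded U)
    (hw : ContinuousOn w (closure U)) (hlap : ∀ x ∈ U, ∃ L, 0 < L ∧ HasLap w x L)
    (hm : ∀ x ∈ frontier U, w x ≤ m) : ∀ x ∈ U, w x ≤ m := by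
  intro x hx
  obtain ⟨z, hz, hmax⟩ := hbdd.isCompact_closure.exists_isMaxOn ⟨x, subset_closure hx⟩ hw
  have hzU : z ∉ U := by
    intro hzU
    obtain ⟨L, hLpos, hL⟩ := hlap z hzU
    have hlocal : IsLocalMax w z := by
      filter_upwards [hU.mem_nhds hzU] with y hy using hmax (subset_closure hy)
    exact hLpos.not_ge (hL.nonpos_of_isLocalMax hlocal)
  exact (hmax (subset_closure hx)).trans (hm z (hU.frontier_eq ▸ ⟨hz, hzU⟩))

variable [NeZero n]

theorem le_add_of_neg_le_hasLap (hU : IsOpen U) (hUR : U ⊆ closedBall 0 R) (hδ : 0 ≤ δ)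
    (hw : ContinuousOn w (closure U)) (hlap : ∀ x ∈ U, ∃ L, -δ ≤ L ∧ HasLap w x L)
    (hm : ∀ x ∈ frontier U, w x ≤ m) : ∀ x ∈ U, w x ≤ m + δ * R ^ 2 := by
  intro x hx
  have hone : (1 : ℝ) ≤ n := by exact_mod_cast NeZero.one_le
  -- Adding `s‖y‖²` with `s > δ` makes the Laplacian positive; then let `s → δ`.
  have hperturbed (s : ℝ) (hs : δ < s) : w x ≤ m + s * R ^ 2 := by
    have hmax := le_of_hasLap_pos_of_le_frontier (w := fun y => w y + s * ‖y - 0‖ ^ 2)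
      (m := m + s * R ^ 2) hU (isBounded_closedBall.subset hUR) (hw.add (by fun_prop))
      (fun y hy => by
        obtain ⟨L, hL, hLap⟩ := hlap y hy
        exact ⟨_, by nlinarith, hLap.add ((hasLap_norm_sub_sq 0 y).const_mul s)⟩)
      (fun y hy => by
        have hy' : y ∈ closedBall 0 R :=
          closure_minimal hUR isClosed_closedBall (frontier_subset_closure hy)
        have hyR : ‖y - 0‖ ≤ R := by simpa using hy'
        have hs0 : 0 ≤ s := hδ.trans hs.le
        gcongr
        exact hm y hy) x hx
    have : 0 ≤ s * ‖x - 0‖ ^ 2 := mul_nonneg (hδ.trans hs.le) (sq_nonneg _)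
    linarith
  have hlim : Tendsto (fun s => m + s * R ^ 2) (𝓝[>] δ) (𝓝 (m + δ * R ^ 2)) :=
    (Continuous.tendsto (by fun_prop) δ).mono_left nhdsWithin_le_nhds
  exact ge_of_tendsto hlim (eventually_mem_nhdsWithin.mono hperturbed)

theorem abs_le_add_of_abs_hasLap_le (hU : IsOpen U) (hUR : U ⊆ closedBall 0 R) (hδ : 0 ≤ δ)
    (hw : ContinuousOn w (closure U)) (hlap : ∀ x ∈ U, ∃ L, |L| ≤ δ ∧ HasLap w x L)
    (hm : ∀ x ∈ frontier U, |w x| ≤ m) : ∀ x ∈ U, |w x| ≤ m + δ * R ^ 2 := by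
  intro x hx
  refine abs_le'.2 ⟨?_, ?_⟩
  · refine le_add_of_neg_le_hasLap hU hUR hδ hw (fun y hy => ?_) (fun y hy => ?_) x hx
    · obtain ⟨L, hL, hLap⟩ := hlap y hy
      exact ⟨L, (abs_le.1 hL).1, hLap⟩
    · exact (abs_le'.1 (hm y hy)).1
  · refine le_add_of_neg_le_hasLap hU hUR hδ hw.neg (fun y hy => ?_) (fun y hy => ?_) x hx
    · obtain ⟨L, hL, hLap⟩ := hlap y hy
      exact ⟨-L, neg_le_neg (abs_le.1 hL).2, hLap.neg⟩
    · exact (abs_le'.1 (hm y hy)).2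

end MaximumPrinciple

section mdeg

theorem mdeg_eq_degree (d : Fin n →₀ ℕ) : mdeg d = d.degree := rfl

theorem mdeg_add (d e : Fin n →₀ ℕ) : mdeg (d + e) = mdeg d + mdeg e := by
  simp [mdeg_eq_degree]

theorem mdeg_single (i : Fin n) (k : ℕ) : mdeg (Finsupp.single i k) = k := by
  simp [mdeg_eq_degree]

theorem exists_eq_add_single_of_mdeg_pos {d : Fin n →₀ ℕ} (hd : 0 < mdeg d) :
    ∃ e i, d = e + Finsupp.single i 1 := by
  have hd0 : d ≠ 0 := by
    rintro rfl
    simp [mdeg_eq_degree] at hd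
  obtain ⟨i, hi⟩ := Finsupp.ne_iff.1 hd0
  have hle : Finsupp.single i 1 ≤ d :=
    Finsupp.single_le_iff.2 (Nat.one_le_iff_ne_zero.2 (by simpa using hi))
  exact ⟨d - Finsupp.single i 1, i, (tsub_add_cancel_of_le hle).symm⟩

end mdeg

/-- The part of `p` of total degree `< m`, i.e. its Taylor polynomial at `0` of order `m - 1`. -/
def truncDegree (m : ℕ) (p : RealPoly n) : RealPoly n :=
  ∑ d ∈ Finset.range m, homogeneousComponent d p

section truncDegree

variable (m : ℕ) (p q : RealPoly n)

theorem coeff_truncDegree (d : Fin n →₀ ℕ) :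
    coeff d (truncDegree m p) = if mdeg d < m then coeff d p else 0 := by
  by_cases h : d.degree < m <;>
    simp [truncDegree, coeff_sum, coeff_homogeneousComponent, mdeg_eq_degree, h]

theorem pderiv_truncDegree (i : Fin n) :
    pderiv i (truncDegree (m + 1) p) = truncDegree m (pderiv i p) := by
  ext d
  simp [coeff_pderiv, coeff_truncDegree, mdeg_add, mdeg_single]

end truncDegree

theorem coeff_zero_eq_peval_zero (p : RealPoly n) : coeff 0 p = peval p 0 := by
  rw [← constantCoeff_eq, ← eval_zero]
  rfl

theorem abs_peval_sub_peval_zero_le (q : RealPoly n) (x : En n) {B : ℝ}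
    (h : ∀ i, ∀ t ∈ Icc (0 : ℝ) 1, |peval (pderiv i q) (t • x)| ≤ B) :
    |peval q x - peval q 0| ≤ n * ‖x‖ * B := by
  have hderiv (t : ℝ) (ht : t ∈ Ico (0 : ℝ) 1) :
      ‖∑ i, x i * peval (pderiv i q) (0 + t • x)‖ ≤ n * ‖x‖ * B :=
    calc ‖∑ i, x i * peval (pderiv i q) (0 + t • x)‖
        ≤ ∑ i, ‖x i * peval (pderiv i q) (0 + t • x)‖ := norm_sum_le _ _
      _ ≤ ∑ _i : Fin n, ‖x‖ * B := by
          refine Finset.sum_le_sum fun i _ => ?_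
          rw [norm_mul, zero_add]
          exact mul_le_mul (PiLp.norm_apply_le x i) (h i t ⟨ht.1, ht.2.le⟩) (norm_nonneg _)
            (norm_nonneg _)
      _ = n * ‖x‖ * B := by simp [mul_assoc]
  simpa using norm_image_sub_le_of_norm_deriv_le_segment_01'
    (fun t _ => (hasDerivAt_peval_add_smul q 0 x t).hasDerivWithinAt) hderiv

/-! ### Interior estimates for harmonic polynomials -/

theorem peval_plap_sq (p : RealPoly n) (y : En n) : peval (plap (p ^ 2)) y =
    2 * (peval p y * peval (plap p) y + ∑ j, peval (pderiv j p) y ^ 2) := by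
  simp only [sq, plap_mul, peval_add, peval_mul, peval_sum, peval_C]
  ring

theorem neg_le_peval_plap_ballCutoff_mul_sq {q : RealPoly n} (hq : plap q = 0) (R : ℝ) (y : En n) :
    -((24 * ‖y‖ ^ 2 + 4 * n * (R ^ 2 - ‖y‖ ^ 2)) * peval q y ^ 2) ≤
      peval (plap ((ballCutoff n R * q) ^ 2)) y := by
  set η := R ^ 2 - ‖y‖ ^ 2
  have hlap : peval (plap (ballCutoff n R * q)) y =
      -(2 * n * peval q y) - 4 * ∑ j, y j * peval (pderiv j q) y := by
    simp only [plap_mul, hq, plap_ballCutoff, pderiv_ballCutoff, peval_add, peval_mul, peval_sum,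
      peval_C, peval_neg, peval_X, peval_zero, Finset.mul_sum, sub_eq_add_neg,
      ← Finset.sum_neg_distrib]
    congr 1
    · ring
    · exact Finset.sum_congr rfl fun j _ => by ring
  have hsquares : 0 ≤ ∑ j, 2 * (η * peval (pderiv j q) y - 4 * (y j * peval q y)) ^ 2 :=
    Finset.sum_nonneg fun j _ => by positivity
  refine sub_nonneg.1 (hsquares.trans_eq ?_)
  rw [peval_plap_sq, hlap]
  simp only [pderiv_mul, pderiv_ballCutoff, peval_add, peval_mul, peval_neg, peval_C, peval_X,
    peval_ballCutoff]
  have hexpand (j : Fin n) : 2 * (η * peval (pderiv j q) y - 4 * (y j * peval q y)) ^ 2 =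
      24 * peval q y ^ 2 * y j ^ 2 - 8 * η * peval q y * (y j * peval (pderiv j q) y) +
        2 * (-(2 * y j) * peval q y + η * peval (pderiv j q) y) ^ 2 := by
    ring
  simp only [hexpand, Finset.sum_add_distrib, Finset.sum_sub_distrib, ← Finset.mul_sum]
  rw [← EuclideanSpace.real_norm_sq_eq]
  ring

section InteriorEstimates

variable {p : RealPoly n} {R b : ℝ}

/-- Bernstein's auxiliary polynomial `((R² - |x|²) ∂ᵢp)² + (2n + 12) R² p²`, subharmonic in `B_R`
when `p` is harmonic. -/
def bernsteinPoly (p : RealPoly n) (R : ℝ) (i : Fin n) : RealPoly n :=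
  (ballCutoff n R * pderiv i p) ^ 2 + C ((2 * n + 12) * R ^ 2) * p ^ 2

theorem peval_plap_bernsteinPoly_nonneg (hp : plap p = 0) (i : Fin n) {y : En n} (hy : ‖y‖ ≤ R) :
    0 ≤ peval (plap (bernsteinPoly p R i)) y := by
  have hq : plap (pderiv i p) = 0 := by rw [plap_pderiv, hp, map_zero]
  have hcutoff := neg_le_peval_plap_ballCutoff_mul_sq hq R y
  have hgrad : peval (pderiv i p) y ^ 2 ≤ ∑ j, peval (pderiv j p) y ^ 2 :=
    Finset.single_le_sum (f := fun j => peval (pderiv j p) y ^ 2) (fun j _ => sq_nonneg _)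
      (Finset.mem_univ i)
  have hyR : ‖y‖ ^ 2 ≤ R ^ 2 := by gcongr
  have hcoeff : 24 * ‖y‖ ^ 2 + 4 * n * (R ^ 2 - ‖y‖ ^ 2) ≤ 2 * ((2 * n + 12) * R ^ 2) := by
    nlinarith [mul_nonneg (Nat.cast_nonneg n : (0 : ℝ) ≤ n) (sq_nonneg ‖y‖)]
  rw [bernsteinPoly, plap_add, plap_C_mul, peval_add, peval_mul, peval_C, peval_plap_sq p, hp,
    peval_zero, mul_zero, zero_add]
  calc (0 : ℝ) ≤ (2 * ((2 * n + 12) * R ^ 2) - (24 * ‖y‖ ^ 2 + 4 * n * (R ^ 2 - ‖y‖ ^ 2))) *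
        peval (pderiv i p) y ^ 2 := mul_nonneg (sub_nonneg.2 hcoeff) (sq_nonneg _)
    _ = -((24 * ‖y‖ ^ 2 + 4 * n * (R ^ 2 - ‖y‖ ^ 2)) * peval (pderiv i p) y ^ 2) +
        (2 * n + 12) * R ^ 2 * (2 * peval (pderiv i p) y ^ 2) := by ring
    _ ≤ _ := by gcongr

variable [NeZero n]

theorem abs_peval_pderiv_le_of_plap_eq_zero (hp : plap p = 0) (hR : 0 < R)
    (h : ∀ x : En n, ‖x‖ ≤ R → |peval p x| ≤ b) (i : Fin n) {x : En n} (hx : ‖x‖ ≤ R / 2) :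
    |peval (pderiv i p) x| ≤ (2 * n + 12) * b / R := by
  have hb : 0 ≤ b := (abs_nonneg _).trans (h 0 (by simpa using hR.le))
  set c : ℝ := 2 * n + 12
  have hc : 2 ≤ c := by
    have : (0 : ℝ) ≤ n := n.cast_nonneg
    simp only [c]
    linarith
  have hmax : peval (bernsteinPoly p R i) x ≤ c * R ^ 2 * b ^ 2 := by
    have := le_add_of_neg_le_hasLap (U := ball (0 : En n) R) (m := c * R ^ 2 * b ^ 2) isOpen_ball
      ball_subset_closedBall le_rfl (continuous_peval (bernsteinPoly p R i)).continuousOn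
      (fun y hy => ⟨_, neg_zero.trans_le (peval_plap_bernsteinPoly_nonneg hp i
        (mem_ball_zero_iff.1 hy).le), hasLap_peval _ y⟩)
      (fun y hy => ?_) x (by rw [mem_ball_zero_iff]; linarith)
    · simpa using this
    · have hyR : ‖y‖ = R := by simpa [frontier_ball _ hR.ne'] using hy
      have : peval p y ^ 2 ≤ b ^ 2 := sq_le_sq' (abs_le.1 (h y hyR.le)).1 (abs_le.1 (h y hyR.le)).2
      simp only [bernsteinPoly, peval_add, peval_mul, peval_pow, peval_ballCutoff, hyR, peval_C]
      simpa using mul_le_mul_of_nonneg_left this (by positivity)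
  simp only [bernsteinPoly, peval_add, peval_mul, peval_pow, peval_ballCutoff, peval_C] at hmax
  have hcutoff : 3 / 4 * R ^ 2 ≤ R ^ 2 - ‖x‖ ^ 2 := by nlinarith [norm_nonneg x]
  have hsq : (3 / 4 * R ^ 2 * peval (pderiv i p) x) ^ 2 ≤ c * R ^ 2 * b ^ 2 :=
    calc (3 / 4 * R ^ 2 * peval (pderiv i p) x) ^ 2
        ≤ ((R ^ 2 - ‖x‖ ^ 2) * peval (pderiv i p) x) ^ 2 := by
          rw [mul_pow, mul_pow (R ^ 2 - _)]
          gcongr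
      _ ≤ c * R ^ 2 * b ^ 2 := by
          have : 0 ≤ c * R ^ 2 * peval p x ^ 2 := by positivity
          linarith
  refine abs_le_of_sq_le_sq ?_ (by positivity)
  rw [div_pow, le_div_iff₀ (by positivity)]
  refine le_of_mul_le_mul_left ?_ (by positivity : 0 < 9 / 16 * R ^ 2)
  calc 9 / 16 * R ^ 2 * (peval (pderiv i p) x ^ 2 * R ^ 2)
      = (3 / 4 * R ^ 2 * peval (pderiv i p) x) ^ 2 := by ring
    _ ≤ c * (R ^ 2 * b ^ 2) := by linarith
    _ ≤ 9 / 16 * c ^ 2 * (R ^ 2 * b ^ 2) :=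
        mul_le_mul_of_nonneg_right (by nlinarith [hc]) (by positivity)
    _ = 9 / 16 * R ^ 2 * (c * b) ^ 2 := by ring

theorem exists_abs_coeff_le_of_plap_eq_zero (n : ℕ) [NeZero n] (m : ℕ) :
    ∃ C : ℝ, 0 < C ∧ ∀ p : RealPoly n, plap p = 0 → ∀ R b : ℝ, 0 < R →
      (∀ x : En n, ‖x‖ ≤ R → |peval p x| ≤ b) → ∀ d : Fin n →₀ ℕ, mdeg d = m →
      |coeff d p| ≤ C * b / R ^ m := by
  induction m with
  | zero =>
    refine ⟨1, one_pos, fun p _ R b hR h d hd => ?_⟩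
    rw [(Finsupp.degree_eq_zero_iff d).1 hd, coeff_zero_eq_peval_zero]
    simpa using h 0 (by simpa using hR.le)
  | succ m ih =>
    obtain ⟨C, hC, ih⟩ := ih
    refine ⟨C * (2 * n + 12) * 2 ^ m, by positivity, fun p hp R b hR h d hd => ?_⟩
    obtain ⟨e, i, rfl⟩ := exists_eq_add_single_of_mdeg_pos (m.succ_pos.trans_eq hd.symm)
    have he : mdeg e = m := by simpa [mdeg_add, mdeg_single] using hd
    have hpderiv := ih (pderiv i p) (by rw [plap_pderiv, hp, map_zero]) (R / 2) _ (by positivity)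
      (fun x hx => abs_peval_pderiv_le_of_plap_eq_zero hp hR h i hx) e he
    rw [coeff_pderiv, abs_mul, abs_of_nonneg (by positivity : (0 : ℝ) ≤ (e i : ℝ) + 1)] at hpderiv
    calc |coeff (e + Finsupp.single i 1) p|
        ≤ |coeff (e + Finsupp.single i 1) p| * ((e i : ℝ) + 1) :=
          le_mul_of_one_le_right (abs_nonneg _) (by simp)
      _ ≤ C * ((2 * n + 12) * b / R) / (R / 2) ^ m := hpderiv
      _ = C * (2 * n + 12) * 2 ^ m * b / R ^ (m + 1) := by
          rw [div_pow, pow_succ]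
          field_simp

theorem exists_abs_peval_sub_truncDegree_le (n : ℕ) [NeZero n] (m : ℕ) :
    ∃ C : ℝ, 0 < C ∧ ∀ p : RealPoly n, plap p = 0 → ∀ R b : ℝ, 0 < R →
      (∀ x : En n, ‖x‖ ≤ R → |peval p x| ≤ b) → ∀ x : En n, ‖x‖ ≤ R / 2 ^ m →
      |peval (p - truncDegree m p) x| ≤ C * b * (‖x‖ / R) ^ m := by
  induction m with
  | zero =>
    exact ⟨1, one_pos, fun p _ R b _ h x hx => by
      simpa [truncDegree] using h x (by simpa using hx)⟩
  | succ m ih =>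
    obtain ⟨C, hC, ih⟩ := ih
    have hn : (0 : ℝ) < n := by exact_mod_cast NeZero.pos n
    refine ⟨n * C * (2 * n + 12) * 2 ^ m, by positivity, fun p hp R b hR h x hx => ?_⟩
    have hb : 0 ≤ b := (abs_nonneg _).trans (h 0 (by simpa using hR.le))
    have hzero : peval (p - truncDegree (m + 1) p) 0 = 0 := by
      simp [← coeff_zero_eq_peval_zero, coeff_truncDegree, mdeg_eq_degree]
    have hmvt := abs_peval_sub_peval_zero_le (p - truncDegree (m + 1) p) x
      (B := C * ((2 * n + 12) * b / R) * (‖x‖ / (R / 2)) ^ m) fun i t ht => ?_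
    · rw [hzero, sub_zero] at hmvt
      refine hmvt.trans_eq ?_
      simp only [pow_succ, div_pow]
      field_simp
    · have htx : ‖t • x‖ ≤ ‖x‖ := by
        rw [norm_smul, Real.norm_of_nonneg ht.1]
        exact mul_le_of_le_one_left (norm_nonneg _) ht.2
      have hxR : ‖x‖ ≤ R / 2 / 2 ^ m := hx.trans_eq (by rw [pow_succ]; field_simp)
      rw [map_sub, pderiv_truncDegree]
      refine (ih (pderiv i p) (by rw [plap_pderiv, hp, map_zero]) (R / 2) _ (by positivity)
        (fun x hx => abs_peval_pderiv_le_of_plap_eq_zero hp hR h i hx) (t • x)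
        (htx.trans hxR)).trans ?_
      gcongr

end InteriorEstimates

theorem peval_eq_sum_of_support_subset (p : RealPoly n) (x : En n) {s : Finset (Fin n →₀ ℕ)}
    (h : p.support ⊆ s) : peval p x = ∑ d ∈ s, coeff d p * ∏ i, x i ^ d i := by
  rw [peval, eval_eq']
  exact Finset.sum_subset h fun d _ hd => by rw [notMem_support_iff.1 hd, zero_mul]

theorem eq_zero_of_peval_eq_zero_of_isOpen {p : RealPoly n} {U : Set (En n)} (hU : IsOpen U)
    (hne : U.Nonempty) (h : ∀ y ∈ U, peval p y = 0) : p = 0 := by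
  obtain ⟨x, hx⟩ := hne
  have hU' : IsOpen (WithLp.toLp 2 ⁻¹' U : Set (Fin n → ℝ)) :=
    hU.preimage (PiLp.continuous_toLp 2 _)
  obtain ⟨ε, hε, hball⟩ := Metric.isOpen_iff.1 hU' (WithLp.ofLp x) (by simpa using hx)
  refine MvPolynomial.funext_set (fun i => Metric.ball (x i) ε) (fun i => ?_) fun y hy => ?_
  · rw [Real.ball_eq_Ioo]
    exact Set.Ioo_infinite (by linarith)
  · have hy' : y ∈ Metric.ball (WithLp.ofLp x) ε := by rwa [ball_pi _ hε]
    simpa [peval] using h (WithLp.toLp 2 y) (hball hy')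

theorem totalDegree_le_iff_coeff_eq_zero {p : RealPoly n} {m : ℕ} :
    p.totalDegree ≤ m ↔ ∀ d, m < mdeg d → coeff d p = 0 := by
  refine ⟨fun h d hd => coeff_eq_zero_of_totalDegree_lt (h.trans_lt hd), fun h => ?_⟩
  refine Finset.sup_le fun d hd => ?_
  by_contra hlt
  exact mem_support_iff.1 hd (h d (not_le.1 hlt))

theorem coeff_plap (p : RealPoly n) (d : Fin n →₀ ℕ) : coeff d (plap p) =
    ∑ i, coeff (d + Finsupp.single i 2) p * (((d i : ℝ) + 2) * ((d i : ℝ) + 1)) := by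
  simp only [plap, coeff_sum]
  refine Finset.sum_congr rfl fun i _ => ?_
  rw [coeff_pderiv, coeff_pderiv, add_assoc, ← Finsupp.single_add]
  simp only [Finsupp.add_apply, Finsupp.single_eq_same, Nat.cast_add, Nat.cast_one]
  ring

theorem totalDegree_plap_le {p : RealPoly n} {m : ℕ} (hp : p.totalDegree ≤ m + 2) :
    (plap p).totalDegree ≤ m := by
  refine totalDegree_le_iff_coeff_eq_zero.2 fun d hd => ?_
  rw [coeff_plap]
  refine Finset.sum_eq_zero fun i _ => ?_
  rw [totalDegree_le_iff_coeff_eq_zero.1 hp _ (by rw [mdeg_add, mdeg_single]; omega), zero_mul]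

theorem totalDegree_ballCutoff_le (R : ℝ) : (ballCutoff n R).totalDegree ≤ 2 := by
  refine (totalDegree_sub _ _).trans (max_le ((totalDegree_C _).trans_le zero_le_two) ?_)
  exact totalDegree_finsetSum_le fun i _ => by simp [totalDegree_X_pow]

/-! ### The Dirichlet problem on balls -/

section DirichletBall

variable [NeZero n] {R : ℝ}

theorem eq_zero_of_plap_ballCutoff_mul_eq_zero (hR : 0 < R) {q : RealPoly n}
    (hq : plap (ballCutoff n R * q) = 0) : q = 0 := by
  refine eq_zero_of_peval_eq_zero_of_isOpen (U := ball 0 R) isOpen_ball (nonempty_ball.2 hR)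
    fun y hy => ?_
  have hzero : |peval (ballCutoff n R * q) y| ≤ 0 + 0 * R ^ 2 := by
    refine abs_le_add_of_abs_hasLap_le isOpen_ball ball_subset_closedBall le_rfl
      (continuous_peval _).continuousOn (fun x _ => ⟨_, ?_, hasLap_peval _ x⟩)
      (fun x hx => ?_) y hy
    · simp [hq]
    · have hxR : ‖x‖ = R := by simpa [frontier_ball _ hR.ne'] using hx
      simp [peval_ballCutoff, hxR]
  have hyR : ‖y‖ < R := mem_ball_zero_iff.1 hy
  have hcutoff : R ^ 2 - ‖y‖ ^ 2 ≠ 0 := by nlinarith [norm_nonneg y]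
  have hmul : (R ^ 2 - ‖y‖ ^ 2) * peval q y = 0 := by
    rw [← peval_ballCutoff, ← peval_mul, ← abs_nonpos_iff]
    linarith
  exact (mul_eq_zero.1 hmul).resolve_left hcutoff

/-- The map `q ↦ Δ((R² - |x|²) q)` on polynomials of degree at most `D`. It is injective by the
maximum principle, hence bijective, which solves the Dirichlet problem for polynomial data. -/
def lapBallCutoffMul (n : ℕ) (R : ℝ) (D : ℕ) :
    restrictTotalDegree (Fin n) ℝ D →ₗ[ℝ] restrictTotalDegree (Fin n) ℝ D where
  toFun q := ⟨plap (ballCutoff n R * q.1), by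
    have hq := (mem_restrictTotalDegree _ _ _).1 q.2
    have hcutoff := totalDegree_ballCutoff_le (n := n) R
    exact (mem_restrictTotalDegree _ _ _).2
      (totalDegree_plap_le ((totalDegree_mul _ _).trans (by omega)))⟩
  map_add' p q := by
    ext1
    simp [mul_add]
  map_smul' c q := by
    ext1
    simp only [SetLike.val_smul, RingHom.id_apply, smul_eq_C_mul, ← plap_C_mul]
    congr 1
    ring

theorem exists_harmonic_eqOn_sphere (p : RealPoly n) (hR : 0 < R) :
    ∃ H : RealPoly n, plap H = 0 ∧ ∀ x : En n, ‖x‖ = R → peval H x = peval p x := by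
  have hinj : Function.Injective (lapBallCutoffMul n R p.totalDegree) := by
    refine (injective_iff_map_eq_zero _).2 fun q hq => Subtype.ext ?_
    exact eq_zero_of_plap_ballCutoff_mul_eq_zero hR (congrArg Subtype.val hq)
  have hdeg : plap p ∈ restrictTotalDegree (Fin n) ℝ p.totalDegree :=
    (mem_restrictTotalDegree _ _ _).2 (totalDegree_plap_le (Nat.le_add_right _ _))
  obtain ⟨q, hq⟩ := LinearMap.surjective_of_injective hinj ⟨plap p, hdeg⟩
  have hq' : plap (ballCutoff n R * q.1) = plap p := congrArg Subtype.val hq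
  refine ⟨p - ballCutoff n R * q.1, by rw [plap_sub, hq', sub_self], fun x hx => ?_⟩
  simp [peval_ballCutoff, hx]

end DirichletBall

theorem exists_peval_near_of_continuousOn_sphere {φ : En n → ℝ} {R ε : ℝ}
    (hφ : ContinuousOn φ (sphere (0 : En n) R)) (hε : 0 < ε) :
    ∃ p : RealPoly n, ∀ x : En n, ‖x‖ = R → |peval p x - φ x| ≤ ε := by
  let F : RealPoly n →ₐ[ℝ] C(sphere (0 : En n) R, ℝ) :=
    aeval fun i => ⟨fun x => x.1 i, by fun_prop⟩
  have hF (p : RealPoly n) (x : sphere (0 : En n) R) : F p x = peval p x.1 := by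
    induction p using MvPolynomial.induction_on with
    | C a => simp [F]
    | add p q hp hq => simp [hp, hq]
    | mul_X p i hp => simp [hp, F]
  have hsep : F.range.SeparatesPoints := by
    intro x y hxy
    obtain ⟨i, hi⟩ : ∃ i, x.1 i ≠ y.1 i := by
      by_contra! hc
      exact hxy (Subtype.ext (by ext i; exact hc i))
    exact ⟨_, ⟨F (X i), ⟨X i, rfl⟩, rfl⟩, by simpa [hF] using hi⟩
  obtain ⟨⟨_, p, rfl⟩, hp⟩ :=
    ContinuousMap.exists_mem_subalgebra_near_continuous_of_separatesPoints F.range hsep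
      (fun x => φ x.1) (continuousOn_iff_continuous_domRestrict.1 hφ) ε hε
  refine ⟨p, fun x hx => ?_⟩
  rw [← hF p ⟨x, by simpa using hx⟩]
  exact (hp _).le

/-! ### Reflection in the hyperplane `{x_n = 0}` -/

section Reflection

variable [NeZero n]

/-- Reflection of `ℝⁿ` in the hyperplane `{x_n = 0}`. -/
def reflectLast (x : En n) : En n :=
  WithLp.toLp 2 fun i => if i = lastIdx n then -x i else x i

theorem reflectLast_apply (x : En n) (i : Fin n) :
    reflectLast x i = if i = lastIdx n then -x i else x i := rfl

@[simp] theorem xn_reflectLast (x : En n) : xn (reflectLast x) = -xn x := by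
  simp [xn, reflectLast_apply]

@[simp] theorem norm_reflectLast (x : En n) : ‖reflectLast x‖ = ‖x‖ := by
  refine (sq_eq_sq₀ (norm_nonneg _) (norm_nonneg _)).1 ?_
  simp only [EuclideanSpace.real_norm_sq_eq, reflectLast_apply]
  refine Finset.sum_congr rfl fun i _ => ?_
  split_ifs <;> ring

@[simp] theorem reflectLast_reflectLast (x : En n) : reflectLast (reflectLast x) = x := by
  ext i
  simp only [reflectLast_apply]
  split_ifs <;> ring

theorem continuous_reflectLast : Continuous (reflectLast : En n → En n) := by
  refine (PiLp.continuous_toLp 2 _).comp (continuous_pi fun i => ?_)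
  split_ifs <;> fun_prop

theorem prod_reflectLast_pow (x : En n) (d : Fin n →₀ ℕ) :
    ∏ i, reflectLast x i ^ d i = (-1) ^ d (lastIdx n) * ∏ i, x i ^ d i := by
  have hfactor (i : Fin n) :
      reflectLast x i ^ d i = (if i = lastIdx n then (-1) ^ d i else 1) * x i ^ d i := by
    rw [reflectLast_apply]
    split_ifs
    · rw [neg_pow]
    · rw [one_mul]
  simp_rw [hfactor, Finset.prod_mul_distrib, Finset.prod_ite_eq', Finset.mem_univ, if_true]

/-- `p` is odd in the last variable: only odd powers of `x_n` occur in it. -/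
def IsOddLast (p : RealPoly n) : Prop :=
  ∀ d : Fin n →₀ ℕ, Even (d (lastIdx n)) → coeff d p = 0

/-- The part of `p` that is odd in the last variable. -/
def oddPartLast (p : RealPoly n) : RealPoly n :=
  ∑ d ∈ p.support with Odd (d (lastIdx n)), monomial d (coeff d p)

variable {p q : RealPoly n}

theorem coeff_oddPartLast (p : RealPoly n) (d : Fin n →₀ ℕ) :
    coeff d (oddPartLast p) = if Odd (d (lastIdx n)) then coeff d p else 0 := by
  classical
  simp only [oddPartLast, coeff_sum, coeff_monomial]
  rw [Finset.sum_ite_eq']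
  by_cases hodd : Odd (d (lastIdx n)) <;> by_cases hd : coeff d p = 0 <;> simp [hodd, hd]

theorem peval_oddPartLast (p : RealPoly n) (x : En n) :
    peval (oddPartLast p) x = (peval p x - peval p (reflectLast x)) / 2 := by
  have hsupport : (oddPartLast p).support ⊆ p.support := fun d hd =>
    mem_support_iff.2 fun hd' => mem_support_iff.1 hd (by simp [coeff_oddPartLast, hd'])
  simp only [peval_eq_sum_of_support_subset _ _ hsupport,
    peval_eq_sum_of_support_subset p _ subset_rfl, ← Finset.sum_sub_distrib, Finset.sum_div]
  refine Finset.sum_congr rfl fun d _ => ?_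
  rw [prod_reflectLast_pow, coeff_oddPartLast]
  split_ifs with hodd
  · rw [hodd.neg_one_pow]
    ring
  · rw [(Nat.not_odd_iff_even.1 hodd).neg_one_pow]
    ring

theorem isOddLast_oddPartLast (p : RealPoly n) : IsOddLast (oddPartLast p) := fun d hd => by
  rw [coeff_oddPartLast, if_neg (Nat.not_odd_iff_even.2 hd)]

theorem IsOddLast.oddPartLast_eq (hp : IsOddLast p) : oddPartLast p = p := by
  ext d
  rw [coeff_oddPartLast]
  split_ifs with hodd
  · rfl
  · exact (hp d (Nat.not_odd_iff_even.1 hodd)).symm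

theorem IsOddLast.peval_reflectLast (hp : IsOddLast p) (x : En n) :
    peval p (reflectLast x) = -peval p x := by
  have := peval_oddPartLast p x
  rw [hp.oddPartLast_eq] at this
  linarith

theorem IsOddLast.sub (hp : IsOddLast p) (hq : IsOddLast q) : IsOddLast (p - q) := fun d hd => by
  rw [coeff_sub, hp d hd, hq d hd, sub_zero]

theorem plap_oddPartLast (hp : plap p = 0) : plap (oddPartLast p) = 0 := by
  have hparity (d : Fin n →₀ ℕ) (i : Fin n) :
      Odd ((d + Finsupp.single i 2 : Fin n →₀ ℕ) (lastIdx n)) ↔ Odd (d (lastIdx n)) := by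
    rw [Finsupp.add_apply, Finsupp.single_apply]
    split_ifs
    · simp [Nat.odd_add]
    · rw [add_zero]
  ext d
  simp only [coeff_plap, coeff_oddPartLast, hparity]
  split_ifs with hodd
  · rw [← coeff_plap, hp]
  · simp

theorem exists_harmonic_isOddLast_near_sphere {φ : En n → ℝ} {R ε : ℝ} (hR : 0 < R)
    (hφ : ContinuousOn φ (sphere (0 : En n) R)) (hodd : ∀ x, φ (reflectLast x) = -φ x)
    (hε : 0 < ε) :
    ∃ H : RealPoly n, plap H = 0 ∧ IsOddLast H ∧ ∀ x : En n, ‖x‖ = R → |peval H x - φ x| ≤ ε := by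
  obtain ⟨p, hp⟩ := exists_peval_near_of_continuousOn_sphere hφ hε
  obtain ⟨H, hH, hHp⟩ := exists_harmonic_eqOn_sphere p hR
  refine ⟨oddPartLast H, plap_oddPartLast hH, isOddLast_oddPartLast H, fun x hx => ?_⟩
  have hx' : ‖reflectLast x‖ = R := by simpa using hx
  have hpx := abs_le.1 (hp x hx)
  have hpx' := abs_le.1 (hp (reflectLast x) hx')
  rw [hodd] at hpx'
  rw [peval_oddPartLast, hHp x hx, hHp _ hx', abs_le]
  constructor <;> linarith

end Reflection

/-! ### Barriers in almost flat domains -/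

section xn

variable [NeZero n]

theorem continuous_xn : Continuous (xn : En n → ℝ) := by
  unfold xn
  fun_prop

theorem abs_xn_le_norm (x : En n) : |xn x| ≤ ‖x‖ := PiLp.norm_apply_le x _

theorem abs_xn_sub_xn_le (x z : En n) : |xn x - xn z| ≤ ‖x - z‖ := by
  simpa [xn] using abs_xn_le_norm (x - z)

theorem hasLap_quadratic_xn (a b c : ℝ) (x : En n) :
    HasLap (fun y : En n => a * xn y ^ 2 + b * xn y + c) x (2 * a) := by
  let Q : RealPoly n := C a * X (lastIdx n) ^ 2 + C b * X (lastIdx n) + C c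
  have hpderiv (i : Fin n) : pderiv i Q =
      if i = lastIdx n then C (2 * a) * X (lastIdx n) + C b else 0 := by
    split_ifs with hi <;>
      simp [Q, pderiv_X, hi, ← map_ofNat (C : ℝ →+* RealPoly n), eq_comm]
    ring
  have hlap : peval (plap Q) x = 2 * a := by
    simp [plap, hpderiv, apply_ite]
  have heval : (fun y : En n => a * xn y ^ 2 + b * xn y + c) = peval Q := by
    funext y
    simp [Q, xn]
  exact heval ▸ hlap ▸ hasLap_peval Q x

end xn

theorem mem_closure_inter_ball {Ω : Set (En n)} {x : En n} {R : ℝ} (hx : x ∈ closure Ω)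
    (hxR : ‖x‖ < R) : x ∈ closure (Ω ∩ ball 0 R) := by
  rw [inter_comm]
  exact isOpen_ball.inter_closure ⟨by simpa using hxR, hx⟩

/-- Data of an almost homogeneous Dirichlet problem in an almost flat domain: inside `B_R`, the
boundary of `Ω` lies in the slab `{|x_n| ≤ s}` with `Ω` above it, and `v` satisfies `|v| ≤ E` and
`R² |Δv| ≤ δ` in `Ω`, and `|v| ≤ δ` on `∂Ω`. -/
structure AlmostFlatProblem [NeZero n] (Ω : Set (En n)) (v : En n → ℝ) (R s E δ : ℝ) : Prop where
  isOpen : IsOpen Ω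
  radius_pos : 0 < R
  width_pos : 0 < s
  bound_pos : 0 < E
  error_nonneg : 0 ≤ δ
  neg_width_le_xn : ∀ x ∈ Ω, ‖x‖ < R → -s ≤ xn x
  mem_of_width_lt_xn : ∀ x, ‖x‖ < R → s < xn x → x ∈ Ω
  continuousOn : ContinuousOn v (closure Ω ∩ ball 0 R)
  abs_hasLap_le : ∀ x ∈ Ω, ‖x‖ < R → ∃ L, |L| ≤ δ / R ^ 2 ∧ HasLap v x L
  abs_le_of_mem_frontier : ∀ x ∈ frontier Ω, ‖x‖ < R → |v x| ≤ δ
  abs_le_bound : ∀ x ∈ Ω, ‖x‖ < R → |v x| ≤ E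

/-- A supersolution in the slab `{-s ≤ x_n}` near `z`, bounded below by a multiple of `R²` on
`∂B_{R/4}(z)` and of size `R (z_n + s)` at `z`. -/
def slabBarrier [NeZero n] (R s : ℝ) (z y : En n) : ℝ :=
  ‖y - z‖ ^ 2 - (xn y - xn z) ^ 2 + (n + 1) * R * (xn y + s) - n * (xn y + s) ^ 2

section slabBarrier

variable [NeZero n] {R s : ℝ} {y z : En n}

theorem hasLap_slabBarrier (R s : ℝ) (z y : En n) : HasLap (slabBarrier R s z) y (-2) := by
  have heq : slabBarrier R s z = fun y : En n => ‖y - z‖ ^ 2 +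
      ((-1 - n : ℝ) * xn y ^ 2 + (2 * xn z + (n + 1) * R - 2 * n * s) * xn y +
        (-xn z ^ 2 + (n + 1) * R * s - n * s ^ 2)) := by
    funext y
    simp only [slabBarrier]
    ring
  have hlap : (2 * n + 2 * (-1 - n) : ℝ) = -2 := by ring
  exact heq ▸ hlap ▸ (hasLap_norm_sub_sq z y).add (hasLap_quadratic_xn _ _ _ y)

theorem continuous_slabBarrier (R s : ℝ) (z : En n) : Continuous (slabBarrier R s z) := by
  have := continuous_xn (n := n)
  unfold slabBarrier
  fun_prop

theorem le_slabBarrier (hy : 0 ≤ xn y + s) (hyR : xn y + s ≤ R) :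
    ‖y - z‖ ^ 2 - (xn y - xn z) ^ 2 + R * (xn y + s) ≤ slabBarrier R s z y := by
  have : (n : ℝ) * ((xn y + s) * (xn y + s)) ≤ n * (R * (xn y + s)) := by gcongr
  simp only [slabBarrier]
  linarith

theorem slabBarrier_nonneg (hy : 0 ≤ xn y + s) (hyR : xn y + s ≤ R) :
    0 ≤ slabBarrier R s z y := by
  refine le_trans ?_ (le_slabBarrier hy hyR)
  have := sq_le_sq.2 ((abs_xn_sub_xn_le y z).trans (le_abs_self _))
  nlinarith

theorem sq_div_le_slabBarrier (hR : 0 < R) (hyz : ‖y - z‖ = R / 4) (hy : 0 ≤ xn y + s)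
    (hyR : xn y + s ≤ R) (hz : 0 ≤ xn z + s) (hzR : xn z + s ≤ R / 8) :
    R ^ 2 / 32 ≤ slabBarrier R s z y := by
  refine le_trans ?_ (le_slabBarrier hy hyR)
  rw [hyz]
  rcases le_or_gt (xn y + s) (R / 16) with hlow | hhigh
  · have : (xn y - xn z) ^ 2 ≤ (R / 8) ^ 2 := sq_le_sq' (by linarith) (by linarith)
    nlinarith
  · have := sq_le_sq.2 ((abs_xn_sub_xn_le y z).trans (le_abs_self _))
    rw [hyz] at this
    nlinarith

theorem slabBarrier_self_le : slabBarrier R s z z ≤ (n + 1) * R * (xn z + s) := by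
  have : 0 ≤ (n : ℝ) * (xn z + s) ^ 2 := by positivity
  simp [slabBarrier, this]

end slabBarrier

namespace AlmostFlatProblem

variable [NeZero n] {Ω : Set (En n)} {v : En n → ℝ} {R s E δ : ℝ} {x z : En n}

theorem neg_width_le_xn_of_mem_closure (h : AlmostFlatProblem Ω v R s E δ) (hx : x ∈ closure Ω)
    (hxR : ‖x‖ < R) : -s ≤ xn x := by
  have : closure (Ω ∩ ball 0 R) ⊆ {y | -s ≤ xn y} := closure_minimal
    (fun y hy => h.neg_width_le_xn y hy.1 (by simpa using hy.2))
    (isClosed_le continuous_const continuous_xn)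
  exact this (mem_closure_inter_ball hx hxR)

theorem abs_le_of_mem_closure (h : AlmostFlatProblem Ω v R s E δ) (hx : x ∈ closure Ω)
    (hxR : ‖x‖ < R) : |v x| ≤ E := by
  have hcont : ContinuousWithinAt v (Ω ∩ ball 0 R) x :=
    (h.continuousOn x ⟨hx, by simpa using hxR⟩).mono (inter_subset_inter_left _ subset_closure)
  have := hcont.mem_closure (t := {y : ℝ | |y| ≤ E}) (mem_closure_inter_ball hx hxR)
    fun y hy => h.abs_le_bound y hy.1 (by simpa using hy.2)
  rwa [(isClosed_le continuous_abs continuous_const).closure_eq] at this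

theorem neg (h : AlmostFlatProblem Ω v R s E δ) : AlmostFlatProblem Ω (fun x => -v x) R s E δ where
  __ := h
  continuousOn := h.continuousOn.neg
  abs_hasLap_le x hx hxR := by
    obtain ⟨L, hL, hLap⟩ := h.abs_hasLap_le x hx hxR
    exact ⟨-L, by rwa [abs_neg], hLap.neg⟩
  abs_le_of_mem_frontier x hx hxR := by simpa using h.abs_le_of_mem_frontier x hx hxR
  abs_le_bound x hx hxR := by simpa using h.abs_le_bound x hx hxR

theorem le_error_add_slabBarrier (h : AlmostFlatProblem Ω v R s E δ) (hz : z ∈ Ω)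
    (hzR : ‖z‖ < 3 / 4 * R) (hzs : xn z + s ≤ R / 8) {y : En n}
    (hy : y ∈ closure Ω) (hyz : ‖y - z‖ ≤ R / 4) (hy' : y ∈ Ω → ‖y - z‖ = R / 4) :
    v y ≤ δ + 32 * E / R ^ 2 * slabBarrier R s z y := by
  have hR := h.radius_pos
  have hcoeff : 0 < 32 * E / R ^ 2 := div_pos (mul_pos (by norm_num) h.bound_pos) (by positivity)
  have hyR : ‖y‖ < R := by linarith [norm_sub_norm_le y z]
  have hys := h.neg_width_le_xn_of_mem_closure hy hyR
  have hdist := abs_le.1 ((abs_xn_sub_xn_le y z).trans hyz)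
  by_cases hyΩ : y ∈ Ω
  · have hz0 := h.neg_width_le_xn z hz (by linarith)
    have hbarrier := sq_div_le_slabBarrier hR (hy' hyΩ) (by linarith) (by linarith)
      (by linarith) hzs
    calc v y ≤ E := (abs_le.1 (h.abs_le_bound y hyΩ hyR)).2
      _ = 0 + 32 * E / R ^ 2 * (R ^ 2 / 32) := by field_simp; ring
      _ ≤ δ + 32 * E / R ^ 2 * slabBarrier R s z y := by
          gcongr
          exact h.error_nonneg
  · have hyf : y ∈ frontier Ω := h.isOpen.frontier_eq ▸ ⟨hy, hyΩ⟩
    have hbarrier := slabBarrier_nonneg (z := z) (by linarith : 0 ≤ xn y + s)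
      (by linarith : xn y + s ≤ R)
    linarith [(abs_le.1 (h.abs_le_of_mem_frontier y hyf hyR)).2, mul_nonneg hcoeff.le hbarrier]

theorem le_linear_of_xn_add_width_le (h : AlmostFlatProblem Ω v R s E δ) (hz : z ∈ Ω)
    (hzR : ‖z‖ < 3 / 4 * R) (hzs : xn z + s ≤ R / 8) :
    v z ≤ 32 * (n + 1) * (E * (xn z + s) / R) + 2 * δ := by
  have hR := h.radius_pos
  have hcoeff : 0 < 32 * E / R ^ 2 := div_pos (mul_pos (by norm_num) h.bound_pos) (by positivity)
  have hball (y : En n) (hy : ‖y - z‖ ≤ R / 4) : ‖y‖ < R := by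
    linarith [norm_sub_norm_le y z]
  have hclosure : closure (Ω ∩ ball z (R / 4)) ⊆ closure Ω ∩ closedBall z (R / 4) :=
    closure_minimal (inter_subset_inter subset_closure ball_subset_closedBall)
      (isClosed_closure.inter isClosed_closedBall)
  have hmax := le_add_of_neg_le_hasLap (U := Ω ∩ ball z (R / 4)) (R := R) (δ := δ / R ^ 2)
    (w := fun y => v y - 32 * E / R ^ 2 * slabBarrier R s z y) (m := δ)
    (h.isOpen.inter isOpen_ball)
    (fun y hy => mem_closedBall_zero_iff.2 (hball y (mem_ball_iff_norm.1 hy.2).le).le)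
    (div_nonneg h.error_nonneg (sq_nonneg R)) ?cont ?lap ?boundary z
    ⟨hz, mem_ball_self (by positivity)⟩
  case cont =>
    refine (h.continuousOn.mono fun y hy => ?_).sub
      ((continuous_slabBarrier R s z).const_mul _).continuousOn
    exact ⟨(hclosure hy).1, by simpa using hball y (mem_closedBall_iff_norm.1 (hclosure hy).2)⟩
  case lap =>
    intro y hy
    obtain ⟨L, hL, hLap⟩ := h.abs_hasLap_le y hy.1 (hball y (mem_ball_iff_norm.1 hy.2).le)
    exact ⟨_, by linarith [(abs_le.1 hL).1], hLap.sub ((hasLap_slabBarrier R s z y).const_mul _)⟩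
  case boundary =>
    intro y hy
    rw [(h.isOpen.inter isOpen_ball).frontier_eq] at hy
    have hyz := mem_closedBall_iff_norm.1 (hclosure hy.1).2
    refine sub_le_iff_le_add.2 (h.le_error_add_slabBarrier hz hzR hzs (hclosure hy.1).1 hyz ?_)
    exact fun hyΩ => hyz.antisymm (not_lt.1 fun hlt => hy.2 ⟨hyΩ, mem_ball_iff_norm.2 hlt⟩)
  calc v z ≤ 32 * E / R ^ 2 * slabBarrier R s z z + δ + δ / R ^ 2 * R ^ 2 := by linarith
    _ ≤ 32 * E / R ^ 2 * ((n + 1) * R * (xn z + s)) + δ + δ / R ^ 2 * R ^ 2 := by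
        gcongr
        exact slabBarrier_self_le
    _ = 32 * (n + 1) * (E * (xn z + s) / R) + 2 * δ := by
        field_simp
        ring

theorem abs_le_linear (h : AlmostFlatProblem Ω v R s E δ) (hz : z ∈ closure Ω)
    (hzR : ‖z‖ < 3 / 4 * R) : |v z| ≤ 32 * (n + 1) * (E * (xn z + s) / R) + 2 * δ := by
  have hR := h.radius_pos
  have hE := h.bound_pos
  have hδ := h.error_nonneg
  have hzs : 0 ≤ xn z + s := by linarith [h.neg_width_le_xn_of_mem_closure hz (by linarith)]
  have hlinear : 0 ≤ E * (xn z + s) / R := by positivity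
  by_cases hzΩ : z ∈ Ω
  · rcases le_or_gt (xn z + s) (R / 8) with hnear | hfar
    · exact abs_le'.2 ⟨h.le_linear_of_xn_add_width_le hzΩ hzR hnear,
        h.neg.le_linear_of_xn_add_width_le hzΩ hzR hnear⟩
    · have hE' : E ≤ 8 * (E * (xn z + s) / R) := by
        rw [mul_div_assoc', le_div_iff₀ hR]
        nlinarith
      nlinarith [h.abs_le_of_mem_closure hz (by linarith), (n.cast_nonneg : (0 : ℝ) ≤ n)]
  · have hzf : z ∈ frontier Ω := h.isOpen.frontier_eq ▸ ⟨hz, hzΩ⟩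
    nlinarith [h.abs_le_of_mem_frontier z hzf (by linarith), (n.cast_nonneg : (0 : ℝ) ≤ n)]

end AlmostFlatProblem

/-! ### Harmonic approximation in almost flat domains -/

section IsOddLast

variable [NeZero n] {K : RealPoly n} {ρ a m : ℝ} {x : En n}

theorem IsOddLast.neg (hK : IsOddLast K) : IsOddLast (-K) := fun d hd => by
  rw [coeff_neg, hK d hd, neg_zero]

theorem IsOddLast.peval_eq_zero_of_xn_eq_zero (hK : IsOddLast K) (hx : xn x = 0) :
    peval K x = 0 := by
  have hfix : reflectLast x = x := by
    ext i
    rw [reflectLast_apply]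
    split_ifs with hi
    · subst hi
      change -xn x = xn x
      rw [hx, neg_zero]
    · rfl
  have := hK.peval_reflectLast x
  rw [hfix] at this
  linarith

theorem IsOddLast.peval_le_linear (hK : IsOddLast K) (hlap : plap K = 0) (hm : 0 ≤ m)
    (hsphere : ∀ y : En n, ‖y‖ = ρ → 0 ≤ xn y → peval K y ≤ a * xn y + m)
    (hx : ‖x‖ ≤ ρ) (hx0 : 0 ≤ xn x) : peval K x ≤ a * xn x + m := by
  rcases hx.eq_or_lt with heq | hlt
  · exact hsphere x heq hx0
  rcases hx0.eq_or_lt with heq | hpos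
  · rw [hK.peval_eq_zero_of_xn_eq_zero heq.symm, ← heq]
    linarith
  have hU : IsOpen (ball 0 ρ ∩ {y : En n | 0 < xn y}) :=
    isOpen_ball.inter (isOpen_lt continuous_const continuous_xn)
  have hclosure : closure (ball 0 ρ ∩ {y : En n | 0 < xn y}) ⊆ closedBall 0 ρ ∩ {y | 0 ≤ xn y} :=
    closure_minimal (inter_subset_inter ball_subset_closedBall
      (ofPred_subset_ofPred.2 fun _ => le_of_lt))
      (isClosed_closedBall.inter (isClosed_le continuous_const continuous_xn))
  have hmax := le_add_of_neg_le_hasLap (R := ρ) (δ := 0) (m := 0)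
    (w := fun y => peval K y - (0 * xn y ^ 2 + a * xn y + m)) hU
    (fun y hy => ball_subset_closedBall hy.1) le_rfl ?cont
    (fun y _ => ⟨_, by simp [hlap], (hasLap_peval K y).sub (hasLap_quadratic_xn 0 a m y)⟩)
    ?boundary x ⟨mem_ball_zero_iff.2 hlt, hpos⟩
  case cont =>
    have := continuous_xn (n := n)
    have := continuous_peval K
    fun_prop
  case boundary =>
    intro y hy
    rw [hU.frontier_eq] at hy
    obtain ⟨hyρ, hy0 : 0 ≤ xn y⟩ := hclosure hy.1
    have hyρ := mem_closedBall_zero_iff.1 hyρ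
    suffices peval K y ≤ a * xn y + m by linarith
    rcases hyρ.eq_or_lt with heq | hlt
    · exact hsphere y heq hy0
    · have hy0 : xn y = 0 := hy0.antisymm' (not_lt.1 fun h => hy.2 ⟨mem_ball_zero_iff.2 hlt, h⟩)
      rw [hK.peval_eq_zero_of_xn_eq_zero hy0, hy0]
      linarith
  linarith

theorem IsOddLast.abs_peval_le_linear (hK : IsOddLast K) (hlap : plap K = 0) (hm : 0 ≤ m)
    (hsphere : ∀ y : En n, ‖y‖ = ρ → 0 ≤ xn y → |peval K y| ≤ a * xn y + m)
    (hx : ‖x‖ ≤ ρ) : |peval K x| ≤ a * |xn x| + m := by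
  have hupper {y : En n} (hy : ‖y‖ ≤ ρ) (hy0 : 0 ≤ xn y) : |peval K y| ≤ a * xn y + m := by
    refine abs_le'.2 ⟨hK.peval_le_linear hlap hm
      (fun z hz hz0 => (abs_le'.1 (hsphere z hz hz0)).1) hy hy0, ?_⟩
    have hneg : plap (-K) = 0 := by simpa [hlap] using plap_sub 0 K
    rw [← peval_neg]
    refine hK.neg.peval_le_linear hneg hm (fun z hz hz0 => ?_) hy hy0
    rw [peval_neg]
    exact (abs_le'.1 (hsphere z hz hz0)).2
  rcases le_total 0 (xn x) with hx0 | hx0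
  · rw [abs_of_nonneg hx0]
    exact hupper hx hx0
  · have := hupper (y := reflectLast x) (by simpa using hx) (by simpa using hx0)
    rwa [hK.peval_reflectLast, abs_neg, xn_reflectLast, ← abs_of_nonpos hx0] at this

end IsOddLast

/-- The function `v` multiplied by a continuous cut-off in `x_n` that vanishes for `x_n ≤ 2s` and
equals `1` for `x_n ≥ 3s`. -/
def cutoffXn [NeZero n] (s : ℝ) (v : En n → ℝ) (x : En n) : ℝ :=
  max 0 (min 1 ((xn x - 2 * s) / s)) * v x

section cutoffXn

variable [NeZero n] {s : ℝ} {v : En n → ℝ} {x : En n}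

theorem cutoffXn_eq_zero (hs : 0 < s) (hx : xn x ≤ 2 * s) : cutoffXn s v x = 0 := by
  have : (xn x - 2 * s) / s ≤ 0 := div_nonpos_of_nonpos_of_nonneg (by linarith) hs.le
  rw [cutoffXn, max_eq_left ((min_le_right _ _).trans this), zero_mul]

theorem cutoffXn_eq_self (hs : 0 < s) (hx : 3 * s ≤ xn x) : cutoffXn s v x = v x := by
  have : 1 ≤ (xn x - 2 * s) / s := by
    rw [le_div_iff₀ hs]
    linarith
  rw [cutoffXn, min_eq_left this, max_eq_right zero_le_one, one_mul]

theorem abs_cutoffXn_le (s : ℝ) (v : En n → ℝ) (x : En n) : |cutoffXn s v x| ≤ |v x| := by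
  rw [cutoffXn, abs_mul, abs_of_nonneg (le_max_left _ _)]
  exact mul_le_of_le_one_left (abs_nonneg _) (max_le zero_le_one (min_le_left _ _))

end cutoffXn

namespace AlmostFlatProblem

variable [NeZero n] {Ω : Set (En n)} {v : En n → ℝ} {R s E δ : ℝ} {x : En n}

theorem continuousAt_cutoffXn (h : AlmostFlatProblem Ω v R s E δ) (hx : ‖x‖ < R) :
    ContinuousAt (cutoffXn s v) x := by
  have hs := h.width_pos
  have hcont := continuous_xn (n := n)
  rcases lt_or_ge (xn x) (2 * s) with hlow | hhigh
  · have heq : cutoffXn s v =ᶠ[𝓝 x] fun _ => 0 := by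
      filter_upwards [(isOpen_lt hcont continuous_const).mem_nhds hlow] with y hy
      exact cutoffXn_eq_zero hs (le_of_lt hy)
    exact continuousAt_const.congr heq.symm
  · have hxΩ := h.mem_of_width_lt_xn x hx (by linarith)
    refine ContinuousAt.mul (by fun_prop) (h.continuousOn.continuousAt ?_)
    exact inter_mem (mem_of_superset (h.isOpen.mem_nhds hxΩ) subset_closure)
      (isOpen_ball.mem_nhds (mem_ball_zero_iff.2 hx))

theorem abs_cutoffXn_le_linear (h : AlmostFlatProblem Ω v R s E δ) (hx : ‖x‖ < 3 / 4 * R)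
    (hx0 : 0 ≤ xn x) :
    |cutoffXn s v x| ≤ 32 * (n + 1) * (E * (xn x + s) / R) + 2 * δ := by
  have := h.radius_pos
  have := h.width_pos
  have := h.bound_pos
  have := h.error_nonneg
  rcases le_or_gt (xn x) (2 * s) with hlow | hhigh
  · rw [cutoffXn_eq_zero h.width_pos hlow, abs_zero]
    positivity
  · exact (abs_cutoffXn_le s v x).trans
      (h.abs_le_linear (subset_closure (h.mem_of_width_lt_xn x (by linarith) (by linarith))) hx)

theorem exists_harmonic_isOddLast (h : AlmostFlatProblem Ω v R s E δ) :
    ∃ H : RealPoly n, plap H = 0 ∧ IsOddLast H ∧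
      (∀ x : En n, ‖x‖ = R / 2 → 3 * s ≤ xn x → |v x - peval H x| ≤ E * s / R) ∧
      ∀ x : En n, ‖x‖ ≤ R / 2 →
        |peval H x| ≤ 32 * (n + 1) * (E * (|xn x| + s) / R) + 2 * δ + E * s / R := by
  have hR := h.radius_pos
  have hs := h.width_pos
  have hE := h.bound_pos
  have hδ := h.error_nonneg
  have hcont : ContinuousOn (fun x => cutoffXn s v x - cutoffXn s v (reflectLast x))
      (sphere 0 (R / 2)) := by
    refine fun x hx => ContinuousAt.continuousWithinAt ?_
    have hxR : ‖x‖ < R := by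
      rw [mem_sphere_zero_iff_norm.1 hx]
      linarith
    exact (h.continuousAt_cutoffXn hxR).sub (ContinuousAt.comp'
      (h.continuousAt_cutoffXn (by simpa using hxR)) continuous_reflectLast.continuousAt)
  obtain ⟨H, hH, hodd, hnear⟩ := exists_harmonic_isOddLast_near_sphere (by positivity) hcont
    (fun x => by simp) (by positivity : 0 < E * s / R)
  have hreflect {x : En n} (hx : 0 ≤ xn x) : cutoffXn s v (reflectLast x) = 0 :=
    cutoffXn_eq_zero hs (by rw [xn_reflectLast]; linarith)
  refine ⟨H, hH, hodd, fun x hx hxs => ?_, fun x hx => ?_⟩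
  · have := hnear x hx
    rwa [hreflect (by linarith), cutoffXn_eq_self hs hxs, sub_zero, abs_sub_comm] at this
  · have hlinear (t : ℝ) : 32 * (n + 1) * (E * (t + s) / R) + 2 * δ + E * s / R =
        32 * (n + 1) * E / R * t + (32 * (n + 1) * (E * s / R) + 2 * δ + E * s / R) := by ring
    rw [hlinear]
    refine hodd.abs_peval_le_linear hH (by positivity) (fun y hy hy0 => ?_) hx
    have hyH := hnear y hy
    rw [hreflect hy0, sub_zero] at hyH
    rw [← hlinear]
    linarith [h.abs_cutoffXn_le_linear (x := y) (by linarith) hy0,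
      abs_sub_abs_le_abs_sub (peval H y) (cutoffXn s v y)]

theorem abs_sub_peval_le_of_mem_frontier (h : AlmostFlatProblem Ω v R s E δ) {H : RealPoly n}
    (hsphere : ∀ x : En n, ‖x‖ = R / 2 → 3 * s ≤ xn x → |v x - peval H x| ≤ E * s / R)
    (hH : ∀ x : En n, ‖x‖ ≤ R / 2 →
      |peval H x| ≤ 32 * (n + 1) * (E * (|xn x| + s) / R) + 2 * δ + E * s / R)
    (hx : x ∈ frontier (Ω ∩ ball 0 (R / 2))) :
    |v x - peval H x| ≤ (256 * (n + 1) + 1) * (E * s / R) + 4 * δ := by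
  have hR := h.radius_pos
  have hs := h.width_pos
  have hE := h.bound_pos
  have hδ := h.error_nonneg
  rw [(h.isOpen.inter isOpen_ball).frontier_eq] at hx
  have hxΩ : x ∈ closure Ω := closure_mono inter_subset_left hx.1
  have hxR : ‖x‖ ≤ R / 2 := mem_closedBall_zero_iff.1
    (closure_minimal (inter_subset_right.trans ball_subset_closedBall) isClosed_closedBall hx.1)
  have hxs := h.neg_width_le_xn_of_mem_closure hxΩ (by linarith)
  rcases le_or_gt (xn x) (3 * s) with hlow | hhigh
  · have hv : E * (xn x + s) / R ≤ E * (4 * s) / R := by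
      gcongr
      linarith
    have hp : E * (|xn x| + s) / R ≤ E * (4 * s) / R := by
      gcongr
      linarith [abs_le.2 ⟨by linarith, hlow⟩]
    calc |v x - peval H x| ≤ |v x| + |peval H x| := abs_sub _ _
      _ ≤ (32 * (n + 1) * (E * (xn x + s) / R) + 2 * δ) +
          (32 * (n + 1) * (E * (|xn x| + s) / R) + 2 * δ + E * s / R) :=
        add_le_add (h.abs_le_linear hxΩ (by linarith)) (hH x hxR)
      _ ≤ (32 * (n + 1) * (E * (4 * s) / R) + 2 * δ) +
          (32 * (n + 1) * (E * (4 * s) / R) + 2 * δ + E * s / R) := by gcongr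
      _ = (256 * (n + 1) + 1) * (E * s / R) + 4 * δ := by ring
  · have hxΩ : x ∈ Ω := h.mem_of_width_lt_xn x (by linarith) (by linarith)
    have hxR : ‖x‖ = R / 2 :=
      hxR.antisymm (not_lt.1 fun hlt => hx.2 ⟨hxΩ, mem_ball_zero_iff.2 hlt⟩)
    have : 0 ≤ 256 * (n + 1) * (E * s / R) := by positivity
    linarith [hsphere x hxR hhigh.le]

theorem exists_harmonic_approx (h : AlmostFlatProblem Ω v R s E δ) :
    ∃ H : RealPoly n, plap H = 0 ∧ IsOddLast H ∧
      (∀ x ∈ Ω, ‖x‖ < R / 2 → |v x - peval H x| ≤ (256 * (n + 1) + 5) * (E * s / R + δ)) ∧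
      ∀ x : En n, ‖x‖ ≤ R / 2 →
        |peval H x| ≤ (256 * (n + 1) + 5) * (E * (|xn x| + s) / R + δ) := by
  have hR := h.radius_pos
  have hs := h.width_pos
  have hE := h.bound_pos
  have hδ := h.error_nonneg
  obtain ⟨H, hH, hodd, hsphere, hbound⟩ := h.exists_harmonic_isOddLast
  have hclosure : closure (Ω ∩ ball 0 (R / 2)) ⊆ closure Ω ∩ closedBall 0 (R / 2) :=
    closure_minimal (inter_subset_inter subset_closure ball_subset_closedBall)
      (isClosed_closure.inter isClosed_closedBall)
  have hn : 0 ≤ (n : ℝ) * δ := by positivity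
  refine ⟨H, hH, hodd, fun x hx hxR => ?_, fun x hx => (hbound x hx).trans ?_⟩
  · have hmax := abs_le_add_of_abs_hasLap_le (w := fun y => v y - peval H y)
      (h.isOpen.inter isOpen_ball) (fun y hy => ball_subset_closedBall hy.2)
      (by positivity : 0 ≤ δ / R ^ 2) ?cont ?lap
      (fun y hy => h.abs_sub_peval_le_of_mem_frontier hsphere hbound hy) x
      ⟨hx, mem_ball_zero_iff.2 hxR⟩
    case cont =>
      refine (h.continuousOn.mono fun y hy => ?_).sub (continuous_peval H).continuousOn
      exact ⟨(hclosure hy).1, closedBall_subset_ball (by linarith) (hclosure hy).2⟩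
    case lap =>
      intro y hy
      obtain ⟨L, hL, hlap⟩ := h.abs_hasLap_le y hy.1 (by linarith [mem_ball_zero_iff.1 hy.2])
      exact ⟨_, by simpa [hH] using hL, hlap.sub (hasLap_peval H y)⟩
    have hscale : δ / R ^ 2 * (R / 2) ^ 2 = δ / 4 := by field_simp; norm_num
    have : 0 ≤ E * s / R := by positivity
    nlinarith
  · have : E * s / R ≤ E * (|xn x| + s) / R := by
      gcongr
      linarith [abs_nonneg (xn x)]
    have : 0 ≤ (n : ℝ) * (E * (|xn x| + s) / R) := by positivity
    have : 0 < E * s / R := by positivity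
    nlinarith

end AlmostFlatProblem

/-! ### Limits of harmonic polynomials at dyadic scales -/

/-- The multi-indices of degree at most `m`. -/
def multiIndices (n m : ℕ) : Finset (Fin n →₀ ℕ) :=
  (Finsupp.finite_of_degree_le (σ := Fin n) m).toFinset

theorem mem_multiIndices {m : ℕ} {d : Fin n →₀ ℕ} : d ∈ multiIndices n m ↔ mdeg d ≤ m := by
  simp [multiIndices, mdeg_eq_degree]

theorem support_subset_multiIndices {p : RealPoly n} {m : ℕ} (hp : p.totalDegree ≤ m) :
    p.support ⊆ multiIndices n m := by
  intro d hd
  rw [mem_multiIndices]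
  by_contra! hlt
  exact mem_support_iff.1 hd (totalDegree_le_iff_coeff_eq_zero.1 hp d hlt)

theorem abs_prod_pow_le (x : En n) (d : Fin n →₀ ℕ) : |∏ i, x i ^ d i| ≤ ‖x‖ ^ mdeg d := by
  rw [Finset.abs_prod, mdeg_eq_degree, Finsupp.degree_eq_sum, ← Finset.prod_pow_eq_pow_sum]
  refine Finset.prod_le_prod (fun i _ => abs_nonneg _) fun i _ => ?_
  rw [abs_pow]
  exact pow_le_pow_left₀ (abs_nonneg _) (PiLp.norm_apply_le x i) _

theorem abs_peval_le_card_mul {p : RealPoly n} {m : ℕ} {x : En n} {b : ℝ}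
    (hp : p.totalDegree ≤ m) (h : ∀ d, mdeg d ≤ m → |coeff d p| * ‖x‖ ^ mdeg d ≤ b) :
    |peval p x| ≤ (multiIndices n m).card * b := by
  rw [peval_eq_sum_of_support_subset p x (support_subset_multiIndices hp), ← nsmul_eq_mul]
  refine (Finset.abs_sum_le_sum_abs _ _).trans (Finset.sum_le_card_nsmul _ _ _ fun d hd => ?_)
  rw [abs_mul]
  exact (mul_le_mul_of_nonneg_left (abs_prod_pow_le x d) (abs_nonneg _)).trans
    (h d (mem_multiIndices.1 hd))

theorem totalDegree_truncDegree_le (m : ℕ) (p : RealPoly n) :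
    (truncDegree (m + 1) p).totalDegree ≤ m := by
  refine totalDegree_le_iff_coeff_eq_zero.2 fun d hd => ?_
  rw [coeff_truncDegree, if_neg (by omega)]

theorem truncDegree_add (m : ℕ) (p q : RealPoly n) :
    truncDegree m (p + q) = truncDegree m p + truncDegree m q := by
  simp only [truncDegree, map_add, Finset.sum_add_distrib]

theorem truncDegree_sub (m : ℕ) (p q : RealPoly n) :
    truncDegree m (p - q) = truncDegree m p - truncDegree m q := by
  simp only [truncDegree, map_sub, Finset.sum_sub_distrib]

theorem abs_peval_truncDegree_sub_le {p a : RealPoly n} {m : ℕ} {x : En n} {r b : ℝ}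
    (ha : a.totalDegree ≤ m) (hr : 0 < r) (hx : ‖x‖ ≤ r)
    (h : ∀ d, mdeg d ≤ m → |coeff d p - coeff d a| ≤ b / r ^ mdeg d) :
    |peval (truncDegree (m + 1) p - a) x| ≤ (multiIndices n m).card * b := by
  refine abs_peval_le_card_mul ((totalDegree_sub _ _).trans
    (max_le (totalDegree_truncDegree_le m p) ha)) fun d hd => ?_
  rw [coeff_sub, coeff_truncDegree, if_pos (Nat.lt_succ_of_le hd)]
  calc |coeff d p - coeff d a| * ‖x‖ ^ mdeg d ≤ b / r ^ mdeg d * r ^ mdeg d := by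
        gcongr
        · exact (abs_nonneg _).trans (h d hd)
        · exact h d hd
    _ = b := by field_simp

/-- The polynomial with coefficients `a d` for `mdeg d ≤ m`, and no other terms. -/
def polyOfCoeffs (m : ℕ) (a : (Fin n →₀ ℕ) → ℝ) : RealPoly n :=
  ∑ d ∈ multiIndices n m, monomial d (a d)

theorem coeff_polyOfCoeffs (m : ℕ) (a : (Fin n →₀ ℕ) → ℝ) (d : Fin n →₀ ℕ) :
    coeff d (polyOfCoeffs m a) = if mdeg d ≤ m then a d else 0 := by
  classical
  simp only [polyOfCoeffs, coeff_sum, coeff_monomial]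
  rw [Finset.sum_ite_eq']
  simp [mem_multiIndices]

theorem totalDegree_polyOfCoeffs_le (m : ℕ) (a : (Fin n →₀ ℕ) → ℝ) :
    (polyOfCoeffs m a).totalDegree ≤ m := by
  refine totalDegree_le_iff_coeff_eq_zero.2 fun d hd => ?_
  rw [coeff_polyOfCoeffs, if_neg hd.not_ge]

theorem plap_eq_zero_of_tendsto_coeff {m : ℕ} {h : ℕ → RealPoly n} {a : RealPoly n}
    (hh : ∀ j, plap (h j) = 0) (ha : a.totalDegree ≤ m)
    (hlim : ∀ d, mdeg d ≤ m → Tendsto (fun j => coeff d (h j)) atTop (𝓝 (coeff d a))) :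
    plap a = 0 := by
  ext d
  by_cases hd : mdeg d + 2 ≤ m
  · have htendsto : Tendsto (fun j => coeff d (plap (h j))) atTop (𝓝 (coeff d (plap a))) := by
      simp only [coeff_plap]
      refine tendsto_finsetSum _ fun i _ => Tendsto.mul_const _ (hlim _ ?_)
      rwa [mdeg_add, mdeg_single]
    simp only [hh, coeff_zero] at htendsto
    exact tendsto_nhds_unique htendsto tendsto_const_nhds
  · rw [coeff_plap, coeff_zero]
    refine Finset.sum_eq_zero fun i _ => ?_
    rw [totalDegree_le_iff_coeff_eq_zero.1 ha _ (by rw [mdeg_add, mdeg_single]; omega), zero_mul]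

theorem exists_abs_coeff_le_of_mdeg_le (n : ℕ) [NeZero n] (m : ℕ) :
    ∃ C : ℝ, 0 < C ∧ ∀ p : RealPoly n, plap p = 0 → ∀ R b : ℝ, 0 < R →
      (∀ x : En n, ‖x‖ ≤ R → |peval p x| ≤ b) → ∀ d : Fin n →₀ ℕ, mdeg d ≤ m →
      |coeff d p| ≤ C * b / R ^ mdeg d := by
  choose C hC h using exists_abs_coeff_le_of_plap_eq_zero n
  refine ⟨∑ e ∈ Finset.range (m + 1), C e, Finset.sum_pos (fun e _ => hC e) ⟨0, by simp⟩,
    fun p hp R b hR hpb d hd => (h (mdeg d) p hp R b hR hpb d rfl).trans ?_⟩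
  have hb : 0 ≤ b := (abs_nonneg _).trans (hpb 0 (by simpa using hR.le))
  have : C (mdeg d) ≤ ∑ e ∈ Finset.range (m + 1), C e :=
    Finset.single_le_sum (fun e _ => (hC e).le) (Finset.mem_range_succ_iff.2 hd)
  gcongr

theorem rpow_sub_natCast_pow {t : ℝ} (ht : 0 < t) (γ : ℝ) (d j : ℕ) :
    (t ^ (γ - d)) ^ j = (t ^ j) ^ γ / (t ^ j) ^ d := by
  rw [Real.rpow_sub ht, Real.rpow_natCast, div_pow, ← pow_mul, ← pow_mul, mul_comm d j,
    ← Real.rpow_mul_natCast ht.le, ← Real.rpow_natCast_mul ht.le, mul_comm γ]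

theorem exists_le_and_add_le_mul {q c : ℝ} (hq : 1 < q) (hc : 0 ≤ c) :
    ∃ C : ℝ, c ≤ C ∧ C + c ≤ C * q := by
  have hq' : 0 < q - 1 := sub_pos.2 hq
  refine ⟨c * (q / (q - 1)), le_mul_of_one_le_right hc ((one_le_div hq').2 (by linarith)), ?_⟩
  have hmul : c * (q / (q - 1)) * (q - 1) = c * q := by field_simp
  linarith [le_mul_of_one_le_right hc hq.le]

theorem half_pow_div_le (j m : ℕ) : (1 / 2 : ℝ) ^ j / 8 / 2 ^ m ≤ (1 / 2) ^ j := by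
  rw [div_div]
  exact div_le_self (by positivity)
    (by linarith [one_le_pow₀ (by norm_num : (1 : ℝ) ≤ 2) (n := m)])

/-- Harmonic polynomials `h j`, bounded by `B` in size at scale `1`, whose consecutive differences
are of size `B r ^ γ` at scale `r = 2⁻ʲ`, as in Campanato's characterization of Hölder spaces. -/
structure IsCampanatoSeq (h : ℕ → RealPoly n) (γ B : ℝ) : Prop where
  plap_eq_zero : ∀ j, plap (h j) = 0
  abs_peval_zero_le : ∀ x : En n, ‖x‖ ≤ 1 / 8 → |peval (h 0) x| ≤ B
  abs_peval_sub_le : ∀ j (x : En n), ‖x‖ ≤ (1 / 2) ^ j / 8 →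
    |peval (h (j + 1) - h j) x| ≤ B * ((1 / 2 : ℝ) ^ j) ^ γ

namespace IsCampanatoSeq

variable {h : ℕ → RealPoly n} {γ B : ℝ}

theorem bound_nonneg (hh : IsCampanatoSeq h γ B) : 0 ≤ B :=
  (abs_nonneg _).trans (hh.abs_peval_zero_le 0 (by norm_num))

theorem plap_sub_eq_zero (hh : IsCampanatoSeq h γ B) (j : ℕ) : plap (h (j + 1) - h j) = 0 := by
  rw [plap_sub, hh.plap_eq_zero, hh.plap_eq_zero, sub_zero]

theorem exists_abs_coeff_le (n : ℕ) [NeZero n] (m : ℕ) :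
    ∃ C : ℝ, 0 < C ∧ ∀ (h : ℕ → RealPoly n) (γ B : ℝ), IsCampanatoSeq h γ B →
      ∀ d : Fin n →₀ ℕ, mdeg d ≤ m → |coeff d (h 0)| ≤ C * B ∧
        ∀ j, |coeff d (h (j + 1) - h j)| ≤ C * B * ((1 / 2 : ℝ) ^ (γ - mdeg d)) ^ j := by
  obtain ⟨C, hC, hcoeff⟩ := exists_abs_coeff_le_of_mdeg_le n m
  refine ⟨C * 8 ^ m, by positivity, fun h γ B hh d hd => ?_⟩
  have hB := hh.bound_nonneg
  have h8 : (8 : ℝ) ^ mdeg d ≤ 8 ^ m := pow_le_pow_right₀ (by norm_num) hd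
  refine ⟨?_, fun j => ?_⟩
  · calc |coeff d (h 0)| ≤ C * B / (1 / 8) ^ mdeg d :=
          hcoeff _ (hh.plap_eq_zero 0) _ _ (by norm_num) hh.abs_peval_zero_le d hd
      _ = C * 8 ^ mdeg d * B := by
          rw [div_pow, one_pow]
          field_simp
      _ ≤ C * 8 ^ m * B := by gcongr
  · calc |coeff d (h (j + 1) - h j)|
        ≤ C * (B * ((1 / 2) ^ j) ^ γ) / ((1 / 2) ^ j / 8) ^ mdeg d :=
          hcoeff _ (hh.plap_sub_eq_zero j) _ _ (by positivity) (hh.abs_peval_sub_le j) d hd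
      _ = C * 8 ^ mdeg d * B * ((1 / 2 : ℝ) ^ (γ - mdeg d)) ^ j := by
          rw [rpow_sub_natCast_pow (by norm_num), div_pow ((1 / 2 : ℝ) ^ j)]
          field_simp
      _ ≤ C * 8 ^ m * B * ((1 / 2 : ℝ) ^ (γ - mdeg d)) ^ j := by gcongr

theorem exists_tendsto_coeff (n : ℕ) [NeZero n] {m : ℕ} {γ : ℝ} (hγ : m < γ) :
    ∃ C : ℝ, 0 < C ∧ ∀ (h : ℕ → RealPoly n) (B : ℝ), IsCampanatoSeq h γ B →
      ∀ d : Fin n →₀ ℕ, mdeg d ≤ m → |coeff d (h 0)| ≤ C * B ∧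
        ∃ l : ℝ, Tendsto (fun j => coeff d (h j)) atTop (𝓝 l) ∧
          ∀ j, |coeff d (h j) - l| ≤
            C * B * ((1 / 2 : ℝ) ^ j) ^ γ / ((1 / 2 : ℝ) ^ j) ^ mdeg d := by
  obtain ⟨C, hC, hcoeff⟩ := exists_abs_coeff_le n m
  set ρ : ℝ := (1 / 2 : ℝ) ^ (γ - m)
  have hρ0 : 0 < ρ := by positivity
  have hρ1 : 0 < 1 - ρ :=
    sub_pos.2 (Real.rpow_lt_one (by norm_num) (by norm_num) (by linarith))
  refine ⟨C / (1 - ρ), by positivity, fun h B hh d hd => ?_⟩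
  have hB := hh.bound_nonneg
  obtain ⟨hzero, hstep⟩ := hcoeff h γ B hh d hd
  set r : ℝ := (1 / 2 : ℝ) ^ (γ - mdeg d) with hr
  have hrρ : r ≤ ρ :=
    Real.rpow_le_rpow_of_exponent_ge (by norm_num) (by norm_num) (by gcongr)
  have hr1 : r < 1 := by linarith
  have hdist (j : ℕ) : dist (coeff d (h j)) (coeff d (h (j + 1))) ≤ C * B * r ^ j := by
    rw [dist_comm, Real.dist_eq, ← coeff_sub]
    exact hstep j
  obtain ⟨l, hl⟩ := cauchySeq_tendsto_of_complete (cauchySeq_of_le_geometric _ _ hr1 hdist)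
  refine ⟨hzero.trans ?_, l, hl, fun j => ?_⟩
  · gcongr
    exact le_div_self hC.le hρ1 (by linarith)
  · have hlimit := dist_le_of_le_geometric_of_tendsto _ _ hr1 hdist hl j
    rw [Real.dist_eq] at hlimit
    calc |coeff d (h j) - l| ≤ C * B * r ^ j / (1 - r) := hlimit
      _ ≤ C * B * r ^ j / (1 - ρ) := by gcongr
      _ = C / (1 - ρ) * B * ((1 / 2 : ℝ) ^ j) ^ γ / ((1 / 2 : ℝ) ^ j) ^ mdeg d := by
          rw [hr, rpow_sub_natCast_pow (by norm_num)]
          ring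

theorem exists_abs_peval_sub_truncDegree_le (n : ℕ) [NeZero n] {m : ℕ} {γ : ℝ} (hγ : γ < m) :
    ∃ C : ℝ, 0 < C ∧ ∀ (h : ℕ → RealPoly n) (B : ℝ), IsCampanatoSeq h γ B →
      ∀ j (x : En n), ‖x‖ ≤ (1 / 2) ^ j / 8 / 2 ^ m → |peval (h j - truncDegree m (h j)) x| ≤
        C * B * (((1 / 2 : ℝ) ^ (γ - m)) ^ j * ‖x‖ ^ m) := by
  obtain ⟨C, hC, htail⟩ := _root_.exists_abs_peval_sub_truncDegree_le n m
  set q : ℝ := (1 / 2 : ℝ) ^ (γ - m)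
  have hq : 1 < q :=
    Real.one_lt_rpow_of_pos_of_lt_one_of_neg (by norm_num) (by norm_num) (by linarith)
  have hC8 : 0 < C * 8 ^ m := by positivity
  obtain ⟨C', hC'1, hC'q⟩ := exists_le_and_add_le_mul hq hC8.le
  have : 0 < q := one_pos.trans hq
  refine ⟨C', hC8.trans_le hC'1, fun h B hh j => ?_⟩
  have hB := hh.bound_nonneg
  induction j with
  | zero =>
    intro x hx
    calc |peval (h 0 - truncDegree m (h 0)) x| ≤ C * B * (‖x‖ / (1 / 8)) ^ m :=
          htail _ (hh.plap_eq_zero 0) _ _ (by norm_num) hh.abs_peval_zero_le x (by simpa using hx)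
      _ = C * 8 ^ m * B * (q ^ 0 * ‖x‖ ^ m) := by
          rw [div_pow, div_pow, one_pow]
          field_simp
      _ ≤ C' * B * (q ^ 0 * ‖x‖ ^ m) := by gcongr
  | succ j ih =>
    intro x hx
    have hx' : ‖x‖ ≤ (1 / 2) ^ j / 8 / 2 ^ m := by
      refine hx.trans ?_
      gcongr ?_ / 8 / 2 ^ m
      exact pow_le_pow_of_le_one (by norm_num) (by norm_num) j.le_succ
    have hsplit : h (j + 1) - truncDegree m (h (j + 1)) = (h j - truncDegree m (h j)) +
        ((h (j + 1) - h j) - truncDegree m (h (j + 1) - h j)) := by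
      rw [truncDegree_sub]
      ring
    calc |peval (h (j + 1) - truncDegree m (h (j + 1))) x|
        ≤ |peval (h j - truncDegree m (h j)) x| +
          |peval ((h (j + 1) - h j) - truncDegree m (h (j + 1) - h j)) x| := by
          rw [hsplit, peval_add]
          exact abs_add_le _ _
      _ ≤ C' * B * (q ^ j * ‖x‖ ^ m) +
          C * (B * ((1 / 2 : ℝ) ^ j) ^ γ) * (‖x‖ / ((1 / 2) ^ j / 8)) ^ m :=
          add_le_add (ih x hx') (htail _ (hh.plap_sub_eq_zero j) _ _ (by positivity)
            (hh.abs_peval_sub_le j) x hx')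
      _ = (C' + C * 8 ^ m) * B * (q ^ j * ‖x‖ ^ m) := by
          simp only [q, rpow_sub_natCast_pow (by norm_num : (0 : ℝ) < 1 / 2)]
          rw [div_pow ‖x‖, div_pow ((1 / 2 : ℝ) ^ j) 8]
          field_simp
      _ ≤ C' * q * B * (q ^ j * ‖x‖ ^ m) := by gcongr
      _ = C' * B * (q ^ (j + 1) * ‖x‖ ^ m) := by ring

theorem exists_abs_peval_sub_truncDegree_le_rpow (n : ℕ) [NeZero n] {m : ℕ} {γ : ℝ} (hγ : γ < m) :
    ∃ C : ℝ, 0 < C ∧ ∀ (h : ℕ → RealPoly n) (B : ℝ), IsCampanatoSeq h γ B →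
      ∀ j (x : En n), ‖x‖ ≤ (1 / 2) ^ j / 8 / 2 ^ m →
        |peval (h j - truncDegree m (h j)) x| ≤ C * B * ((1 / 2 : ℝ) ^ j) ^ γ := by
  obtain ⟨C, hC, htail⟩ := exists_abs_peval_sub_truncDegree_le n hγ
  refine ⟨C, hC, fun h B hh j x hx => (htail h B hh j x hx).trans ?_⟩
  have hB := hh.bound_nonneg
  have hxj : ‖x‖ ≤ (1 / 2) ^ j := hx.trans (half_pow_div_le j m)
  rw [rpow_sub_natCast_pow (by norm_num)]
  gcongr
  calc ((1 / 2 : ℝ) ^ j) ^ γ / ((1 / 2) ^ j) ^ m * ‖x‖ ^ m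
      ≤ ((1 / 2) ^ j) ^ γ / ((1 / 2) ^ j) ^ m * ((1 / 2) ^ j) ^ m := by gcongr
    _ = ((1 / 2) ^ j) ^ γ := div_mul_cancel₀ _ (by positivity)

theorem exists_limit (n : ℕ) [NeZero n] {m : ℕ} {γ : ℝ} (hmγ : m < γ) (hγm : γ < m + 1) :
    ∃ C : ℝ, 0 < C ∧ ∀ (h : ℕ → RealPoly n) (B : ℝ), IsCampanatoSeq h γ B →
      (∀ j, IsOddLast (h j)) → ∃ a : RealPoly n,
        plap a = 0 ∧ IsOddLast a ∧ a.totalDegree ≤ m ∧ (∀ d, |coeff d a| ≤ C * B) ∧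
        ∀ j (x : En n), ‖x‖ ≤ (1 / 2) ^ j / 8 / 2 ^ (m + 1) →
          |peval (h j) x - peval a x| ≤ C * B * ((1 / 2 : ℝ) ^ j) ^ γ := by
  obtain ⟨W, hW, hcoeff⟩ := exists_tendsto_coeff n hmγ
  obtain ⟨Q, hQ, htail⟩ := exists_abs_peval_sub_truncDegree_le_rpow (m := m + 1) n (γ := γ)
    (by push_cast; exact hγm)
  refine ⟨Q + (multiIndices n m).card * W + 2 * W, by positivity, fun h B hh hodd => ?_⟩
  have hB := hh.bound_nonneg
  choose! hzero l hl hrate using hcoeff h B hh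
  have hcoeff_a {d : Fin n →₀ ℕ} (hd : mdeg d ≤ m) : coeff d (polyOfCoeffs m l) = l d := by
    rw [coeff_polyOfCoeffs, if_pos hd]
  have hcoeff_a' {d : Fin n →₀ ℕ} (hd : ¬mdeg d ≤ m) : coeff d (polyOfCoeffs m l) = 0 := by
    rw [coeff_polyOfCoeffs, if_neg hd]
  refine ⟨polyOfCoeffs m l, ?_, fun d hd => ?_, totalDegree_polyOfCoeffs_le m l, fun d => ?_,
    fun j x hx => ?_⟩
  · exact plap_eq_zero_of_tendsto_coeff hh.plap_eq_zero (totalDegree_polyOfCoeffs_le m l)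
      fun d hd => by rw [hcoeff_a hd]; exact hl d hd
  · by_cases hdm : mdeg d ≤ m
    · rw [hcoeff_a hdm]
      exact tendsto_nhds_unique ((hl d hdm).congr fun j => hodd j d hd) tendsto_const_nhds
    · exact hcoeff_a' hdm
  · by_cases hdm : mdeg d ≤ m
    · have hrate0 := hrate d hdm 0
      simp only [pow_zero, Real.one_rpow, one_pow, div_one, mul_one] at hrate0
      have : 0 ≤ (Q + (multiIndices n m).card * W) * B := by positivity
      rw [hcoeff_a hdm]
      linarith [hzero d hdm, abs_sub_abs_le_abs_sub (l d) (coeff d (h 0)),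
        abs_sub_comm (l d) (coeff d (h 0))]
    · rw [hcoeff_a' hdm, abs_zero]
      positivity
  · set r : ℝ := (1 / 2 : ℝ) ^ j
    have hr0 : 0 < r := by positivity
    have hxr : ‖x‖ ≤ r := hx.trans (half_pow_div_le j (m + 1))
    have hhead : |peval (truncDegree (m + 1) (h j) - polyOfCoeffs m l) x| ≤
        (multiIndices n m).card * (W * B * r ^ γ) :=
      abs_peval_truncDegree_sub_le (totalDegree_polyOfCoeffs_le m l) hr0 hxr fun d hd => by
        rw [hcoeff_a hd]
        exact hrate d hd j
    have htail : |peval (h j - truncDegree (m + 1) (h j)) x| ≤ Q * B * r ^ γ := htail h B hh j x hx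
    rw [peval_sub] at hhead htail
    have : 0 ≤ W * B * r ^ γ := by positivity
    linarith [abs_sub_le (peval (h j) x) (peval (truncDegree (m + 1) (h j)) x)
      (peval (polyOfCoeffs m l) x)]

end IsCampanatoSeq

/-! ### Approximation by an odd harmonic polynomial at a boundary point -/

/-- `v` solves `Δv = O(|x| ^ (κ - 2))` in `Ω ∩ B₁` with boundary values `O(|x| ^ κ)`, all with
constant `A`, where `∂Ω` is tangent to `{x_n = 0}` at the origin up to `M |x| ^ (1 + α)` and `v` is
already known to be `O(|x| ^ β)`. -/
structure TangentProblem [NeZero n] (Ω : Set (En n)) (v : En n → ℝ) (A β κ α M : ℝ) : Prop where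
  isOpen : IsOpen Ω
  zero_notMem : (0 : En n) ∉ Ω
  bound_pos : 0 < A
  const_pos : 0 < M
  neg_le_xn : ∀ x ∈ Ω, ‖x‖ < 1 → -(M * ‖x‖ ^ (1 + α)) ≤ xn x
  mem_of_lt_xn : ∀ x : En n, ‖x‖ < 1 → M * ‖x‖ ^ (1 + α) < xn x → x ∈ Ω
  continuousOn : ContinuousOn v (closure Ω ∩ ball 0 1)
  abs_hasLap_le : ∀ x ∈ Ω, ‖x‖ < 1 → ∃ L, |L| ≤ A * ‖x‖ ^ (κ - 2) ∧ HasLap v x L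
  abs_le_of_mem_frontier : ∀ x ∈ frontier Ω, ‖x‖ < 1 → |v x| ≤ A * ‖x‖ ^ κ
  abs_le_rpow : ∀ x ∈ Ω, ‖x‖ < 1 → |v x| ≤ A * ‖x‖ ^ β

/-- `H` is an odd harmonic polynomial that approximates `v` in `Ω ∩ B_{r/2}` with error
`(M + 1) ε`, and is itself of size `ε` in slabs of width comparable to `s`. -/
structure IsOddHarmonicApprox [NeZero n] (Ω : Set (En n)) (v : En n → ℝ) (M r s ε : ℝ)
    (H : RealPoly n) : Prop where
  plap_eq_zero : plap H = 0
  isOddLast : IsOddLast H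
  abs_sub_peval_le : ∀ x ∈ Ω, ‖x‖ < r / 2 → |v x - peval H x| ≤ (M + 1) * ε
  abs_peval_le : ∀ (x : En n) (t : ℝ), 0 ≤ t → ‖x‖ ≤ r / 2 → |xn x| ≤ t * s →
    |peval H x| ≤ ((t + 1) * M + 1) * ε

theorem IsOddHarmonicApprox.abs_peval_sub_le [NeZero n] {Ω : Set (En n)} {v : En n → ℝ}
    {M r s s' ε ε' : ℝ} {H H' : RealPoly n} {x : En n} (hM : 0 < M) (hs : s ≤ 4 * s')
    (hε : 0 ≤ ε') (hεε' : ε' ≤ ε) (hΩ : ∀ x : En n, ‖x‖ < r → s < xn x → x ∈ Ω)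
    (hH : IsOddHarmonicApprox Ω v M r s ε H) (hH' : IsOddHarmonicApprox Ω v M (r / 2) s' ε' H')
    (hr : 0 < r) (hx : ‖x‖ ≤ r / 8) : |peval (H' - H) x| ≤ (7 * M + 2) * ε := by
  wlog hx0 : 0 ≤ xn x generalizing x
  · have := this (x := reflectLast x) (by simpa using hx) (by
      rw [xn_reflectLast]
      linarith)
    rwa [(hH'.isOddLast.sub hH.isOddLast).peval_reflectLast, abs_neg] at this
  rw [peval_sub]
  rcases lt_or_ge s (xn x) with hhigh | hlow
  · have hxΩ := hΩ x (by linarith) hhigh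
    have hHx := hH.abs_sub_peval_le x hxΩ (by linarith)
    have hHx' := hH'.abs_sub_peval_le x hxΩ (by linarith)
    rw [abs_sub_comm] at hHx'
    have := abs_sub_le (peval H' x) (v x) (peval H x)
    nlinarith
  · have hHx := hH.abs_peval_le x 1 zero_le_one (by linarith) (by
      rw [abs_of_nonneg hx0]
      linarith)
    have hHx' := hH'.abs_peval_le x 4 (by norm_num) (by linarith) (by
      rw [abs_of_nonneg hx0]
      linarith)
    have := abs_sub (peval H' x) (peval H x)
    nlinarith

theorem rpow_le_four_mul_half_rpow {r p : ℝ} (hr : 0 ≤ r) (hp : p ≤ 2) :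
    r ^ p ≤ 4 * (r / 2) ^ p := by
  have htwo : (2 : ℝ) ^ p ≤ 4 := by
    calc (2 : ℝ) ^ p ≤ 2 ^ (2 : ℝ) := Real.rpow_le_rpow_of_exponent_le (by norm_num) hp
      _ = 4 := by norm_num
  rw [Real.div_rpow hr (by norm_num), mul_div_assoc', le_div_iff₀ (by positivity), mul_comm]
  gcongr

theorem exists_half_pow_near {ρ : ℝ} {m : ℕ} (hρ : 0 < ρ) (hρm : ρ * 2 ^ (m + 4) ≤ 1) :
    ∃ j : ℕ, (1 / 2 : ℝ) ^ j ≤ 2 ^ (m + 5) * ρ ∧ ρ ≤ (1 / 2) ^ j / 8 / 2 ^ (m + 1) ∧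
      ρ < (1 / 2) ^ j / 2 := by
  obtain ⟨j, hj, hj'⟩ := exists_nat_pow_near_of_lt_one (y := (1 / 2 : ℝ)) (by positivity) hρm
    (by norm_num) (by norm_num)
  have hpow : (2 : ℝ) ^ (m + 4) = 8 * 2 ^ (m + 1) := by ring
  have hpow1 : (2 : ℝ) ≤ 2 ^ (m + 1) := le_self_pow₀ (by norm_num) (by simp)
  refine ⟨j, by ring_nf at hj ⊢; linarith, ?_, by nlinarith⟩
  rwa [div_div, le_div_iff₀ (by positivity), ← hpow]

namespace TangentProblem

variable [NeZero n] {Ω : Set (En n)} {v : En n → ℝ} {A β κ α M γ r : ℝ}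

theorem almostFlatProblem (h : TangentProblem Ω v A β κ α M) (hα : 0 ≤ α) (hβ : 0 ≤ β)
    (hκ : 2 ≤ κ) (hγ : γ ≤ κ) (hr : 0 < r) (hr1 : r ≤ 1) :
    AlmostFlatProblem Ω v r (M * r ^ (1 + α)) (A * r ^ β) (A * r ^ γ) := by
  have hA := h.bound_pos
  have hM := h.const_pos
  have hmono {x : En n} {e : ℝ} (he : 0 ≤ e) (hx : ‖x‖ < r) : ‖x‖ ^ e ≤ r ^ e :=
    Real.rpow_le_rpow (norm_nonneg _) hx.le he
  have hrγ : r ^ κ ≤ r ^ γ := Real.rpow_le_rpow_of_exponent_ge hr hr1 hγ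
  refine ⟨h.isOpen, hr, by positivity, by positivity, by positivity, fun x hx hxr => ?_,
    fun x hxr hx => ?_, h.continuousOn.mono (inter_subset_inter_right _ (ball_subset_ball hr1)),
    fun x hx hxr => ?_, fun x hx hxr => ?_, fun x hx hxr => ?_⟩
  · refine le_trans ?_ (h.neg_le_xn x hx (by linarith))
    gcongr
  · refine h.mem_of_lt_xn x (by linarith) (lt_of_le_of_lt ?_ hx)
    gcongr
  · obtain ⟨L, hL, hLap⟩ := h.abs_hasLap_le x hx (by linarith)
    refine ⟨L, hL.trans ?_, hLap⟩
    calc A * ‖x‖ ^ (κ - 2) ≤ A * r ^ (κ - 2) := by gcongr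
      _ = A * r ^ κ / r ^ 2 := by rw [Real.rpow_sub hr, Real.rpow_two, mul_div_assoc]
      _ ≤ A * r ^ γ / r ^ 2 := by gcongr
  · refine (h.abs_le_of_mem_frontier x hx (by linarith)).trans ?_
    gcongr
    exact (hmono (by linarith) hxr).trans hrγ
  · refine (h.abs_le_rpow x hx (by linarith)).trans ?_
    gcongr

theorem exists_isOddHarmonicApprox (h : TangentProblem Ω v A β κ α M) (hα : 0 ≤ α) (hβ : 0 ≤ β)
    (hκ : 2 ≤ κ) (hγκ : γ ≤ κ) (hγβ : γ ≤ β + α) (hr : 0 < r) (hr1 : r ≤ 1) :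
    ∃ H : RealPoly n, IsOddHarmonicApprox Ω v M r (M * r ^ (1 + α))
      ((256 * (n + 1) + 5) * A * r ^ γ) H := by
  have hA := h.bound_pos
  have hM := h.const_pos
  obtain ⟨H, hH, hodd, hnear, hbound⟩ :=
    (h.almostFlatProblem hα hβ hκ hγκ hr hr1).exists_harmonic_approx
  have hproduct : A * r ^ β * (M * r ^ (1 + α)) / r ≤ M * (A * r ^ γ) :=
    calc A * r ^ β * (M * r ^ (1 + α)) / r = M * (A * r ^ (β + α)) := by
          rw [Real.rpow_add hr, Real.rpow_add hr, Real.rpow_one]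
          field_simp
      _ ≤ M * (A * r ^ γ) := by
          gcongr M * (A * ?_)
          exact Real.rpow_le_rpow_of_exponent_ge hr hr1 hγβ
  refine ⟨H, hH, hodd, fun x hx hxr => ?_, fun x t ht hxr hxt => ?_⟩
  · calc |v x - peval H x|
        ≤ (256 * (n + 1) + 5) * (A * r ^ β * (M * r ^ (1 + α)) / r + A * r ^ γ) := hnear x hx hxr
      _ ≤ (256 * (n + 1) + 5) * (M * (A * r ^ γ) + A * r ^ γ) := by gcongr
      _ = (M + 1) * ((256 * (n + 1) + 5) * A * r ^ γ) := by ring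
  · calc |peval H x|
        ≤ (256 * (n + 1) + 5) * (A * r ^ β * (|xn x| + M * r ^ (1 + α)) / r + A * r ^ γ) :=
          hbound x hxr
      _ ≤ (256 * (n + 1) + 5) *
          (A * r ^ β * (t * (M * r ^ (1 + α)) + M * r ^ (1 + α)) / r + A * r ^ γ) := by gcongr
      _ = (256 * (n + 1) + 5) *
          ((t + 1) * (A * r ^ β * (M * r ^ (1 + α)) / r) + A * r ^ γ) := by ring
      _ ≤ (256 * (n + 1) + 5) * ((t + 1) * (M * (A * r ^ γ)) + A * r ^ γ) := by gcongr
      _ = ((t + 1) * M + 1) * ((256 * (n + 1) + 5) * A * r ^ γ) := by ring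

theorem exists_isCampanatoSeq (h : TangentProblem Ω v A β κ α M) (hα : 0 ≤ α) (hα1 : α ≤ 1)
    (hβ : 0 ≤ β) (hκ : 2 ≤ κ) (hγ : 0 ≤ γ) (hγκ : γ ≤ κ) (hγβ : γ ≤ β + α) :
    ∃ H : ℕ → RealPoly n, IsCampanatoSeq H γ ((256 * (n + 1) + 5) * (7 * M + 2) * A) ∧
      (∀ j, IsOddLast (H j)) ∧ ∀ j, ∀ x ∈ Ω, ‖x‖ < (1 / 2) ^ j / 2 → |v x - peval (H j) x| ≤
        (256 * (n + 1) + 5) * (7 * M + 2) * A * ((1 / 2 : ℝ) ^ j) ^ γ := by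
  have hA := h.bound_pos
  have hM := h.const_pos
  have hr1 (j : ℕ) : (1 / 2 : ℝ) ^ j ≤ 1 := pow_le_one₀ (by norm_num) (by norm_num)
  choose H hH using fun j : ℕ =>
    h.exists_isOddHarmonicApprox hα hβ hκ hγκ hγβ (by positivity) (hr1 j)
  refine ⟨H, ⟨fun j => (hH j).plap_eq_zero, fun x hx => ?_, fun j x hx => ?_⟩,
    fun j => (hH j).isOddLast, fun j x hx hxr => ((hH j).abs_sub_peval_le x hx hxr).trans ?_⟩
  · have hbound := (hH 0).abs_peval_le x (1 / (8 * M)) (by positivity)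
      (by rw [pow_zero]; linarith) (by
        rw [pow_zero, Real.one_rpow]
        field_simp
        linarith [abs_xn_le_norm x])
    have hfactor : (1 / (8 * M) + 1) * M + 1 = 8⁻¹ + M + 1 := by field_simp
    rw [pow_zero, Real.one_rpow, mul_one, hfactor] at hbound
    calc |peval (H 0) x| ≤ (8⁻¹ + M + 1) * ((256 * (n + 1) + 5) * A) := hbound
      _ ≤ (7 * M + 2) * ((256 * (n + 1) + 5) * A) :=
          mul_le_mul_of_nonneg_right (by linarith) (by positivity)
      _ = (256 * (n + 1) + 5) * (7 * M + 2) * A := by ring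
  · have hhalf : (1 / 2 : ℝ) ^ (j + 1) = (1 / 2) ^ j / 2 := by
      rw [pow_succ]
      ring
    have hflat := h.almostFlatProblem hα hβ hκ hγκ (by positivity) (hr1 j)
    have hr0 : (0 : ℝ) < (1 / 2) ^ j := by positivity
    have hHj := hH (j + 1)
    rw [hhalf] at hHj
    set r : ℝ := (1 / 2) ^ j
    have hscale : M * r ^ (1 + α) ≤ 4 * (M * (r / 2) ^ (1 + α)) := by
      rw [mul_left_comm]
      gcongr
      exact rpow_le_four_mul_half_rpow hr0.le (by linarith)
    have := (hH j).abs_peval_sub_le hM hscale (by positivity) (by gcongr; linarith)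
      hflat.mem_of_width_lt_xn hHj hr0 hx
    linarith
  · calc (M + 1) * ((256 * (n + 1) + 5) * A * ((1 / 2) ^ j) ^ γ)
        ≤ (7 * M + 2) * ((256 * (n + 1) + 5) * A * ((1 / 2) ^ j) ^ γ) := by
          gcongr <;> linarith
      _ = (256 * (n + 1) + 5) * (7 * M + 2) * A * ((1 / 2) ^ j) ^ γ := by ring

theorem abs_sub_peval_le (h : TangentProblem Ω v A β κ α M) (hβ : 0 ≤ β) {m : ℕ} {B : ℝ}
    {a : RealPoly n} (hdeg : a.totalDegree ≤ m) (hcoeff : ∀ d, |coeff d a| ≤ B) {x : En n}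
    (hx : x ∈ Ω) (hx1 : ‖x‖ < 1) : |v x - peval a x| ≤ A + (multiIndices n m).card * B := by
  have hv : |v x| ≤ A := (h.abs_le_rpow x hx hx1).trans
    (mul_le_of_le_one_right h.bound_pos.le (Real.rpow_le_one (norm_nonneg x) hx1.le hβ))
  have ha : |peval a x| ≤ (multiIndices n m).card * B :=
    abs_peval_le_card_mul hdeg fun d _ =>
      (mul_le_of_le_one_right (abs_nonneg _) (pow_le_one₀ (norm_nonneg _) hx1.le)).trans
        (hcoeff d)
  exact (abs_sub _ _).trans (add_le_add hv ha)

theorem exists_harmonic_approx (n : ℕ) [NeZero n] {m : ℕ} {α β κ M γ : ℝ} (hα : 0 ≤ α)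
    (hα1 : α ≤ 1) (hβ : 0 ≤ β) (hκ : 2 ≤ κ) (hγκ : γ ≤ κ) (hγβ : γ ≤ β + α) (hM : 0 < M)
    (hmγ : m < γ) (hγm : γ < m + 1) :
    ∃ C : ℝ, 0 < C ∧ ∀ (Ω : Set (En n)) (v : En n → ℝ) (A : ℝ), TangentProblem Ω v A β κ α M →
      ∃ a : RealPoly n, plap a = 0 ∧ IsOddLast a ∧ a.totalDegree ≤ m ∧
        (∀ d, |coeff d a| ≤ C * A) ∧ ∀ x ∈ Ω, ‖x‖ < 1 → |v x - peval a x| ≤ C * A * ‖x‖ ^ γ := by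
  obtain ⟨C, hC, hlim⟩ := IsCampanatoSeq.exists_limit n hmγ hγm
  set c : ℝ := (256 * (n + 1) + 5) * (7 * M + 2)
  have hc : 0 < c := by positivity
  have hγ : 0 < γ := m.cast_nonneg.trans_lt hmγ
  set T : ℝ := 2 ^ (m + 5) with hT
  have hTγ : 1 ≤ T ^ γ := Real.one_le_rpow (one_le_pow₀ (by norm_num)) hγ.le
  set W : ℝ := 1 + (multiIndices n m).card * (C * c) + c + C * c with hW
  refine ⟨W * T ^ γ, by positivity, fun Ω v A h => ?_⟩
  have hA := h.bound_pos
  obtain ⟨H, hH, hodd, hnear⟩ := h.exists_isCampanatoSeq hα hα1 hβ hκ hγ.le hγκ hγβ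
  obtain ⟨a, ha, haodd, hdeg, hcoeff, happrox⟩ := hlim H (c * A) hH hodd
  have hCc : C * (c * A) ≤ W * A := by
    have : 0 ≤ (1 + (multiIndices n m).card * (C * c) + c) * A := by positivity
    linarith
  refine ⟨a, ha, haodd, hdeg, fun d => (hcoeff d).trans (hCc.trans ?_), fun x hx hx1 => ?_⟩
  · gcongr
    exact le_mul_of_one_le_right (by positivity) hTγ
  have hx0 : 0 < ‖x‖ := norm_pos_iff.2 fun hzero => h.zero_notMem (hzero ▸ hx)
  -- It suffices to find a scale comparable to `‖x‖` at which the error is small.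
  suffices ∃ r : ℝ, 0 < r ∧ r ≤ T * ‖x‖ ∧ |v x - peval a x| ≤ W * A * r ^ γ by
    obtain ⟨r, hr, hrT, herror⟩ := this
    calc |v x - peval a x| ≤ W * A * r ^ γ := herror
      _ ≤ W * A * (T * ‖x‖) ^ γ := by gcongr
      _ = W * T ^ γ * A * ‖x‖ ^ γ := by
          rw [Real.mul_rpow (by positivity) hx0.le]
          ring
  rcases le_or_gt (‖x‖ * 2 ^ (m + 4)) 1 with hsmall | hlarge
  · obtain ⟨j, hjT, hj, hj'⟩ := exists_half_pow_near hx0 hsmall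
    refine ⟨(1 / 2) ^ j, by positivity, hjT, ?_⟩
    have hva := hnear j x hx hj'
    have haH := happrox j x hj
    have : 0 ≤ (1 + (multiIndices n m).card * (C * c)) * (A * ((1 / 2 : ℝ) ^ j) ^ γ) := by
      positivity
    linarith [abs_sub_le (v x) (peval (H j) x) (peval a x)]
  · refine ⟨1, one_pos, by rw [hT]; ring_nf at hlarge ⊢; linarith, ?_⟩
    have : 0 ≤ (c + C * c) * A := by positivity
    rw [Real.one_rpow, mul_one]
    linarith [h.abs_sub_peval_le hβ hdeg hcoeff hx hx1]

end TangentProblem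

/-! ### Order of vanishing and substitution for the last variable -/

theorem mem_pow_idealOfVars {j : ℕ} {p : RealPoly n} :
    p ∈ idealOfVars (Fin n) ℝ ^ j ↔ ∀ d, mdeg d < j → coeff d p = 0 :=
  mem_pow_idealOfVars_iff' j p

theorem X_mem_idealOfVars (i : Fin n) : (X i : RealPoly n) ∈ idealOfVars (Fin n) ℝ :=
  Ideal.subset_span (mem_range_self i)

theorem eq_zero_of_mem_pow_idealOfVars {j : ℕ} {p : RealPoly n}
    (hp : p ∈ idealOfVars (Fin n) ℝ ^ j) (hdeg : p.totalDegree < j) : p = 0 := by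
  ext d
  rcases lt_or_ge (mdeg d) j with hd | hd
  · exact mem_pow_idealOfVars.1 hp d hd
  · exact totalDegree_le_iff_coeff_eq_zero.1 le_rfl d (hdeg.trans_le hd)

theorem coeff_eq_zero_of_pderiv_eq_zero {q : RealPoly n} {i : Fin n} (hq : pderiv i q = 0)
    {d : Fin n →₀ ℕ} (hd : d i ≠ 0) : coeff d q = 0 := by
  have hcoeff := congrArg (coeff (d - Finsupp.single i 1)) hq
  have hle : Finsupp.single i 1 ≤ d := Finsupp.single_le_iff.2 (Nat.one_le_iff_ne_zero.2 hd)
  rw [coeff_pderiv, coeff_zero, tsub_add_cancel_of_le hle] at hcoeff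
  exact (mul_eq_zero.1 hcoeff).resolve_right (by positivity)

theorem abs_coeff_mul_le {N : ℕ} {p q : RealPoly n} {A B : ℝ} (hA : 0 ≤ A) (hB : 0 ≤ B)
    (hp : ∀ d, mdeg d ≤ N → |coeff d p| ≤ A) (hq : ∀ d, mdeg d ≤ N → |coeff d q| ≤ B)
    {d : Fin n →₀ ℕ} (hd : mdeg d ≤ N) :
    |coeff d (p * q)| ≤ (multiIndices n N).card * A * B := by
  classical
  have hdeg (e : (Fin n →₀ ℕ) × (Fin n →₀ ℕ)) (he : e ∈ Finset.HasAntidiagonal.antidiagonal d) :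
      mdeg e.1 + mdeg e.2 = mdeg d := by
    rw [← mdeg_add, Finset.HasAntidiagonal.mem_antidiagonal.1 he]
  have hcard : (Finset.HasAntidiagonal.antidiagonal d).card ≤ (multiIndices n N).card := by
    refine Finset.card_le_card_of_injOn Prod.fst (fun e he => ?_) fun e he e' he' h => ?_
    · rw [Finset.mem_coe, mem_multiIndices]
      linarith [hdeg e he]
    · have hsum : e.1 + e.2 = e'.1 + e'.2 :=
        (Finset.HasAntidiagonal.mem_antidiagonal.1 he).trans
          (Finset.HasAntidiagonal.mem_antidiagonal.1 he').symm
      rw [h] at hsum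
      exact Prod.ext h (add_left_cancel hsum)
  calc |coeff d (p * q)|
      ≤ ∑ e ∈ Finset.HasAntidiagonal.antidiagonal d, |coeff e.1 p * coeff e.2 q| := by
        rw [coeff_mul]
        exact Finset.abs_sum_le_sum_abs _ _
    _ ≤ (Finset.HasAntidiagonal.antidiagonal d).card • (A * B) := by
        refine Finset.sum_le_card_nsmul _ _ _ fun e he => ?_
        have := hdeg e he
        rw [abs_mul]
        exact mul_le_mul (hp _ (by omega)) (hq _ (by omega)) (abs_nonneg _) hA
    _ ≤ (multiIndices n N).card * A * B := by
        rw [nsmul_eq_mul, ← mul_assoc]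
        gcongr

section substLast

variable [NeZero n] {q p : RealPoly n} {j : ℕ}

theorem substLast_add (q p p' : RealPoly n) :
    substLast q (p + p') = substLast q p + substLast q p' :=
  map_add _ p p'

theorem substLast_sub (q p p' : RealPoly n) :
    substLast q (p - p') = substLast q p - substLast q p' :=
  map_sub _ p p'

theorem substLast_sum {ι : Type*} (s : Finset ι) (q : RealPoly n) (p : ι → RealPoly n) :
    substLast q (∑ i ∈ s, p i) = ∑ i ∈ s, substLast q (p i) :=
  map_sum _ p s

theorem substLast_mul_X (q p : RealPoly n) (i : Fin n) :
    substLast q (p * X i) = substLast q p * if i = lastIdx n then q else X i := by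
  simp [substLast]

theorem substLast_monomial (q : RealPoly n) (d : Fin n →₀ ℕ) (c : ℝ) :
    substLast q (monomial d c) = C c * ∏ i, (if i = lastIdx n then q else X i) ^ d i := by
  rw [substLast, aeval_monomial, Finsupp.prod_fintype _ _ fun i => pow_zero _, algebraMap_eq]

theorem substLast_monomial_mem (hq : q ∈ idealOfVars (Fin n) ℝ ^ 2) (d : Fin n →₀ ℕ) (c : ℝ) :
    substLast q (monomial d c) ∈ idealOfVars (Fin n) ℝ ^ (mdeg d + d (lastIdx n)) := by
  have hfactor (i : Fin n) : (if i = lastIdx n then q else X i) ∈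
      idealOfVars (Fin n) ℝ ^ (1 + if i = lastIdx n then 1 else 0) := by
    split_ifs
    · exact hq
    · simpa using X_mem_idealOfVars i
  have hexponent : mdeg d + d (lastIdx n) =
      ∑ i, (1 + if i = lastIdx n then 1 else 0) * d i := by
    simp [add_mul, Finset.sum_add_distrib, mdeg_eq_degree, Finsupp.degree_eq_sum]
  rw [substLast_monomial, hexponent, ← Finset.prod_pow_eq_pow_sum]
  refine Ideal.mul_mem_left _ _ (Ideal.prod_mem_prod fun i _ => ?_)
  rw [pow_mul]
  exact Ideal.pow_mem_pow (hfactor i) _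

theorem substLast_mem_of_forall_support (hq : q ∈ idealOfVars (Fin n) ℝ ^ 2)
    (hp : ∀ d ∈ p.support, j ≤ mdeg d + d (lastIdx n)) :
    substLast q p ∈ idealOfVars (Fin n) ℝ ^ j := by
  rw [p.as_sum, substLast_sum]
  exact Ideal.sum_mem _ fun d hd => Ideal.pow_le_pow_right (hp d hd) (substLast_monomial_mem hq d _)

theorem substLast_mem (hq : q ∈ idealOfVars (Fin n) ℝ ^ 2) (hp : p ∈ idealOfVars (Fin n) ℝ ^ j) :
    substLast q p ∈ idealOfVars (Fin n) ℝ ^ j :=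
  substLast_mem_of_forall_support hq fun d hd =>
    ((mem_pow_idealOfVars_iff j p).1 hp d hd).trans (Nat.le_add_right _ _)

theorem substLast_mem_succ (hq : q ∈ idealOfVars (Fin n) ℝ ^ 2)
    (hp : p ∈ idealOfVars (Fin n) ℝ ^ j) (hp0 : ∀ d, d (lastIdx n) = 0 → coeff d p = 0) :
    substLast q p ∈ idealOfVars (Fin n) ℝ ^ (j + 1) :=
  substLast_mem_of_forall_support hq fun d hd =>
    add_le_add ((mem_pow_idealOfVars_iff j p).1 hp d hd)
      (Nat.one_le_iff_ne_zero.2 fun h => mem_support_iff.1 hd (hp0 d h))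

theorem substLast_of_pderiv_eq_zero (hp : pderiv (lastIdx n) p = 0) : substLast q p = p := by
  conv_rhs => rw [p.as_sum]
  conv_lhs => rw [p.as_sum, substLast_sum]
  refine Finset.sum_congr rfl fun d hd => ?_
  have hd0 : d (lastIdx n) = 0 := by
    by_contra hne
    exact mem_support_iff.1 hd (coeff_eq_zero_of_pderiv_eq_zero hp hne)
  rw [substLast_monomial, monomial_eq, Finsupp.prod_fintype _ _ fun i => pow_zero _]
  congr 1
  refine Finset.prod_congr rfl fun i _ => ?_
  split_ifs with hi
  · rw [hi, hd0, pow_zero, pow_zero]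
  · rfl

theorem pderiv_substLast_eq_zero (hq : pderiv (lastIdx n) q = 0) (p : RealPoly n) :
    pderiv (lastIdx n) (substLast q p) = 0 := by
  induction p using MvPolynomial.induction_on with
  | C c => simp [substLast]
  | add p p' hp hp' => rw [substLast_add, map_add, hp, hp', add_zero]
  | mul_X p i hp =>
    rw [substLast_mul_X, pderiv_mul, hp, zero_mul, zero_add]
    split_ifs with hi
    · rw [hq, mul_zero]
    · rw [pderiv_X_of_ne hi, mul_zero]

theorem peval_substLast {x y : En n} (hy : y (lastIdx n) = peval q x)
    (hxy : ∀ i, i ≠ lastIdx n → y i = x i) (p : RealPoly n) :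
    peval (substLast q p) x = peval p y := by
  induction p using MvPolynomial.induction_on with
  | C c => simp [substLast, peval]
  | add p p' hp hp' => rw [substLast_add, peval_add, peval_add, hp, hp']
  | mul_X p i hp =>
    rw [substLast_mul_X, peval_mul, peval_mul, hp, peval_X]
    split_ifs with hi
    · rw [hi, hy]
    · rw [peval_X, hxy i hi]

theorem abs_coeff_substLast_monomial_le {M : ℝ} (hM : 1 ≤ M) (hq : ∀ d, |coeff d q| ≤ M) (N : ℕ)
    (e : Fin n →₀ ℕ) : ∀ d, mdeg d ≤ N →
      |coeff d (substLast q (monomial e 1))| ≤ ((multiIndices n N).card * M) ^ mdeg e := by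
  induction hm : mdeg e generalizing e with
  | zero =>
    intro d _
    obtain rfl : e = 0 := by rwa [mdeg_eq_degree, Finsupp.degree_eq_zero_iff] at hm
    classical
    rw [← C_apply, substLast, aeval_C, algebraMap_eq, coeff_C]
    split_ifs <;> simp
  | succ m ih =>
    intro d hd
    obtain ⟨e, i, rfl⟩ := exists_eq_add_single_of_mdeg_pos (hm.symm ▸ m.succ_pos : 0 < mdeg e)
    rw [mdeg_add, mdeg_single, add_left_inj] at hm
    have hfactor (d : Fin n →₀ ℕ) : |coeff d (if i = lastIdx n then q else X i)| ≤ M := by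
      classical
      split_ifs
      · exact hq d
      · rw [coeff_X]
        split_ifs <;> simp <;> linarith
    have hsplit : (monomial (e + Finsupp.single i 1) 1 : RealPoly n) = monomial e 1 * X i := by
      rw [X, monomial_mul, one_mul]
    rw [hsplit, substLast_mul_X]
    refine (abs_coeff_mul_le (by positivity) (by linarith) (ih e hm) (fun d _ => hfactor d)
      hd).trans_eq ?_
    ring

theorem abs_coeff_substLast_le {M B : ℝ} {N : ℕ} (hM : 1 ≤ M) (hq : ∀ d, |coeff d q| ≤ M)
    (hp : p.totalDegree ≤ N) (hpB : ∀ d, |coeff d p| ≤ B) {d : Fin n →₀ ℕ} (hd : mdeg d ≤ N) :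
    |coeff d (substLast q p)| ≤
      (multiIndices n N).card * ((multiIndices n N).card * M) ^ N * B := by
  have hcard : (1 : ℝ) ≤ (multiIndices n N).card := by
    exact_mod_cast Finset.card_pos.2 ⟨d, mem_multiIndices.2 hd⟩
  have hsum : substLast q p =
      ∑ e ∈ multiIndices n N, C (coeff e p) * substLast q (monomial e 1) := by
    conv_lhs => rw [p.as_sum, substLast_sum]
    rw [Finset.sum_subset (support_subset_multiIndices hp) fun e _ he => ?_]
    · refine Finset.sum_congr rfl fun e _ => ?_
      rw [substLast_monomial, substLast_monomial, map_one, one_mul]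
    · rw [notMem_support_iff.1 he, map_zero, substLast, map_zero]
  rw [hsum, coeff_sum, mul_assoc, ← nsmul_eq_mul]
  refine (Finset.abs_sum_le_sum_abs _ _).trans (Finset.sum_le_card_nsmul _ _ _ fun e he => ?_)
  rw [coeff_C_mul, abs_mul, mul_comm]
  refine mul_le_mul ?_ (hpB e) (abs_nonneg _) (by positivity)
  exact (abs_coeff_substLast_monomial_le hM hq N e d hd).trans
    (pow_le_pow_right₀ (one_le_mul_of_one_le_of_one_le hcard hM) (mem_multiIndices.1 he))

end substLast

/-! ### Polynomial solutions of the Dirichlet problem to finite order -/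

/-- `p` vanishes to order `a` at the origin, has degree at most `b`, and its coefficients are
bounded by `B`. -/
structure IsControlled (a b : ℕ) (B : ℝ) (p : RealPoly n) : Prop where
  mem_pow : p ∈ idealOfVars (Fin n) ℝ ^ a
  totalDegree_le : p.totalDegree ≤ b
  abs_coeff_le : ∀ d, |coeff d p| ≤ B

/-- A bound for the effect of the Laplacian on the coefficients of polynomials of degree at most
`b + 2`. -/
def plapConst (n b : ℕ) : ℝ := n * ((b + 2) * (b + 2))

theorem plapConst_nonneg (n b : ℕ) : 0 ≤ plapConst n b := by
  unfold plapConst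
  positivity

namespace IsControlled

variable {a a' b b' : ℕ} {B B' : ℝ} {p q : RealPoly n}

theorem nonneg (hp : IsControlled a b B p) : 0 ≤ B :=
  (abs_nonneg _).trans (hp.abs_coeff_le 0)

theorem mono (hp : IsControlled a b B p) (ha : a' ≤ a) (hB : B ≤ B') : IsControlled a' b B' p :=
  ⟨Ideal.pow_le_pow_right ha hp.mem_pow, hp.totalDegree_le,
    fun d => (hp.abs_coeff_le d).trans hB⟩

theorem add (hp : IsControlled a b B p) (hq : IsControlled a b B' q) :
    IsControlled a b (B + B') (p + q) where
  mem_pow := Ideal.add_mem _ hp.mem_pow hq.mem_pow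
  totalDegree_le := (totalDegree_add _ _).trans (max_le hp.totalDegree_le hq.totalDegree_le)
  abs_coeff_le d := by
    rw [coeff_add]
    exact (abs_add_le _ _).trans (add_le_add (hp.abs_coeff_le d) (hq.abs_coeff_le d))

theorem sub (hp : IsControlled a b B p) (hq : IsControlled a b B' q) :
    IsControlled a b (B + B') (p - q) where
  mem_pow := Ideal.sub_mem _ hp.mem_pow hq.mem_pow
  totalDegree_le := (totalDegree_sub _ _).trans (max_le hp.totalDegree_le hq.totalDegree_le)
  abs_coeff_le d := by
    rw [coeff_sub]
    exact (abs_sub _ _).trans (add_le_add (hp.abs_coeff_le d) (hq.abs_coeff_le d))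

theorem zero (a b : ℕ) : IsControlled a b 0 (0 : RealPoly n) :=
  ⟨Ideal.zero_mem _, by simp, by simp⟩

theorem of_mem (hp : p ∈ idealOfVars (Fin n) ℝ ^ a) (hb : p.totalDegree ≤ b) :
    IsControlled a b (∑ d ∈ p.support, |coeff d p|) p := by
  refine ⟨hp, hb, fun d => ?_⟩
  by_cases hd : d ∈ p.support
  · exact Finset.single_le_sum (f := fun d => |coeff d p|) (fun _ _ => abs_nonneg _) hd
  · rw [notMem_support_iff.1 hd, abs_zero]
    exact Finset.sum_nonneg fun _ _ => abs_nonneg _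

theorem abs_peval_le (hp : IsControlled a b B p) {x : En n} (hx : ‖x‖ ≤ 1) :
    |peval p x| ≤ (multiIndices n b).card * B * ‖x‖ ^ a := by
  rw [mul_assoc]
  refine abs_peval_le_card_mul hp.totalDegree_le fun d _ => ?_
  rcases lt_or_ge (mdeg d) a with hd | hd
  · rw [mem_pow_idealOfVars.1 hp.mem_pow d hd, abs_zero, zero_mul]
    exact mul_nonneg hp.nonneg (by positivity)
  · exact mul_le_mul (hp.abs_coeff_le d) (pow_le_pow_of_le_one (norm_nonneg _) hx hd)
      (by positivity) hp.nonneg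

theorem sum {ι : Type*} (s : Finset ι) {p : ι → RealPoly n} {B : ι → ℝ}
    (hp : ∀ i ∈ s, IsControlled a b (B i) (p i)) :
    IsControlled a b (∑ i ∈ s, B i) (∑ i ∈ s, p i) := by
  classical
  induction s using Finset.induction_on with
  | empty => exact zero a b
  | insert i s hi ih =>
    rw [Finset.sum_insert hi, Finset.sum_insert hi]
    exact (hp i (Finset.mem_insert_self i s)).add
      (ih fun j hj => hp j (Finset.mem_insert_of_mem hj))

theorem truncDegree {N : ℕ} (hp : p ∈ idealOfVars (Fin n) ℝ ^ a) (hB : 0 ≤ B)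
    (hpB : ∀ d, mdeg d ≤ N → |coeff d p| ≤ B) :
    IsControlled a N B (truncDegree (N + 1) p) where
  mem_pow := mem_pow_idealOfVars.2 fun d hd => by
    rw [coeff_truncDegree, mem_pow_idealOfVars.1 hp d hd, ite_self]
  totalDegree_le := totalDegree_truncDegree_le N p
  abs_coeff_le d := by
    rw [coeff_truncDegree]
    split_ifs with hd
    · exact hpB d (Nat.lt_succ_iff.1 hd)
    · rwa [abs_zero]

theorem plap (hp : IsControlled a (b + 2) B p) :
    IsControlled (a - 2) b (plapConst n b * B) (plap p) where
  mem_pow := mem_pow_idealOfVars.2 fun d hd => by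
    rw [coeff_plap]
    refine Finset.sum_eq_zero fun i _ => ?_
    rw [mem_pow_idealOfVars.1 hp.mem_pow _ (by rw [mdeg_add, mdeg_single]; omega), zero_mul]
  totalDegree_le := totalDegree_plap_le hp.totalDegree_le
  abs_coeff_le d := by
    have hB := hp.nonneg
    rcases lt_or_ge b (mdeg d) with hd | hd
    · rw [totalDegree_le_iff_coeff_eq_zero.1 (totalDegree_plap_le hp.totalDegree_le) d hd, abs_zero]
      exact mul_nonneg (plapConst_nonneg n b) hB
    have hterm (i : Fin n) : |coeff (d + Finsupp.single i 2) p * (((d i : ℝ) + 2) * (d i + 1))| ≤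
        B * ((b + 2) * (b + 2)) := by
      have hdi : (d i : ℝ) ≤ b := by exact_mod_cast (Finsupp.le_degree i d).trans hd
      rw [abs_mul, abs_of_nonneg (by positivity : (0 : ℝ) ≤ (d i + 2) * (d i + 1))]
      gcongr
      · exact hp.abs_coeff_le _
      · norm_num
    calc |coeff d (_root_.plap p)| ≤ ∑ _i : Fin n, B * (((b : ℝ) + 2) * (b + 2)) := by
          rw [coeff_plap]
          exact (Finset.abs_sum_le_sum_abs _ _).trans (Finset.sum_le_sum fun i _ => hterm i)
      _ = plapConst n b * B := by
          rw [Finset.sum_const, Finset.card_univ, Fintype.card_fin, nsmul_eq_mul, plapConst]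
          ring

end IsControlled

/-- The second antiderivative of `F` in the last variable that vanishes to second order on
`{x_n = 0}`. -/
def integralLastTwice [NeZero n] (F : RealPoly n) : RealPoly n :=
  polyOfCoeffs (F.totalDegree + 2) fun d =>
    if 2 ≤ d (lastIdx n) then coeff (d - Finsupp.single (lastIdx n) 2) F /
      ((d (lastIdx n) : ℝ) * ((d (lastIdx n) : ℝ) - 1)) else 0

/-- What remains of `F` after subtracting the Laplacian of its second antiderivative in the last
variable. -/
def plapDefect [NeZero n] (F : RealPoly n) : RealPoly n := F - plap (integralLastTwice F)

/-- A polynomial right inverse of the Laplacian on polynomials of degree at most `b`, given by the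
finite Neumann series of `integralLastTwice`. -/
def invPlap [NeZero n] (b : ℕ) (F : RealPoly n) : RealPoly n :=
  ∑ j ∈ Finset.range (b + 1), integralLastTwice (plapDefect^[j] F)

theorem plap_sum {ι : Type*} (s : Finset ι) (p : ι → RealPoly n) :
    plap (∑ i ∈ s, p i) = ∑ i ∈ s, plap (p i) := by
  simp only [plap, map_sum]
  exact Finset.sum_comm

/-- A bound for the effect of `invPlap` on coefficients. -/
def invPlapConst (n b : ℕ) : ℝ := ∑ j ∈ Finset.range (b + 1), (1 + plapConst n b) ^ j

theorem invPlapConst_nonneg (n b : ℕ) : 0 ≤ invPlapConst n b :=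
  Finset.sum_nonneg fun _ _ => pow_nonneg (add_nonneg zero_le_one (plapConst_nonneg n b)) _

section invPlap

variable [NeZero n] {a b : ℕ} {B : ℝ} {F : RealPoly n}

theorem coeff_integralLastTwice (F : RealPoly n) (d : Fin n →₀ ℕ) :
    coeff d (integralLastTwice F) =
      if 2 ≤ d (lastIdx n) then coeff (d - Finsupp.single (lastIdx n) 2) F /
        ((d (lastIdx n) : ℝ) * ((d (lastIdx n) : ℝ) - 1)) else 0 := by
  rw [integralLastTwice, coeff_polyOfCoeffs]
  split_ifs with hdeg hd hd
  · rfl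
  · rfl
  · have hmdeg : mdeg (d - Finsupp.single (lastIdx n) 2) + 2 = mdeg d := by
      conv_rhs => rw [← tsub_add_cancel_of_le (Finsupp.single_le_iff.2 hd), mdeg_add, mdeg_single]
    rw [totalDegree_le_iff_coeff_eq_zero.1 le_rfl _ (by omega), zero_div]
  · rfl

theorem coeff_integralLastTwice_eq_zero {t : ℕ} (hF : ∀ d, d (lastIdx n) < t → coeff d F = 0)
    {d : Fin n →₀ ℕ} (hd : d (lastIdx n) < t + 2) : coeff d (integralLastTwice F) = 0 := by
  rw [coeff_integralLastTwice]
  split_ifs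
  · rw [hF _ (by rw [Finsupp.tsub_apply, Finsupp.single_eq_same]; omega), zero_div]
  · rfl

theorem coeff_add_single_integralLastTwice (F : RealPoly n) (d : Fin n →₀ ℕ) :
    coeff (d + Finsupp.single (lastIdx n) 2) (integralLastTwice F) *
      (((d (lastIdx n) : ℝ) + 2) * ((d (lastIdx n) : ℝ) + 1)) = coeff d F := by
  rw [coeff_integralLastTwice, if_pos (by simp), add_tsub_cancel_right, Finsupp.add_apply,
    Finsupp.single_eq_same, Nat.cast_add, Nat.cast_ofNat,
    show (d (lastIdx n) : ℝ) + 2 - 1 = d (lastIdx n) + 1 by ring]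
  exact div_mul_cancel₀ _ (by positivity)

theorem coeff_plapDefect (F : RealPoly n) (d : Fin n →₀ ℕ) :
    coeff d (plapDefect F) = -∑ i ∈ Finset.univ.erase (lastIdx n),
      coeff (d + Finsupp.single i 2) (integralLastTwice F) *
        (((d i : ℝ) + 2) * ((d i : ℝ) + 1)) := by
  rw [plapDefect, coeff_sub, coeff_plap, ← Finset.add_sum_erase _ _ (Finset.mem_univ (lastIdx n)),
    coeff_add_single_integralLastTwice]
  ring

theorem coeff_plapDefect_eq_zero {t : ℕ} (hF : ∀ d, d (lastIdx n) < t → coeff d F = 0)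
    {d : Fin n →₀ ℕ} (hd : d (lastIdx n) < t + 2) : coeff d (plapDefect F) = 0 := by
  rw [coeff_plapDefect, neg_eq_zero]
  refine Finset.sum_eq_zero fun i hi => ?_
  rw [coeff_integralLastTwice_eq_zero hF, zero_mul]
  rwa [Finsupp.add_apply, Finsupp.single_eq_of_ne (Finset.ne_of_mem_erase hi).symm, add_zero]

theorem coeff_iterate_plapDefect_eq_zero (F : RealPoly n) (j : ℕ) :
    ∀ d : Fin n →₀ ℕ, d (lastIdx n) < 2 * j → coeff d (plapDefect^[j] F) = 0 := by
  induction j with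
  | zero => simp
  | succ j ih =>
    intro d hd
    rw [Function.iterate_succ_apply']
    exact coeff_plapDefect_eq_zero ih (by omega)

theorem IsControlled.integralLastTwice (hF : IsControlled a b B F) :
    IsControlled (a + 2) (b + 2) B (integralLastTwice F) where
  mem_pow := mem_pow_idealOfVars.2 fun d hd => by
    rw [coeff_integralLastTwice]
    split_ifs with hd2
    · have hmdeg : mdeg (d - Finsupp.single (lastIdx n) 2) + 2 = mdeg d := by
        conv_rhs =>
          rw [← tsub_add_cancel_of_le (Finsupp.single_le_iff.2 hd2), mdeg_add, mdeg_single]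
      rw [mem_pow_idealOfVars.1 hF.mem_pow _ (by omega), zero_div]
    · rfl
  totalDegree_le := (totalDegree_polyOfCoeffs_le _ _).trans (by simpa using hF.totalDegree_le)
  abs_coeff_le d := by
    rw [coeff_integralLastTwice]
    split_ifs with hd2
    · have hd2' : (2 : ℝ) ≤ d (lastIdx n) := by exact_mod_cast hd2
      have hdenom : (1 : ℝ) ≤ d (lastIdx n) * (d (lastIdx n) - 1) := by nlinarith
      rw [abs_div, abs_of_pos (by linarith : (0 : ℝ) < d (lastIdx n) * (d (lastIdx n) - 1))]
      exact (div_le_self (abs_nonneg _) hdenom).trans (hF.abs_coeff_le _)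
    · rw [abs_zero]
      exact hF.nonneg

theorem IsControlled.iterate_plapDefect (hF : IsControlled a b B F) (j : ℕ) :
    IsControlled a b ((1 + plapConst n b) ^ j * B) (plapDefect^[j] F) := by
  induction j with
  | zero => simpa using hF
  | succ j ih =>
    rw [Function.iterate_succ_apply']
    refine (ih.sub ih.integralLastTwice.plap).mono le_rfl (le_of_eq ?_)
    ring

theorem IsControlled.invPlap (hF : IsControlled a b B F) :
    IsControlled (a + 2) (b + 2) (invPlapConst n b * B) (invPlap b F) := by
  rw [invPlapConst, Finset.sum_mul]
  exact IsControlled.sum _ fun j _ => (hF.iterate_plapDefect j).integralLastTwice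

theorem coeff_invPlap_eq_zero (b : ℕ) (F : RealPoly n) {d : Fin n →₀ ℕ}
    (hd : d (lastIdx n) = 0) : coeff d (invPlap b F) = 0 := by
  rw [invPlap, coeff_sum]
  exact Finset.sum_eq_zero fun j _ =>
    coeff_integralLastTwice_eq_zero (coeff_iterate_plapDefect_eq_zero F j) (by omega)

theorem plap_invPlap (hF : F.totalDegree ≤ b) : plap (invPlap b F) = F := by
  have hstep (j : ℕ) : plap (integralLastTwice (plapDefect^[j] F)) =
      plapDefect^[j] F - plapDefect^[j + 1] F := by
    rw [Function.iterate_succ_apply', plapDefect, sub_sub_cancel]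
  have hlast : plapDefect^[b + 1] F = 0 := by
    ext d
    rcases lt_or_ge b (mdeg d) with hd | hd
    · exact totalDegree_le_iff_coeff_eq_zero.1
        ((IsControlled.of_mem (a := 0) (by simp) hF).iterate_plapDefect (b + 1)).totalDegree_le d hd
    · refine coeff_iterate_plapDefect_eq_zero F (b + 1) d ?_
      have : d (lastIdx n) ≤ mdeg d := Finsupp.le_degree _ d
      omega
  rw [invPlap, plap_sum, Finset.sum_congr rfl fun j _ => hstep j, Finset.sum_range_sub', hlast,
    sub_zero, Function.iterate_zero_apply]

end invPlap

/-- `Q` is the polynomial of a boundary graph `x_n = Q(x')` tangent to `{x_n = 0}` at the origin,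
with coefficients bounded by `M`. -/
structure IsBoundaryGraph [NeZero n] (M : ℝ) (Q : RealPoly n) : Prop where
  mem_sq : Q ∈ idealOfVars (Fin n) ℝ ^ 2
  pderiv_last : pderiv (lastIdx n) Q = 0
  abs_coeff_le : ∀ d, |coeff d Q| ≤ M

/-- The Taylor polynomial of degree `m` in `x'` of the restriction `p(x', Q(x'))` of `p` to the
graph of `Q`. -/
def graphTrace [NeZero n] (m : ℕ) (Q p : RealPoly n) : RealPoly n :=
  truncDegree (m + 1) (substLast Q p)

/-- A bound for the effect of `graphTrace` on coefficients. -/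
def graphTraceConst (n m : ℕ) (M : ℝ) : ℝ :=
  (multiIndices n m).card * ((multiIndices n m).card * M) ^ m

section graphTrace

variable [NeZero n] {a b m : ℕ} {M B : ℝ} {p q Q F : RealPoly n}

theorem graphTrace_add (m : ℕ) (Q p q : RealPoly n) :
    graphTrace m Q (p + q) = graphTrace m Q p + graphTrace m Q q := by
  rw [graphTrace, substLast_add, truncDegree_add, graphTrace, graphTrace]

theorem graphTrace_sub (m : ℕ) (Q p q : RealPoly n) :
    graphTrace m Q (p - q) = graphTrace m Q p - graphTrace m Q q := by
  rw [graphTrace, substLast_sub, truncDegree_sub, graphTrace, graphTrace]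

theorem graphTrace_of_pderiv_eq_zero (hp : pderiv (lastIdx n) p = 0) (hdeg : p.totalDegree ≤ m) :
    graphTrace m Q p = p := by
  rw [graphTrace, substLast_of_pderiv_eq_zero hp]
  ext d
  rw [coeff_truncDegree]
  split_ifs with hd
  · rfl
  · exact (totalDegree_le_iff_coeff_eq_zero.1 hdeg d (by omega)).symm

theorem pderiv_graphTrace_eq_zero (hQ : pderiv (lastIdx n) Q = 0) (m : ℕ) (p : RealPoly n) :
    pderiv (lastIdx n) (graphTrace m Q p) = 0 := by
  rw [graphTrace, pderiv_truncDegree, pderiv_substLast_eq_zero hQ]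
  ext d
  simp [coeff_truncDegree]

theorem graphTraceConst_nonneg (n m : ℕ) (hM : 0 ≤ M) : 0 ≤ graphTraceConst n m M := by
  unfold graphTraceConst
  positivity

theorem IsControlled.graphTrace_of_mem (hM : 1 ≤ M) (hQ : IsBoundaryGraph M Q)
    (hp : IsControlled b m B p) (hmem : substLast Q p ∈ idealOfVars (Fin n) ℝ ^ a) :
    IsControlled a m (graphTraceConst n m M * B) (graphTrace m Q p) :=
  IsControlled.truncDegree hmem
    (mul_nonneg (graphTraceConst_nonneg n m (zero_le_one.trans hM)) hp.nonneg) fun _ hd =>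
      abs_coeff_substLast_le hM hQ.abs_coeff_le hp.totalDegree_le hp.abs_coeff_le hd

theorem IsControlled.graphTrace (hM : 1 ≤ M) (hQ : IsBoundaryGraph M Q)
    (hp : IsControlled a m B p) :
    IsControlled a m (graphTraceConst n m M * B) (graphTrace m Q p) :=
  hp.graphTrace_of_mem hM hQ (substLast_mem hQ.mem_sq hp.mem_pow)

-- The harmonic polynomial `q - invPlap N (plap q)` agrees with `q` on `{x_n = 0}`, so its trace on
-- the graph, which is tangent to `{x_n = 0}`, differs from `q` only to one order higher.
theorem exists_harmonic_graphTrace_eq (n : ℕ) [NeZero n] (N : ℕ) (hM : 1 ≤ M) (s : ℕ) :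
    ∃ C : ℝ, 0 ≤ C ∧ ∀ (j : ℕ) (Q q : RealPoly n) (B : ℝ), N + 2 < j + s → IsBoundaryGraph M Q →
      pderiv (lastIdx n) q = 0 → IsControlled j (N + 2) B q →
      ∃ P, plap P = 0 ∧ IsControlled j (N + 2) (C * B) P ∧ graphTrace (N + 2) Q P = q := by
  induction s with
  | zero =>
    refine ⟨0, le_rfl, fun j Q q B hj _ _ hqc => ⟨0, plap_zero, ?_, ?_⟩⟩
    · simpa using IsControlled.zero j (N + 2)
    · rw [eq_zero_of_mem_pow_idealOfVars hqc.mem_pow (hqc.totalDegree_le.trans_lt hj)]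
      exact graphTrace_of_pderiv_eq_zero (map_zero _) (by simp)
  | succ s ih =>
    obtain ⟨C, hC, hsolve⟩ := ih
    have hc := invPlapConst_nonneg n N
    have hp := plapConst_nonneg n N
    have ht := graphTraceConst_nonneg n (N + 2) (zero_le_one.trans hM)
    refine ⟨1 + invPlapConst n N * plapConst n N +
      C * (graphTraceConst n (N + 2) M * (invPlapConst n N * plapConst n N)), by positivity,
      fun j Q q B hj hQ hq hqc => ?_⟩
    set R := invPlap N (plap q)
    have hR : IsControlled j (N + 2) (invPlapConst n N * (plapConst n N * B)) R :=
      hqc.plap.invPlap.mono (by omega) le_rfl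
    have htrace := hR.graphTrace_of_mem hM hQ
      (substLast_mem_succ hQ.mem_sq hR.mem_pow fun d hd => coeff_invPlap_eq_zero N (plap q) hd)
    obtain ⟨P, hP, hPc, hPq⟩ := hsolve (j + 1) Q (graphTrace (N + 2) Q R) _ (by omega) hQ
      (pderiv_graphTrace_eq_zero hQ.pderiv_last _ _) htrace
    refine ⟨q - R + P, ?_, ((hqc.sub hR).add (hPc.mono (Nat.le_succ j) le_rfl)).mono le_rfl
      (le_of_eq (by ring)), ?_⟩
    · rw [plap_add, plap_sub, hP, plap_invPlap (totalDegree_plap_le hqc.totalDegree_le)]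
      simp
    · rw [graphTrace_add, graphTrace_sub, hPq, sub_add_cancel,
        graphTrace_of_pderiv_eq_zero hq hqc.totalDegree_le]

theorem exists_plap_eq_graphTrace_eq (n : ℕ) [NeZero n] (N : ℕ) (hM : 1 ≤ M) :
    ∃ C : ℝ, 0 ≤ C ∧ ∀ (j : ℕ) (Q F q : RealPoly n) (B : ℝ), IsBoundaryGraph M Q →
      IsControlled (j - 2) N B F → IsControlled j (N + 2) B q →
      ∃ P, plap P = F ∧ IsControlled j (N + 2) (C * B) P ∧
        graphTrace (N + 2) Q P = graphTrace (N + 2) Q q := by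
  obtain ⟨C, hC, hsolve⟩ := exists_harmonic_graphTrace_eq n N hM (N + 3)
  have hc := invPlapConst_nonneg n N
  have ht := graphTraceConst_nonneg n (N + 2) (zero_le_one.trans hM)
  refine ⟨invPlapConst n N + C * (graphTraceConst n (N + 2) M * (1 + invPlapConst n N)),
    by positivity, fun j Q F q B hQ hF hq => ?_⟩
  have hR : IsControlled j (N + 2) _ (invPlap N F) := hF.invPlap.mono (by omega) le_rfl
  obtain ⟨P, hP, hPc, hPq⟩ := hsolve j Q (graphTrace (N + 2) Q (q - invPlap N F)) _ (by omega) hQ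
    (pderiv_graphTrace_eq_zero hQ.pderiv_last _ _) ((hq.sub hR).graphTrace hM hQ)
  refine ⟨invPlap N F + P, ?_, (hR.add hPc).mono le_rfl (le_of_eq (by ring)), ?_⟩
  · rw [plap_add, hP, add_zero, plap_invPlap hF.totalDegree_le]
  · rw [graphTrace_add, hPq, graphTrace_sub, add_sub_cancel]

end graphTrace

/-! ### Vanishing orders read off from a cone -/

/-- The truncated open cone around the inner normal `e_n`; it lies in every domain that is tangent
to `{x_n > 0}` at the origin, for `ρ` small. -/
def normalCone [NeZero n] (ρ : ℝ) : Set (En n) := {x | ‖x‖ < ρ ∧ ‖x‖ / 2 < xn x}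

theorem tendsto_const_mul_rpow_nhdsGT_zero {e : ℝ} (he : 0 < e) (c : ℝ) :
    Tendsto (fun t : ℝ => c * t ^ e) (𝓝[>] 0) (𝓝 0) := by
  have hcont : Tendsto (fun t : ℝ => c * t ^ e) (𝓝 0) (𝓝 (c * 0 ^ e)) :=
    ((Real.continuous_rpow_const he.le).tendsto 0).const_mul c
  rw [Real.zero_rpow he.ne', mul_zero] at hcont
  exact hcont.mono_left nhdsWithin_le_nhds

theorem peval_smul_of_isHomogeneous {e : ℕ} {p : RealPoly n} (hp : p.IsHomogeneous e) (t : ℝ)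
    (y : En n) : peval p (t • y) = t ^ e * peval p y := by
  rw [peval_eq_sum_of_support_subset p _ subset_rfl, peval_eq_sum_of_support_subset p _ subset_rfl,
    Finset.mul_sum]
  refine Finset.sum_congr rfl fun d hd => ?_
  have hde : ∑ i, d i = e := by
    rw [← Finsupp.degree_eq_sum, Finsupp.degree_eq_weight_one]
    exact hp (mem_support_iff.1 hd)
  have hprod : ∏ i, (t • y) i ^ d i = t ^ e * ∏ i, y i ^ d i := by
    rw [← hde, ← Finset.prod_pow_eq_pow_sum, ← Finset.prod_mul_distrib]
    exact Finset.prod_congr rfl fun i _ => mul_pow _ _ _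
  rw [hprod]
  ring

theorem sub_homogeneousComponent_mem {e : ℕ} {p : RealPoly n}
    (hp : p ∈ idealOfVars (Fin n) ℝ ^ e) :
    p - homogeneousComponent e p ∈ idealOfVars (Fin n) ℝ ^ (e + 1) := by
  refine mem_pow_idealOfVars.2 fun d hd => ?_
  rw [coeff_sub, coeff_homogeneousComponent, ← mdeg_eq_degree]
  split_ifs with hde
  · exact sub_self _
  · rw [mem_pow_idealOfVars.1 hp d (by omega), sub_zero]

theorem exists_abs_peval_smul_sub_le {e : ℕ} {p : RealPoly n}
    (hp : p ∈ idealOfVars (Fin n) ℝ ^ e) :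
    ∃ B : ℝ, 0 ≤ B ∧ ∀ (t : ℝ) (y : En n), 0 < t → t ≤ 1 → ‖y‖ ≤ 1 →
      |peval p (t • y) - t ^ e * peval (homogeneousComponent e p) y| ≤ B * t ^ (e + 1) := by
  have hctrl := IsControlled.of_mem (sub_homogeneousComponent_mem hp) le_rfl
  set q := p - homogeneousComponent e p with hq
  refine ⟨(multiIndices n q.totalDegree).card * ∑ d ∈ q.support, |coeff d q|,
    mul_nonneg (Nat.cast_nonneg _) hctrl.nonneg, fun t y ht ht1 hy => ?_⟩
  have hnorm : ‖t • y‖ ≤ t := by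
    rw [norm_smul, Real.norm_of_nonneg ht.le]
    exact mul_le_of_le_one_right ht.le hy
  have hbound := hctrl.abs_peval_le (hnorm.trans ht1)
  rw [hq, peval_sub, peval_smul_of_isHomogeneous (homogeneousComponent_isHomogeneous e p)] at hbound
  have hB := hctrl.nonneg
  exact hbound.trans (by gcongr)

section normalCone

variable [NeZero n] {ρ t : ℝ} {x y : En n}

theorem isOpen_normalCone (ρ : ℝ) : IsOpen (normalCone ρ : Set (En n)) :=
  (isOpen_lt continuous_norm continuous_const).inter
    (isOpen_lt (continuous_norm.div_const 2) continuous_xn)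

theorem normalCone_nonempty (hρ : 0 < ρ) : (normalCone ρ : Set (En n)).Nonempty := by
  refine ⟨EuclideanSpace.single (lastIdx n) (ρ / 2), ?_, ?_⟩
  · rw [PiLp.norm_single, Real.norm_of_nonneg (by positivity)]
    exact half_lt_self hρ
  · rw [PiLp.norm_single, Real.norm_of_nonneg (by positivity), xn, PiLp.single_apply, if_pos rfl]
    linarith

theorem smul_mem_normalCone (hy : y ∈ normalCone 1) (ht : 0 < t) (htρ : t ≤ ρ) :
    t • y ∈ normalCone ρ := by
  have hxn : xn (t • y) = t * xn y := rfl
  rw [normalCone, mem_ofPred_eq, hxn, norm_smul, Real.norm_of_nonneg ht.le, mul_div_assoc]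
  exact ⟨(mul_lt_of_lt_one_right ht hy.1).trans_le htρ, mul_lt_mul_of_pos_left hy.2 ht⟩

theorem norm_smul_le_of_mem_normalCone (hy : y ∈ normalCone 1) (ht : 0 < t) : ‖t • y‖ ≤ t := by
  rw [norm_smul, Real.norm_of_nonneg ht.le]
  exact mul_le_of_le_one_right ht.le hy.1.le

theorem mem_pow_succ_of_peval_homogeneousComponent_eq_zero {e : ℕ} {p : RealPoly n}
    (hp : p ∈ idealOfVars (Fin n) ℝ ^ e)
    (h : ∀ y ∈ normalCone 1, peval (homogeneousComponent e p) y = 0) :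
    p ∈ idealOfVars (Fin n) ℝ ^ (e + 1) := by
  have hzero : homogeneousComponent e p = 0 :=
    eq_zero_of_peval_eq_zero_of_isOpen (isOpen_normalCone 1) (normalCone_nonempty one_pos) h
  simpa [hzero] using sub_homogeneousComponent_mem hp

theorem rpow_eq_rpow_sub_mul_pow (ht : 0 < t) (e : ℝ) (j : ℕ) : t ^ e = t ^ (e - j) * t ^ j := by
  rw [← Real.rpow_natCast t j, ← Real.rpow_add ht, sub_add_cancel]

theorem mem_pow_succ_of_abs_peval_le {p : RealPoly n} {C κ : ℝ} {e : ℕ} (hρ : 0 < ρ)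
    (h : ∀ x ∈ normalCone ρ, |peval p x| ≤ C * ‖x‖ ^ κ) (hp : p ∈ idealOfVars (Fin n) ℝ ^ e)
    (he : e < κ) : p ∈ idealOfVars (Fin n) ℝ ^ (e + 1) := by
  obtain ⟨B, -, hB⟩ := exists_abs_peval_smul_sub_le hp
  refine mem_pow_succ_of_peval_homogeneousComponent_eq_zero hp fun y hy => ?_
  set lead := peval (homogeneousComponent e p) y
  have hlim : Tendsto (fun t : ℝ => (C * ‖y‖ ^ κ) * t ^ (κ - e) + B * t ^ (1 : ℝ)) (𝓝[>] 0)
      (𝓝 0) := by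
    simpa using (tendsto_const_mul_rpow_nhdsGT_zero (sub_pos.2 he) (C * ‖y‖ ^ κ)).add
      (tendsto_const_mul_rpow_nhdsGT_zero one_pos B)
  refine abs_nonpos_iff.1 (ge_of_tendsto hlim ?_)
  filter_upwards [Ioo_mem_nhdsGT (lt_min hρ one_pos)] with t ht
  have hvalue := h _ (smul_mem_normalCone hy ht.1 (ht.2.trans_le (min_le_left _ _)).le)
  have hlead := hB t y ht.1 (ht.2.trans_le (min_le_right _ _)).le hy.1.le
  rw [norm_smul, Real.norm_of_nonneg ht.1.le, Real.mul_rpow ht.1.le (norm_nonneg _)] at hvalue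
  have hte : 0 < t ^ e := pow_pos ht.1 e
  refine le_of_mul_le_mul_left ?_ hte
  calc t ^ e * |lead| = |peval p (t • y) - (peval p (t • y) - t ^ e * lead)| := by
        rw [sub_sub_cancel, abs_mul, abs_of_pos hte]
    _ ≤ C * (t ^ κ * ‖y‖ ^ κ) + B * t ^ (e + 1) :=
        (abs_sub _ _).trans (add_le_add hvalue hlead)
    _ = t ^ e * (C * ‖y‖ ^ κ * t ^ (κ - e) + B * t ^ (1 : ℝ)) := by
        rw [rpow_eq_rpow_sub_mul_pow ht.1 κ e, Real.rpow_one]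
        ring

theorem mem_pow_of_abs_peval_le {p : RealPoly n} {C κ : ℝ} {e : ℕ} (hρ : 0 < ρ)
    (h : ∀ x ∈ normalCone ρ, |peval p x| ≤ C * ‖x‖ ^ κ) (he : e < κ + 1) :
    p ∈ idealOfVars (Fin n) ℝ ^ e := by
  induction e with
  | zero => simp
  | succ e ih =>
    push_cast at he
    exact mem_pow_succ_of_abs_peval_le hρ h (ih (by linarith)) (by linarith)

end normalCone

theorem mul_sq_le_of_le_hasLap [NeZero n] {u : En n → ℝ} {z : En n} {s c η : ℝ} (hs : 0 < s)
    (hu : ContinuousOn u (closedBall z s)) (hlap : ∀ y ∈ ball z s, ∃ L, c ≤ L ∧ HasLap u y L)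
    (hη : ∀ y ∈ closedBall z s, |u y| ≤ η) : c * s ^ 2 ≤ 4 * n * η := by
  have hn : (0 : ℝ) < n := by exact_mod_cast NeZero.pos n
  have hball : ball z s ⊆ closedBall 0 (‖z‖ + s) := fun y hy => by
    rw [mem_closedBall_zero_iff]
    have hyz : ‖y - z‖ < s := by simpa [dist_eq_norm] using hy
    linarith [norm_le_norm_add_norm_sub' y z]
  have hsubharmonic (y : En n) (hy : y ∈ ball z s) :
      ∃ L, -0 ≤ L ∧ HasLap (fun y => u y - c / (2 * n) * ‖y - z‖ ^ 2) y L := by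
    obtain ⟨L, hcL, hL⟩ := hlap y hy
    refine ⟨_, ?_, hL.sub ((hasLap_norm_sub_sq z y).const_mul (c / (2 * n)))⟩
    rw [div_mul_cancel₀ c (by positivity)]
    linarith
  have hmax := le_add_of_neg_le_hasLap (w := fun y => u y - c / (2 * n) * ‖y - z‖ ^ 2)
    (m := η - c / (2 * n) * s ^ 2) isOpen_ball hball le_rfl
    ((hu.mono closure_ball_subset_closedBall).sub (Continuous.continuousOn (by fun_prop)))
    hsubharmonic (fun y hy => by
      have hys : ‖y - z‖ = s := by simpa [dist_eq_norm] using frontier_ball_subset_sphere hy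
      have hyη := (abs_le.1 (hη y (by simp [dist_eq_norm, hys]))).2
      rw [hys]
      linarith) z (mem_ball_self hs)
  simp only [sub_self, norm_zero, ne_eq, OfNat.ofNat_ne_zero, not_false_eq_true, zero_pow, mul_zero,
    sub_zero, zero_mul, add_zero] at hmax
  have hz := (abs_le.1 (hη z (mem_closedBall_self hs.le))).1
  have hdiv : c * s ^ 2 / (2 * n) ≤ 2 * η := by
    rw [mul_div_right_comm]
    linarith
  rw [div_le_iff₀ (by positivity)] at hdiv
  linarith

/-- `u = O(|x| ^ κ)` and `Δu = F + O(|x| ^ e)` in the cone `normalCone ρ`, with constant `K`. -/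
structure IsConeSolution [NeZero n] (ρ κ e K : ℝ) (u : En n → ℝ) (F : RealPoly n) : Prop where
  radius_pos : 0 < ρ
  radius_le : ρ ≤ 1
  const_nonneg : 0 ≤ K
  continuousOn : ContinuousOn u (normalCone ρ)
  abs_hasLap_sub_le : ∀ x ∈ normalCone ρ, ∃ L, |L - peval F x| ≤ K * ‖x‖ ^ e ∧ HasLap u x L
  abs_le_rpow : ∀ x ∈ normalCone ρ, |u x| ≤ K * ‖x‖ ^ κ

namespace IsConeSolution

variable [NeZero n] {ρ κ e K : ℝ} {u : En n → ℝ} {F : RealPoly n} {j : ℕ}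

theorem neg (h : IsConeSolution ρ κ e K u F) : IsConeSolution ρ κ e K (fun x => -u x) (-F) where
  radius_pos := h.radius_pos
  radius_le := h.radius_le
  const_nonneg := h.const_nonneg
  continuousOn := h.continuousOn.neg
  abs_hasLap_sub_le x hx := by
    obtain ⟨L, hLF, hL⟩ := h.abs_hasLap_sub_le x hx
    refine ⟨-L, ?_, hL.neg⟩
    rwa [peval_neg, ← neg_sub', abs_neg]
  abs_le_rpow x hx := (abs_neg _).trans_le (h.abs_le_rpow x hx)

theorem rescaled_mul_sq_le (h : IsConeSolution ρ κ e K u F) (hκ : 0 ≤ κ) (he : 0 ≤ e)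
    {y : En n} {s t c B : ℝ} (hs : 0 < s) (ht : 0 < t) (htρ : t ≤ ρ)
    (hsub : closedBall y s ⊆ normalCone 1 ∩ {x | c < peval (homogeneousComponent j F) x})
    (hB : ∀ z : En n, ‖z‖ ≤ 1 →
      |peval F (t • z) - t ^ j * peval (homogeneousComponent j F) z| ≤ B * t ^ (j + 1)) :
    (c - B * t ^ (1 : ℝ) - K * t ^ (e - j)) * s ^ 2 ≤ 4 * n * (K * t ^ (κ - (j + 2 : ℕ))) := by
  have hK := h.const_nonneg
  have hrescale (z : En n) (hz : z ∈ closedBall (t • y) (t * s)) : ∃ z' ∈ closedBall y s,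
      t • z' = z := by
    rwa [← mem_smul_set, smul_closedBall t y hs.le, Real.norm_of_nonneg ht.le]
  have hmem (z : En n) (hz : z ∈ closedBall y s) : t • z ∈ normalCone ρ :=
    smul_mem_normalCone (hsub hz).1 ht htρ
  have hnorm (z : En n) (hz : z ∈ closedBall y s) : ‖t • z‖ ≤ t :=
    norm_smul_le_of_mem_normalCone (hsub hz).1 ht
  have hball := mul_sq_le_of_le_hasLap (u := u) (z := t • y) (s := t * s)
    (c := t ^ j * c - B * t ^ (j + 1) - K * t ^ e) (η := K * t ^ κ) (by positivity)
    (h.continuousOn.mono fun z hz => by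
      obtain ⟨z', hz', rfl⟩ := hrescale z hz
      exact hmem z' hz')
    (fun z hz => by
      obtain ⟨z', hz', rfl⟩ := hrescale z (ball_subset_closedBall hz)
      obtain ⟨L, hLF, hL⟩ := h.abs_hasLap_sub_le _ (hmem z' hz')
      refine ⟨L, ?_, hL⟩
      have hlead : t ^ j * c ≤ t ^ j * peval (homogeneousComponent j F) z' :=
        mul_le_mul_of_nonneg_left (hsub hz').2.le (by positivity)
      have herr : K * ‖t • z'‖ ^ e ≤ K * t ^ e := by
        gcongr
        exact hnorm z' hz'
      linarith [(abs_le.1 hLF).1, (abs_le.1 (hB z' (hsub hz').1.1.le)).1])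
    (fun z hz => by
      obtain ⟨z', hz', rfl⟩ := hrescale z hz
      refine (h.abs_le_rpow _ (hmem z' hz')).trans ?_
      gcongr
      exact hnorm z' hz')
  refine le_of_mul_le_mul_left ?_ (by positivity : 0 < t ^ (j + 2))
  rw [rpow_eq_rpow_sub_mul_pow ht e j, rpow_eq_rpow_sub_mul_pow ht κ (j + 2)] at hball
  rw [Real.rpow_one]
  generalize t ^ (e - j) = te, t ^ (κ - (j + 2 : ℕ)) = tκ at hball ⊢
  linear_combination hball

theorem peval_homogeneousComponent_nonpos (h : IsConeSolution ρ κ e K u F) (hκ : j + 2 < κ)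
    (he : j < e) (hF : F ∈ idealOfVars (Fin n) ℝ ^ j) {y : En n} (hy : y ∈ normalCone 1) :
    peval (homogeneousComponent j F) y ≤ 0 := by
  by_contra! hpos
  set lead := peval (homogeneousComponent j F) y
  obtain ⟨B, -, hB⟩ := exists_abs_peval_smul_sub_le hF
  have hopen : IsOpen (normalCone 1 ∩ {x : En n | lead / 2 < peval (homogeneousComponent j F) x}) :=
    (isOpen_normalCone 1).inter (isOpen_lt continuous_const (continuous_peval _))
  obtain ⟨s, hs, hsub⟩ := nhds_basis_closedBall.mem_iff.1
    (hopen.mem_nhds (x := y) ⟨hy, half_lt_self hpos⟩)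
  have hleft : Tendsto (fun t : ℝ => (lead / 2 - B * t ^ (1 : ℝ) - K * t ^ (e - j)) * s ^ 2)
      (𝓝[>] 0) (𝓝 ((lead / 2 - 0 - 0) * s ^ 2)) :=
    ((tendsto_const_nhds.sub (tendsto_const_mul_rpow_nhdsGT_zero one_pos B)).sub
      (tendsto_const_mul_rpow_nhdsGT_zero (sub_pos.2 he) K)).mul_const _
  have hright : Tendsto (fun t : ℝ => 4 * n * (K * t ^ (κ - (j + 2 : ℕ)))) (𝓝[>] 0)
      (𝓝 (4 * n * 0)) :=
    (tendsto_const_mul_rpow_nhdsGT_zero (by push_cast; linarith) K).const_mul _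
  have hle := le_of_tendsto_of_tendsto hleft hright (by
    filter_upwards [Ioo_mem_nhdsGT h.radius_pos] with t ht
    have hj : (0 : ℝ) ≤ j := j.cast_nonneg
    exact h.rescaled_mul_sq_le (by linarith [hj]) (hj.trans he.le) hs ht.1 ht.2.le hsub
      fun z hz => hB t z ht.1 (ht.2.le.trans h.radius_le) hz)
  have hs2 : 0 < lead / 2 * s ^ 2 := by positivity
  linarith

theorem mem_pow_idealOfVars (h : IsConeSolution ρ κ e K u F) (hκ : j + 1 < κ) (he : j - 1 < e) :
    F ∈ idealOfVars (Fin n) ℝ ^ j := by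
  induction j with
  | zero => simp
  | succ j ih =>
    push_cast at hκ he
    have hF := ih (by linarith) (by linarith)
    refine mem_pow_succ_of_peval_homogeneousComponent_eq_zero hF fun y hy => le_antisymm
      (h.peval_homogeneousComponent_nonpos (by linarith) (by linarith) hF hy) ?_
    have hneg := h.neg.peval_homogeneousComponent_nonpos (j := j) (by linarith) (by linarith)
      (neg_mem hF) hy
    rwa [map_neg, peval_neg, neg_nonpos] at hneg

end IsConeSolution

/-! ### Polynomials near the boundary graph -/

section

variable [NeZero n] {j l m : ℕ} {M B R T α : ℝ} {x y : En n} {p q Q : RealPoly n}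

theorem abs_prod_pow_sub_prod_pow_le (hx : ∀ i, |x i| ≤ R) (hy : |xn y| ≤ R)
    (hxy : ∀ i, i ≠ lastIdx n → y i = x i) (d : Fin n →₀ ℕ) :
    |∏ i, x i ^ d i - ∏ i, y i ^ d i| ≤ mdeg d * R ^ (mdeg d - 1) * |xn x - xn y| := by
  have hR : 0 ≤ R := (abs_nonneg _).trans hy
  set a := d (lastIdx n)
  set b := ∑ i ∈ Finset.univ.erase (lastIdx n), d i with hb
  have hab : mdeg d = a + b := by
    rw [mdeg_eq_degree, Finsupp.degree_eq_sum, Finset.add_sum_erase _ _ (Finset.mem_univ _)]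
  have hrest : |∏ i ∈ Finset.univ.erase (lastIdx n), x i ^ d i| ≤ R ^ b := by
    rw [hb, Finset.abs_prod, ← Finset.prod_pow_eq_pow_sum]
    refine Finset.prod_le_prod (fun i _ => abs_nonneg _) fun i _ => ?_
    rw [abs_pow]
    exact pow_le_pow_left₀ (abs_nonneg _) (hx i) _
  have hlast : |xn x ^ a - xn y ^ a| ≤ |xn x - xn y| * a * R ^ (a - 1) :=
    (abs_pow_sub_pow_le _ _ a).trans (by gcongr; exact max_le (hx _) hy)
  have hsame : ∏ i ∈ Finset.univ.erase (lastIdx n), y i ^ d i =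
      ∏ i ∈ Finset.univ.erase (lastIdx n), x i ^ d i :=
    Finset.prod_congr rfl fun i hi => by rw [hxy i (Finset.ne_of_mem_erase hi)]
  rw [← Finset.mul_prod_erase _ (fun i => x i ^ d i) (Finset.mem_univ (lastIdx n)),
    ← Finset.mul_prod_erase _ (fun i => y i ^ d i) (Finset.mem_univ (lastIdx n)), hsame, ← sub_mul,
    abs_mul]
  refine (mul_le_mul hlast hrest (abs_nonneg _) (by positivity)).trans ?_
  rcases Nat.eq_zero_or_pos a with ha0 | hapos
  · simp only [ha0, Nat.cast_zero, mul_zero, zero_mul]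
    positivity
  calc |xn x - xn y| * a * R ^ (a - 1) * R ^ b = a * R ^ (mdeg d - 1) * |xn x - xn y| := by
        rw [show mdeg d - 1 = (a - 1) + b by omega, pow_add]
        ring
    _ ≤ mdeg d * R ^ (mdeg d - 1) * |xn x - xn y| := by
        gcongr
        omega

theorem IsControlled.abs_peval_sub_le (hp : IsControlled (j + 1) m B p) (hT : 1 ≤ T)
    (hx : ‖x‖ ≤ 1) (hxy : ∀ i, i ≠ lastIdx n → y i = x i) (hy : |xn y| ≤ T * ‖x‖) :
    |peval p x - peval p y| ≤
      (multiIndices n m).card * (B * (m * (T ^ m * ‖x‖ ^ j) * |xn x - xn y|)) := by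
  have hB := hp.nonneg
  have hsupport := support_subset_multiIndices hp.totalDegree_le
  rw [peval_eq_sum_of_support_subset p x hsupport, peval_eq_sum_of_support_subset p y hsupport,
    ← Finset.sum_sub_distrib]
  refine (Finset.abs_sum_le_sum_abs _ _).trans ?_
  rw [← nsmul_eq_mul]
  refine Finset.sum_le_card_nsmul _ _ _ fun d hd => ?_
  rw [mem_multiIndices] at hd
  rw [← mul_sub, abs_mul]
  rcases lt_or_ge (mdeg d) (j + 1) with hdj | hdj
  · rw [mem_pow_idealOfVars.1 hp.mem_pow d hdj, abs_zero, zero_mul]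
    positivity
  have hxT (i : Fin n) : |x i| ≤ T * ‖x‖ :=
    (PiLp.norm_apply_le x i).trans (le_mul_of_one_le_left (norm_nonneg x) hT)
  have hpow : (T * ‖x‖) ^ (mdeg d - 1) ≤ T ^ m * ‖x‖ ^ j := by
    rw [mul_pow]
    exact mul_le_mul (pow_le_pow_right₀ hT (by omega))
      (pow_le_pow_of_le_one (norm_nonneg _) hx (by omega)) (by positivity) (by positivity)
  refine mul_le_mul (hp.abs_coeff_le d) ?_ (abs_nonneg _) hB
  exact (abs_prod_pow_sub_prod_pow_le hxT hy hxy d).trans (by gcongr)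

theorem totalDegree_substLast_le (hl : 1 ≤ l) (hq : q.totalDegree ≤ l) (hp : p.totalDegree ≤ m) :
    (substLast q p).totalDegree ≤ m * l := by
  conv_lhs => rw [p.as_sum, substLast_sum]
  refine totalDegree_finsetSum_le fun d hd => ?_
  rw [substLast_monomial]
  calc (C (coeff d p) * ∏ i, (if i = lastIdx n then q else X i) ^ d i).totalDegree
      ≤ ∑ i, ((if i = lastIdx n then q else X i) ^ d i).totalDegree := by
        refine (totalDegree_mul _ _).trans ?_
        rw [totalDegree_C, zero_add]
        exact totalDegree_finsetProd _ _
    _ ≤ ∑ i, d i * l := by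
        refine Finset.sum_le_sum fun i _ => (totalDegree_pow _ _).trans (Nat.mul_le_mul_left _ ?_)
        split_ifs
        · exact hq
        · rwa [totalDegree_X]
    _ = mdeg d * l := by rw [← Finset.sum_mul, mdeg_eq_degree, Finsupp.degree_eq_sum]
    _ ≤ m * l := Nat.mul_le_mul_right _ (mem_multiIndices.1 (support_subset_multiIndices hp hd))

theorem isControlled_substLast_of_graphTrace_eq_zero (hM : 1 ≤ M) (hQ : IsBoundaryGraph M Q)
    (hl : 1 ≤ l) (hQl : Q.totalDegree ≤ l) (hp : IsControlled j m B p)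
    (htrace : graphTrace m Q p = 0) :
    IsControlled (m + 1) (m * l) (graphTraceConst n (m * l) M * B) (substLast Q p) := by
  have hdeg := totalDegree_substLast_le hl hQl hp.totalDegree_le
  refine ⟨mem_pow_idealOfVars.2 fun d hd => ?_, hdeg, fun d => ?_⟩
  · have hcoeff := congrArg (coeff d) htrace
    rwa [graphTrace, coeff_truncDegree, if_pos hd, coeff_zero] at hcoeff
  · rcases le_or_gt (mdeg d) (m * l) with hd | hd
    · exact abs_coeff_substLast_le hM hQ.abs_coeff_le
        (hp.totalDegree_le.trans (Nat.le_mul_of_pos_right _ hl)) hp.abs_coeff_le hd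
    · rw [totalDegree_le_iff_coeff_eq_zero.1 hdeg d hd, abs_zero]
      exact mul_nonneg (graphTraceConst_nonneg n _ (zero_le_one.trans hM)) hp.nonneg

-- Move vertically from `x` to the graph, where `p` vanishes to order `m + 1`; the vertical step has
-- length `O(|x| ^ (l + α))` and `∂_n p = O(|x| ^ j)`.
theorem exists_abs_peval_le_of_graphTrace_eq_zero (n : ℕ) [NeZero n] {j l m : ℕ} (hl : 1 ≤ l)
    (hm : j + l = m) (hα1 : α ≤ 1) (hM : 1 ≤ M) :
    ∃ C : ℝ, 0 ≤ C ∧ ∀ (Q p : RealPoly n) (B : ℝ), IsBoundaryGraph M Q → Q.totalDegree ≤ l →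
      IsControlled (j + 1) m B p → graphTrace m Q p = 0 → ∀ x : En n, ‖x‖ < 1 →
      |xn x - peval Q x| ≤ M * ‖x‖ ^ ((l : ℝ) + α) → |peval p x| ≤ C * B * ‖x‖ ^ ((m : ℝ) + α) := by
  set T : ℝ := 1 + (multiIndices n l).card * M with hT
  have hT1 : 1 ≤ T := le_add_of_nonneg_right (by positivity)
  have hconst := graphTraceConst_nonneg n (m * l) (zero_le_one.trans hM)
  refine ⟨(multiIndices n m).card * (m * T ^ m * M) +
    (multiIndices n (m * l)).card * graphTraceConst n (m * l) M, by positivity, ?_⟩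
  intro Q p B hQ hQl hp htrace x hx hxQ
  have hB := hp.nonneg
  set y : En n := WithLp.toLp 2 (Function.update x.ofLp (lastIdx n) (peval Q x))
  have hxy (i : Fin n) (hi : i ≠ lastIdx n) : y i = x i := Function.update_of_ne hi _ _
  have hyn : xn y = peval Q x := Function.update_self _ _ _
  have hyT : |xn y| ≤ T * ‖x‖ := by
    have hQx := IsControlled.abs_peval_le ⟨hQ.mem_sq, hQl, hQ.abs_coeff_le⟩ hx.le
    have hsq : ‖x‖ ^ 2 ≤ ‖x‖ := pow_le_of_le_one (norm_nonneg _) hx.le two_ne_zero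
    rw [hyn]
    exact hQx.trans (mul_le_mul (by linarith) hsq (by positivity) (by positivity))
  have hvertical := hp.abs_peval_sub_le hT1 hx.le hxy hyT
  have hgraph :=
    (isControlled_substLast_of_graphTrace_eq_zero hM hQ hl hQl hp htrace).abs_peval_le hx.le
  rw [peval_substLast hyn hxy] at hgraph
  rw [hyn] at hvertical
  rcases (norm_nonneg x).eq_or_lt with hx0 | hx0
  · rw [norm_eq_zero.1 hx0.symm, ← coeff_zero_eq_peval_zero,
      mem_pow_idealOfVars.1 hp.mem_pow 0 (by simp [mdeg_eq_degree]), abs_zero]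
    positivity
  have hsplit : ‖x‖ ^ j * ‖x‖ ^ ((l : ℝ) + α) = ‖x‖ ^ ((m : ℝ) + α) := by
    rw [← Real.rpow_natCast, ← Real.rpow_add hx0, ← hm]
    push_cast
    rw [add_assoc]
  have hpow : ‖x‖ ^ (m + 1) ≤ ‖x‖ ^ ((m : ℝ) + α) := by
    rw [← Real.rpow_natCast]
    exact Real.rpow_le_rpow_of_exponent_ge hx0 hx.le (by push_cast; linarith)
  calc |peval p x| = |(peval p x - peval p y) + peval p y| := by rw [sub_add_cancel]
    _ ≤ (multiIndices n m).card * (B * (m * (T ^ m * ‖x‖ ^ j) * (M * ‖x‖ ^ ((l : ℝ) + α)))) +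
        (multiIndices n (m * l)).card * (graphTraceConst n (m * l) M * B) *
          ‖x‖ ^ ((m : ℝ) + α) :=
        (abs_add_le _ _).trans (add_le_add (hvertical.trans (by gcongr)) (hgraph.trans (by gcongr)))
    _ = _ := by
        rw [← hsplit]
        ring

end

/-! ### Improving the order of approximation -/

/-- The hypotheses of the theorem in normalised form, with `N = k + l - 2`: `u` solves
`Δu = F + O(|x| ^ (N + α))` in `Ω ∩ B₁` with boundary values `G + O(|x| ^ (N + 2 + α))`, the
boundary is the graph of `Q` up to `O(|x| ^ (l + α))`, and all data are of size `D`. The bound on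
`u` of order `k + α` is the only one whose constant is not controlled by `D`. -/
structure DirichletProblem [NeZero n] (k l N : ℕ) (α M : ℝ) (Ω : Set (En n)) (u : En n → ℝ)
    (F G Q : RealPoly n) (D : ℝ) : Prop where
  isOpen : IsOpen Ω
  zero_notMem : (0 : En n) ∉ Ω
  bound_pos : 0 < D
  isBoundaryGraph : IsBoundaryGraph M Q
  totalDegree_graph_le : Q.totalDegree ≤ l
  abs_xn_sub_le : ∀ x ∈ frontier Ω, ‖x‖ < 1 → |xn x - peval Q x| ≤ M * ‖x‖ ^ ((l : ℝ) + α)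
  neg_le_xn : ∀ x ∈ Ω, ‖x‖ < 1 → -(M * ‖x‖ ^ (1 + α)) ≤ xn x
  mem_of_lt_xn : ∀ x : En n, ‖x‖ < 1 → M * ‖x‖ ^ (1 + α) < xn x → x ∈ Ω
  continuousOn : ContinuousOn u (closure Ω ∩ ball 0 1)
  abs_hasLap_sub_le : ∀ x ∈ Ω, ‖x‖ < 1 →
    ∃ L, |L - peval F x| ≤ D * ‖x‖ ^ ((N : ℝ) + α) ∧ HasLap u x L
  abs_sub_le_of_mem_frontier : ∀ x ∈ frontier Ω, ‖x‖ < 1 →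
    |u x - peval G x| ≤ D * ‖x‖ ^ ((N : ℝ) + 2 + α)
  isControlled_rhs : IsControlled (k - 1) N D F
  isControlled_boundary : IsControlled (k + 1) (N + 2) D G
  exists_abs_le_rpow : ∃ K : ℝ, 0 ≤ K ∧ ∀ x ∈ Ω, ‖x‖ < 1 → |u x| ≤ K * ‖x‖ ^ ((k : ℝ) + α)
  abs_le_bound : ∀ x ∈ Ω, ‖x‖ < 1 → |u x| ≤ D

/-- `P` solves the Dirichlet problem with data `F`, `G` on the graph of `Q` to order `N + 2`,
vanishes to order `k + 1`, and approximates `u` to order `β` with constant `B`. -/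
structure IsPolyApprox [NeZero n] (k N : ℕ) (Ω : Set (En n)) (u : En n → ℝ) (F G Q : RealPoly n)
    (B β : ℝ) (P : RealPoly n) : Prop where
  plap_eq : plap P = F
  graphTrace_eq : graphTrace (N + 2) Q P = graphTrace (N + 2) Q G
  isControlled : IsControlled (k + 1) (N + 2) B P
  abs_sub_le : ∀ x ∈ Ω, ‖x‖ < 1 → |u x - peval P x| ≤ B * ‖x‖ ^ β

/-- Solutions of `DirichletProblem` are approximated to order `β` by polynomials, with a constant
that depends on the data only through their size. -/
def HasApproxOrder (n : ℕ) [NeZero n] (k l N : ℕ) (α M β : ℝ) : Prop :=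
  ∃ C : ℝ, 0 < C ∧ ∀ (Ω : Set (En n)) (u : En n → ℝ) (F G Q : RealPoly n) (D : ℝ),
    DirichletProblem k l N α M Ω u F G Q D → ∃ P, IsPolyApprox k N Ω u F G Q (C * D) β P

theorem norm_rpow_le_norm_rpow_of_mem {Ω : Set (En n)} (h0 : (0 : En n) ∉ Ω) {x : En n}
    (hx : x ∈ Ω) (hx1 : ‖x‖ < 1) {β γ : ℝ} (hβγ : β ≤ γ) : ‖x‖ ^ γ ≤ ‖x‖ ^ β :=
  Real.rpow_le_rpow_of_exponent_ge (norm_pos_iff.2 fun hx0 => h0 (hx0 ▸ hx)) hx1.le hβγ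

theorem norm_pow_le_norm_rpow_of_mem {Ω : Set (En n)} (h0 : (0 : En n) ∉ Ω) {x : En n}
    (hx : x ∈ Ω) (hx1 : ‖x‖ < 1) {β : ℝ} {m : ℕ} (hβm : β ≤ m) : ‖x‖ ^ m ≤ ‖x‖ ^ β := by
  rw [← Real.rpow_natCast]
  exact norm_rpow_le_norm_rpow_of_mem h0 hx hx1 hβm

theorem exists_normalCone_subset [NeZero n] {Ω : Set (En n)} {α M : ℝ} (hα : 0 < α) (hM : 1 ≤ M)
    (hΩ : ∀ x : En n, ‖x‖ < 1 → M * ‖x‖ ^ (1 + α) < xn x → x ∈ Ω) :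
    ∃ ρ : ℝ, 0 < ρ ∧ ρ ≤ 1 ∧ normalCone ρ ⊆ Ω := by
  have hpos : (0 : ℝ) < 1 / (2 * M) := by positivity
  have hle : 1 / (2 * M) ≤ 1 := by
    rw [div_le_one (by positivity)]
    linarith
  have hρ : (1 / (2 * M)) ^ (1 / α) ≤ 1 := Real.rpow_le_one hpos.le hle (by positivity)
  refine ⟨(1 / (2 * M)) ^ (1 / α), by positivity, hρ, fun x hx => ?_⟩
  refine hΩ x (hx.1.trans_le hρ) (lt_of_le_of_lt ?_ hx.2)
  have hxα : ‖x‖ ^ α ≤ 1 / (2 * M) := by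
    have hpow := Real.rpow_le_rpow (norm_nonneg x) hx.1.le hα.le
    rwa [← Real.rpow_mul hpos.le, one_div_mul_cancel hα.ne', Real.rpow_one] at hpow
  calc M * ‖x‖ ^ (1 + α) = ‖x‖ * (M * ‖x‖ ^ α) := by
        rw [Real.rpow_add_of_nonneg (norm_nonneg x) zero_le_one hα.le, Real.rpow_one]
        ring
    _ ≤ ‖x‖ * (M * (1 / (2 * M))) := by gcongr
    _ = ‖x‖ / 2 := by field_simp

section DirichletProblem

variable [NeZero n] {k l N m : ℕ} {α M β γ A B C D : ℝ} {Ω : Set (En n)} {u : En n → ℝ}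
  {F G Q P a : RealPoly n}

theorem DirichletProblem.mem_pow_of_abs_peval_le (h : DirichletProblem k l N α M Ω u F G Q D)
    (hα : 0 < α) (hM : 1 ≤ M) (ha : ∀ x ∈ Ω, ‖x‖ < 1 → |peval a x| ≤ A * ‖x‖ ^ β)
    (hm : m < β + 1) : a ∈ idealOfVars (Fin n) ℝ ^ m := by
  obtain ⟨ρ, hρ, hρ1, hcone⟩ := exists_normalCone_subset hα hM h.mem_of_lt_xn
  exact _root_.mem_pow_of_abs_peval_le hρ
    (fun x hx => ha x (hcone hx) (hx.1.trans_le hρ1)) hm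

theorem DirichletProblem.mem_pow_of_abs_sub_le (h : DirichletProblem k l N α M Ω u F G Q D)
    (hα : 0 < α) (hM : 1 ≤ M) (hA : 0 ≤ A) (hβγ : β ≤ γ) (hm : m < β + 1)
    (hP : IsPolyApprox k N Ω u F G Q B β P)
    (ha : ∀ x ∈ Ω, ‖x‖ < 1 → |u x - peval P x - peval a x| ≤ A * ‖x‖ ^ γ) :
    a ∈ idealOfVars (Fin n) ℝ ^ m := by
  refine h.mem_pow_of_abs_peval_le hα hM (A := B + A) (fun x hx hx1 => ?_) hm
  have hpow := norm_rpow_le_norm_rpow_of_mem h.zero_notMem hx hx1 hβγ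
  calc |peval a x| = |(u x - peval P x) - (u x - peval P x - peval a x)| := by rw [sub_sub_cancel]
    _ ≤ B * ‖x‖ ^ β + A * ‖x‖ ^ β :=
        (abs_sub _ _).trans (add_le_add (hP.abs_sub_le x hx hx1)
          ((ha x hx hx1).trans (mul_le_mul_of_nonneg_left hpow hA)))
    _ = (B + A) * ‖x‖ ^ β := by ring

theorem DirichletProblem.eq_zero_of_abs_sub_le (h : DirichletProblem k l N α M Ω u F G Q D)
    (hα : 0 < α) (hα1 : α ≤ 1) (hM : 1 ≤ M) (hA : 0 ≤ A) (hmk : m ≤ k) (hmγ : m < γ)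
    (hP : IsPolyApprox k N Ω u F G Q B β P) (hdeg : a.totalDegree ≤ m)
    (ha : ∀ x ∈ Ω, ‖x‖ < 1 → |u x - peval P x - peval a x| ≤ A * ‖x‖ ^ γ) : a = 0 := by
  obtain ⟨K, hK, hu⟩ := h.exists_abs_le_rpow
  have hB := hP.isControlled.nonneg
  set τ := min γ ((k : ℝ) + α) with hτ
  have hmτ : (m : ℝ) < τ := lt_min hmγ (by
    have : (m : ℝ) ≤ k := by exact_mod_cast hmk
    linarith)
  refine eq_zero_of_mem_pow_idealOfVars (j := m + 1) (h.mem_pow_of_abs_peval_le hα hM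
    (A := K + (multiIndices n (N + 2)).card * B + A) (β := τ) (fun x hx hx1 => ?_)
    (by push_cast; linarith)) (by omega)
  have hrpow {e : ℝ} (he : τ ≤ e) := norm_rpow_le_norm_rpow_of_mem h.zero_notMem hx hx1 he
  have hτk : τ ≤ (k + 1 : ℕ) := (min_le_right _ _).trans (by push_cast; linarith)
  have hux := (hu x hx hx1).trans (mul_le_mul_of_nonneg_left (hrpow (min_le_right _ _)) hK)
  have hPx := (hP.isControlled.abs_peval_le hx1.le).trans (mul_le_mul_of_nonneg_left
    (norm_pow_le_norm_rpow_of_mem h.zero_notMem hx hx1 hτk) (by positivity))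
  have hax := (ha x hx hx1).trans (mul_le_mul_of_nonneg_left (hrpow (min_le_left _ _)) hA)
  calc |peval a x| = |(u x - peval P x) - (u x - peval P x - peval a x)| := by rw [sub_sub_cancel]
    _ ≤ K * ‖x‖ ^ τ + (multiIndices n (N + 2)).card * B * ‖x‖ ^ τ + A * ‖x‖ ^ τ :=
        (abs_sub _ _).trans (add_le_add ((abs_sub _ _).trans (add_le_add hux hPx)) hax)
    _ = (K + (multiIndices n (N + 2)).card * B + A) * ‖x‖ ^ τ := by ring

theorem exists_tangentProblem (n : ℕ) [NeZero n] (hl : 1 ≤ l) (hN : k + l = N + 2)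
    (hα1 : α ≤ 1) (hM : 1 ≤ M) (hC : 0 < C) :
    ∃ C' : ℝ, 0 < C' ∧ ∀ (Ω : Set (En n)) (u : En n → ℝ) (F G Q P : RealPoly n) (D β : ℝ),
      DirichletProblem k l N α M Ω u F G Q D → IsPolyApprox k N Ω u F G Q (C * D) β P →
      TangentProblem Ω (fun x => u x - peval P x) (C' * D) β ((N : ℝ) + 2 + α) α M := by
  obtain ⟨Cb, hCb, hboundary⟩ := exists_abs_peval_le_of_graphTrace_eq_zero n hl hN hα1 hM
  refine ⟨C + 1 + Cb * (1 + C), by positivity, fun Ω u F G Q P D β h hP => ?_⟩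
  have hD := h.bound_pos
  have hCD : 0 < C * D := by positivity
  have hCbD : 0 ≤ Cb * (1 + C) * D := by positivity
  refine ⟨h.isOpen, h.zero_notMem, by positivity, by positivity, h.neg_le_xn, h.mem_of_lt_xn,
    h.continuousOn.sub (continuous_peval P).continuousOn, fun x hx hx1 => ?_, fun x hx hx1 => ?_,
    fun x hx hx1 => ?_⟩
  · obtain ⟨L, hLF, hL⟩ := h.abs_hasLap_sub_le x hx hx1
    refine ⟨L - peval F x, hLF.trans ?_, hP.plap_eq ▸ hL.sub (hasLap_peval P x)⟩
    rw [show (N : ℝ) + 2 + α - 2 = N + α by ring]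
    gcongr
    linarith
  · have hGP : |peval (G - P) x| ≤ _ := hboundary Q (G - P) _ h.isBoundaryGraph
      h.totalDegree_graph_le (h.isControlled_boundary.sub hP.isControlled)
      (by rw [graphTrace_sub, hP.graphTrace_eq, sub_self]) x hx1 (h.abs_xn_sub_le x hx hx1)
    rw [peval_sub, Nat.cast_add, Nat.cast_ofNat] at hGP
    have htriangle := abs_add_le (u x - peval G x) (peval G x - peval P x)
    rw [sub_add_sub_cancel] at htriangle
    have hrest : 0 ≤ C * D * ‖x‖ ^ ((N : ℝ) + 2 + α) := by positivity
    linarith [h.abs_sub_le_of_mem_frontier x hx hx1]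
  · have hCbC : 0 ≤ Cb * (1 + C) := by positivity
    refine (hP.abs_sub_le x hx hx1).trans ?_
    gcongr
    linarith

-- The trace of the odd polynomial `a` on the graph vanishes to order `m + 1`, so removing it costs
-- a harmonic polynomial of order `m + 1 ≥ γ` only.
theorem exists_isPolyApprox_of_odd_harmonic (n N : ℕ) [NeZero n] (hM : 1 ≤ M) :
    ∃ C : ℝ, 0 < C ∧ ∀ (k m : ℕ) (Ω : Set (En n)) (u : En n → ℝ) (F G Q P a : RealPoly n)
      (A B β γ : ℝ), (0 : En n) ∉ Ω → IsBoundaryGraph M Q → k < m → γ ≤ m + 1 →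
      IsPolyApprox k N Ω u F G Q B β P → plap a = 0 → IsOddLast a →
      IsControlled m (N + 2) A a →
      (∀ x ∈ Ω, ‖x‖ < 1 → |u x - peval P x - peval a x| ≤ A * ‖x‖ ^ γ) →
      ∃ P', IsPolyApprox k N Ω u F G Q (B + C * A) γ P' := by
  obtain ⟨C, hC, hsolve⟩ := exists_harmonic_graphTrace_eq n N hM (N + 3)
  have ht := graphTraceConst_nonneg n (N + 2) (zero_le_one.trans hM)
  set CE := C * graphTraceConst n (N + 2) M with hCE
  refine ⟨1 + CE + (multiIndices n (N + 2)).card * CE, by positivity, ?_⟩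
  intro k m Ω u F G Q P a A B β γ h0 hQ hkm hγm hP ha hodd hac happrox
  have hA := hac.nonneg
  have hB := hP.isControlled.nonneg
  have hCEA : 0 ≤ (multiIndices n (N + 2)).card * CE * A := by positivity
  have htrace := hac.graphTrace_of_mem hM hQ (substLast_mem_succ hQ.mem_sq hac.mem_pow
    fun d hd => hodd d (hd ▸ Even.zero))
  obtain ⟨E, hE, hEc, hEtrace⟩ := hsolve (m + 1) Q (graphTrace (N + 2) Q a) _ (by omega) hQ
    (pderiv_graphTrace_eq_zero hQ.pderiv_last _ _) htrace
  rw [← mul_assoc, ← hCE] at hEc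
  refine ⟨P + a - E, ?_, ?_, ?_, fun x hx hx1 => ?_⟩
  · rw [plap_sub, plap_add, hP.plap_eq, ha, hE, add_zero, sub_zero]
  · rw [graphTrace_sub, graphTrace_add, hEtrace, hP.graphTrace_eq, add_sub_cancel_right]
  · exact ((hP.isControlled.add (hac.mono hkm le_rfl)).sub (hEc.mono (by omega) le_rfl)).mono le_rfl
      (by linarith)
  · have hEx := (hEc.abs_peval_le hx1.le).trans (mul_le_mul_of_nonneg_left
      (norm_pow_le_norm_rpow_of_mem h0 hx hx1 (β := γ) (by push_cast; exact hγm)) (by positivity))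
    rw [peval_sub, peval_add, show u x - (peval P x + peval a x - peval E x) =
      u x - peval P x - peval a x + peval E x by ring]
    refine (abs_add_le _ _).trans ((add_le_add (happrox x hx hx1) hEx).trans ?_)
    have hrest : 0 ≤ (B + CE * A) * ‖x‖ ^ γ := by positivity
    linarith

end DirichletProblem

section HasApproxOrder

variable [NeZero n] {k l N m : ℕ} {α M β γ B B' : ℝ} {Ω : Set (En n)} {u : En n → ℝ}
  {F G Q P : RealPoly n}

theorem HasApproxOrder.zero (n k l N : ℕ) [NeZero n] (α : ℝ) (hM : 1 ≤ M) :
    HasApproxOrder n k l N α M 0 := by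
  obtain ⟨C, hC, hsolve⟩ := exists_plap_eq_graphTrace_eq n N hM
  refine ⟨C + (1 + (multiIndices n (N + 2)).card * C), by positivity, ?_⟩
  intro Ω u F G Q D h
  have hD := h.bound_pos
  have hCD : 0 ≤ C * D := by positivity
  have hcardD : 0 ≤ (multiIndices n (N + 2)).card * (C * D) := by positivity
  obtain ⟨P, hPF, hPc, hPG⟩ := hsolve (k + 1) Q F G D h.isBoundaryGraph
    (h.isControlled_rhs.mono (by omega) le_rfl) h.isControlled_boundary
  refine ⟨P, hPF, hPG, hPc.mono le_rfl (by linarith), fun x hx hx1 => ?_⟩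
  have hPx := (hPc.abs_peval_le hx1.le).trans
    (mul_le_of_le_one_right hcardD (pow_le_one₀ (norm_nonneg x) hx1.le))
  rw [Real.rpow_zero, mul_one]
  linarith [abs_sub (u x) (peval P x), h.abs_le_bound x hx hx1]

theorem HasApproxOrder.mono (h : HasApproxOrder n k l N α M γ) (hβγ : β ≤ γ) :
    HasApproxOrder n k l N α M β := by
  obtain ⟨C, hC, happrox⟩ := h
  refine ⟨C, hC, fun Ω u F G Q D hD => ?_⟩
  obtain ⟨P, hP⟩ := happrox Ω u F G Q D hD
  refine ⟨P, hP.plap_eq, hP.graphTrace_eq, hP.isControlled, fun x hx hx1 => ?_⟩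
  exact (hP.abs_sub_le x hx hx1).trans (mul_le_mul_of_nonneg_left
    (norm_rpow_le_norm_rpow_of_mem hD.zero_notMem hx hx1 hβγ) hP.isControlled.nonneg)

theorem IsPolyApprox.of_le (hP : IsPolyApprox k N Ω u F G Q B β P) (hBB' : B ≤ B')
    (hu : ∀ x ∈ Ω, ‖x‖ < 1 → |u x - peval P x| ≤ B' * ‖x‖ ^ γ) :
    IsPolyApprox k N Ω u F G Q B' γ P :=
  ⟨hP.plap_eq, hP.graphTrace_eq, hP.isControlled.mono le_rfl hBB', hu⟩

theorem HasApproxOrder.step (hl : 1 ≤ l) (hN : k + l = N + 2) (hα : 0 < α) (hα1 : α ≤ 1)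
    (hM : 1 ≤ M) (h : HasApproxOrder n k l N α M β) (hβ : 0 ≤ β) (hβγ : β ≤ γ)
    (hγN : γ ≤ (N : ℝ) + 2 + α) (hγα : γ ≤ β + α) (hmγ : m < γ) (hγm : γ < m + 1) :
    HasApproxOrder n k l N α M γ := by
  obtain ⟨C, hC, happrox⟩ := h
  obtain ⟨C₁, hC₁, htangent⟩ := exists_tangentProblem n hl hN hα1 hM hC
  obtain ⟨C₂, hC₂, hharmonic⟩ := TangentProblem.exists_harmonic_approx n hα.le hα1 hβ
    (by linarith [(Nat.cast_nonneg N : (0 : ℝ) ≤ N)]) hγN hγα (zero_lt_one.trans_le hM) hmγ hγm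
  obtain ⟨C₃, hC₃, hcorrect⟩ := exists_isPolyApprox_of_odd_harmonic n N hM
  have hmN : m ≤ N + 2 := by
    have hlt : (m : ℝ) < (N + 3 : ℕ) := by
      push_cast
      linarith
    have : m < N + 3 := by exact_mod_cast hlt
    omega
  refine ⟨C + (1 + C₃) * (C₂ * C₁), by positivity, fun Ω u F G Q D hD => ?_⟩
  have hD0 := hD.bound_pos
  obtain ⟨P, hP⟩ := happrox Ω u F G Q D hD
  obtain ⟨a, ha, hodd, hdeg, hcoeff, hau⟩ := hharmonic Ω _ _ (htangent Ω u F G Q P D β hD hP)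
  have hC₃A : 0 ≤ C₃ * (C₂ * (C₁ * D)) := by positivity
  have hCD : 0 ≤ C * D := by positivity
  have hA : 0 ≤ C₂ * (C₁ * D) := by positivity
  rcases le_or_gt m k with hmk | hkm
  · have ha0 : a = 0 := hD.eq_zero_of_abs_sub_le hα hα1 hM hA hmk hmγ hP hdeg hau
    refine ⟨P, hP.of_le (by linarith) fun x hx hx1 => ?_⟩
    have hux := hau x hx hx1
    rw [ha0, peval_zero, sub_zero] at hux
    exact hux.trans (mul_le_mul_of_nonneg_right (by linarith) (by positivity))
  · have hpow := hD.mem_pow_of_abs_sub_le hα hM hA hβγ (m := m) (by linarith) hP hau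
    obtain ⟨P', hP'⟩ := hcorrect k m Ω u F G Q P a _ _ β γ hD.zero_notMem hD.isBoundaryGraph hkm
      hγm.le hP ha hodd ⟨hpow, hdeg.trans hmN, hcoeff⟩ hau
    refine ⟨P', hP'.of_le (by linarith) fun x hx hx1 => (hP'.abs_sub_le x hx hx1).trans ?_⟩
    exact mul_le_mul_of_nonneg_right (by linarith) (by positivity)

-- The harmonic approximation needs orders that are not integers.
theorem exists_mem_Icc_natCast_lt_lt_add_one (hβ : 0 ≤ β) (hα : 0 < α) (hα1 : α < 1) :
    ∃ γ ∈ Icc (β + α / 2) (β + α), ∃ m : ℕ, m < γ ∧ γ < m + 1 := by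
  have hfloor := Nat.floor_le (by positivity : 0 ≤ β + α / 2)
  have hlt := Nat.lt_floor_add_one (β + α / 2)
  rcases hfloor.eq_or_lt with heq | hgt
  · exact ⟨β + α, ⟨by linarith, le_rfl⟩, ⌊β + α / 2⌋₊, by linarith, by linarith⟩
  · exact ⟨β + α / 2, ⟨le_rfl, by linarith⟩, ⌊β + α / 2⌋₊, hgt, hlt⟩

theorem HasApproxOrder.min_add (hl : 1 ≤ l) (hN : k + l = N + 2) (hα : 0 < α) (hα1 : α < 1)
    (hM : 1 ≤ M) (hβ : 0 ≤ β) (hβN : β ≤ (N : ℝ) + 2 + α) (h : HasApproxOrder n k l N α M β) :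
    HasApproxOrder n k l N α M (min ((N : ℝ) + 2 + α) (β + α / 2)) := by
  rcases le_or_gt ((N : ℝ) + 2 + α) (β + α) with hle | hgt
  · refine (h.step (γ := (N : ℝ) + 2 + α) (m := N + 2) hl hN hα hα1.le hM hβ hβN le_rfl hle
      ?_ ?_).mono (min_le_left _ _) <;> push_cast <;> linarith
  · obtain ⟨γ, ⟨hβγ, hγβ⟩, m, hmγ, hγm⟩ := exists_mem_Icc_natCast_lt_lt_add_one hβ hα hα1
    exact (h.step hl hN hα hα1.le hM hβ (by linarith) (by linarith) hγβ hmγ hγm).mono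
      ((min_le_right _ _).trans hβγ)

theorem hasApproxOrder (n : ℕ) [NeZero n] (hl : 1 ≤ l) (hN : k + l = N + 2) (hα : 0 < α)
    (hα1 : α < 1) (hM : 1 ≤ M) : HasApproxOrder n k l N α M ((N : ℝ) + 2 + α) := by
  have htop : (0 : ℝ) ≤ (N : ℝ) + 2 + α := by positivity
  have hiterate (i : ℕ) : HasApproxOrder n k l N α M (min ((N : ℝ) + 2 + α) (i * (α / 2))) := by
    induction i with
    | zero => exact (HasApproxOrder.zero n k l N α hM).mono (by simp)
    | succ i ih =>
      refine (ih.min_add hl hN hα hα1 hM (le_min htop (by positivity)) (min_le_left _ _)).mono ?_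
      rw [← min_add_add_right, ← min_assoc, Nat.cast_succ, add_one_mul]
      exact min_le_min_right _ (le_min le_rfl (by linarith))
  obtain ⟨i, hi⟩ := exists_nat_ge (((N : ℝ) + 2 + α) / (α / 2))
  exact (hiterate i).mono (le_min le_rfl ((div_le_iff₀ (by positivity)).1 hi))

end HasApproxOrder

/-! ### Reduction to normalised data -/

theorem one_le_mfact (d : Fin n →₀ ℕ) : (1 : ℝ) ≤ mfact d := by
  have hpos : 0 < mfact d := Finset.prod_pos fun i _ => Nat.factorial_pos _
  exact_mod_cast hpos

theorem pnorm_nonneg (P : RealPoly n) : 0 ≤ pnorm P :=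
  Finset.sum_nonneg fun d _ => by positivity

theorem abs_coeff_le_pnorm (P : RealPoly n) (d : Fin n →₀ ℕ) : |coeff d P| ≤ pnorm P := by
  by_cases hd : d ∈ P.support
  · exact (le_mul_of_one_le_left (abs_nonneg _) (one_le_mfact d)).trans
      (Finset.single_le_sum (f := fun d => (mfact d : ℝ) * |coeff d P|)
        (fun d _ => by positivity) hd)
  · rw [notMem_support_iff.1 hd, abs_zero]
    exact pnorm_nonneg P

theorem eq_zero_of_pnorm_eq_zero {P : RealPoly n} (h : pnorm P = 0) : P = 0 := by
  ext d
  simpa [h] using abs_coeff_le_pnorm P d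

theorem derivNorm_le_sum (i : ℕ) (P : RealPoly n) :
    derivNorm i P ≤ ∑ d ∈ P.support.filter (fun d => mdeg d = i), (mfact d : ℝ) * |coeff d P| := by
  refine Real.sqrt_le_iff.2 ⟨Finset.sum_nonneg fun d _ => by positivity, ?_⟩
  simpa [mul_pow] using Finset.sum_sq_le_sq_sum_of_nonneg
    (s := P.support.filter (fun d => mdeg d = i)) (f := fun d => (mfact d : ℝ) * |coeff d P|)
    fun d _ => by positivity

theorem sum_derivNorm_le_pnorm (s : Finset ℕ) (P : RealPoly n) :
    ∑ i ∈ s, derivNorm i P ≤ pnorm P :=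
  calc ∑ i ∈ s, derivNorm i P
      ≤ ∑ i ∈ s, ∑ d ∈ P.support.filter (fun d => mdeg d = i), (mfact d : ℝ) * |coeff d P| :=
        Finset.sum_le_sum fun i _ => derivNorm_le_sum i P
    _ = ∑ d ∈ P.support.filter (fun d => mdeg d ∈ s), (mfact d : ℝ) * |coeff d P| :=
        Finset.sum_fiberwise_eq_sum_filter _ _ _ _
    _ ≤ pnorm P :=
        Finset.sum_le_sum_of_subset_of_nonneg (Finset.filter_subset _ _) fun d _ _ => by positivity

theorem IsControlled.pnorm_le {a b : ℕ} {B : ℝ} {P : RealPoly n} (hP : IsControlled a b B P) :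
    pnorm P ≤ (∑ d ∈ multiIndices n b, (mfact d : ℝ)) * B := by
  have hB := hP.nonneg
  rw [Finset.sum_mul]
  exact (Finset.sum_le_sum fun d _ => mul_le_mul_of_nonneg_left (hP.abs_coeff_le d)
    (by positivity)).trans (Finset.sum_le_sum_of_subset_of_nonneg
      (support_subset_multiIndices hP.totalDegree_le) fun d _ _ => by positivity)

theorem mem_sq_idealOfVars_of_coeff_eq_zero {P : RealPoly n} (h0 : coeff 0 P = 0)
    (h1 : ∀ i, coeff (Finsupp.single i 1) P = 0) : P ∈ idealOfVars (Fin n) ℝ ^ 2 := by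
  refine (mem_pow_idealOfVars_iff' _ _).2 fun d hd => ?_
  rcases Nat.eq_zero_or_pos d.degree with hd0 | hdpos
  · rw [(Finsupp.degree_eq_zero_iff d).1 hd0, h0]
  · obtain ⟨e, i, rfl⟩ := exists_eq_add_single_of_mdeg_pos hdpos
    have he : e.degree = 0 := by
      rw [map_add, Finsupp.degree_single] at hd
      omega
    rw [(Finsupp.degree_eq_zero_iff e).1 he, zero_add, h1]

section xpn

variable [NeZero n]

theorem xpn_nonneg (x : En n) : 0 ≤ xpn x := Real.sqrt_nonneg _

theorem xpn_le_norm (x : En n) : xpn x ≤ ‖x‖ := by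
  refine Real.sqrt_le_iff.2 ⟨norm_nonneg _, ?_⟩
  rw [EuclideanSpace.real_norm_sq_eq]
  exact Finset.sum_le_sum_of_subset_of_nonneg (Finset.subset_univ _) fun _ _ _ => sq_nonneg _

theorem continuous_xpn : Continuous (xpn : En n → ℝ) := by
  unfold xpn
  fun_prop

theorem mul_xpn_rpow_le {K M e : ℝ} (hK : 0 ≤ K) (hKM : K ≤ M) (he : 0 ≤ e) (x : En n) :
    K * xpn x ^ e ≤ M * ‖x‖ ^ e :=
  mul_le_mul hKM (Real.rpow_le_rpow (xpn_nonneg x) (xpn_le_norm x) he)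
    (Real.rpow_nonneg (xpn_nonneg x) _) (hK.trans hKM)

end xpn

namespace DomainCmα

variable [NeZero n] {l : ℕ} {α K M : ℝ} {Q : RealPoly n} {Ω : Set (En n)} {x : En n}

theorem isBoundaryGraph (h : DomainCmα l α K Q Ω) (hl : 1 ≤ l) (hM : pnorm Q ≤ M) :
    IsBoundaryGraph M Q :=
  ⟨mem_sq_idealOfVars_of_coeff_eq_zero h.2.1 (h.2.2.2.1 hl), h.2.2.1,
    fun d => (abs_coeff_le_pnorm Q d).trans hM⟩

theorem abs_xn_sub_le_of_mem_frontier (h : DomainCmα l α K Q Ω) (hα : 0 ≤ α) (hΩ : IsOpen Ω)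
    (hx : x ∈ frontier Ω) (hx1 : ‖x‖ < 1) : |xn x - peval Q x| ≤ K * xpn x ^ ((l : ℝ) + α) := by
  obtain ⟨-, -, -, -, habove, hbelow⟩ := h
  have hxΩ : x ∉ Ω := (hΩ.frontier_eq ▸ hx).2
  have hrpow : Continuous fun y : En n => xpn y ^ ((l : ℝ) + α) :=
    continuous_xpn.rpow_const fun _ => Or.inr (by positivity)
  have hopen : IsOpen {y : En n | ‖y‖ < 1 ∧ xn y < peval Q y - K * xpn y ^ ((l : ℝ) + α)} :=
    (isOpen_lt continuous_norm continuous_const).inter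
      (isOpen_lt continuous_xn ((continuous_peval Q).sub (continuous_const.mul hrpow)))
  refine abs_le.2 ⟨?_, ?_⟩
  · by_contra! hlt
    obtain ⟨y, ⟨hy1, hylt⟩, hyΩ⟩ := mem_closure_iff.1 (frontier_subset_closure hx) _ hopen
      ⟨hx1, by linarith⟩
    exact hbelow y hy1 hylt hyΩ
  · by_contra! hgt
    exact hxΩ (habove x hx1 (by linarith))

theorem abs_peval_add_le (h : DomainCmα l α K Q Ω) (hl : 1 ≤ l) (hα : 0 ≤ α) (hα1 : α ≤ 1)
    (hK : 0 ≤ K) (hM : pnorm Q + K ≤ M) (hx1 : ‖x‖ < 1) :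
    |peval Q x| + K * xpn x ^ ((l : ℝ) + α) ≤
      ((multiIndices n l).card + 1) * M * ‖x‖ ^ (1 + α) := by
  have hQ := pnorm_nonneg Q
  have hM0 : 0 ≤ M := by linarith
  have hgraph := h.isBoundaryGraph hl (show pnorm Q ≤ M by linarith)
  have hcontrol : IsControlled 2 l M Q := ⟨hgraph.mem_sq, h.1, hgraph.abs_coeff_le⟩
  have hl1 : (1 : ℝ) ≤ l := by exact_mod_cast hl
  have hsq : ‖x‖ ^ 2 ≤ ‖x‖ ^ (1 + α) := by
    rw [← Real.rpow_natCast]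
    exact Real.rpow_le_rpow_of_exponent_ge' (norm_nonneg x) hx1.le (by positivity)
      (by push_cast; linarith)
  have hpow : ‖x‖ ^ ((l : ℝ) + α) ≤ ‖x‖ ^ (1 + α) :=
    Real.rpow_le_rpow_of_exponent_ge' (norm_nonneg x) hx1.le (by positivity) (by linarith)
  calc |peval Q x| + K * xpn x ^ ((l : ℝ) + α)
      ≤ (multiIndices n l).card * M * ‖x‖ ^ 2 + M * ‖x‖ ^ ((l : ℝ) + α) :=
        add_le_add (hcontrol.abs_peval_le hx1.le)
          (mul_xpn_rpow_le hK (by linarith) (by positivity) x)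
    _ ≤ (multiIndices n l).card * M * ‖x‖ ^ (1 + α) + M * ‖x‖ ^ (1 + α) := by gcongr
    _ = ((multiIndices n l).card + 1) * M * ‖x‖ ^ (1 + α) := by ring

theorem mem_of_lt_xn (h : DomainCmα l α K Q Ω) (hl : 1 ≤ l) (hα : 0 ≤ α) (hα1 : α ≤ 1)
    (hK : 0 ≤ K) (hM : pnorm Q + K ≤ M) (hx1 : ‖x‖ < 1)
    (hx : ((multiIndices n l).card + 1) * M * ‖x‖ ^ (1 + α) < xn x) : x ∈ Ω := by
  have hslab := h.abs_peval_add_le hl hα hα1 hK hM hx1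
  exact h.2.2.2.2.1 x hx1 (by linarith [le_abs_self (peval Q x)])

theorem neg_le_xn (h : DomainCmα l α K Q Ω) (hl : 1 ≤ l) (hα : 0 ≤ α) (hα1 : α ≤ 1)
    (hK : 0 ≤ K) (hM : pnorm Q + K ≤ M) (hx1 : ‖x‖ < 1) (hx : x ∈ Ω) :
    -(((multiIndices n l).card + 1) * M * ‖x‖ ^ (1 + α)) ≤ xn x := by
  have hslab := h.abs_peval_add_le hl hα hα1 hK hM hx1
  by_contra! hlt
  exact h.2.2.2.2.2 x hx1 (by linarith [neg_abs_le (peval Q x)]) hx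

end DomainCmα

theorem eq_zero_of_abs_le_norm_rpow {Ω : Set (En n)} {u : En n → ℝ} {K κ : ℝ} (hκ : 0 < κ)
    (h0 : (0 : En n) ∈ closure Ω) (hcont : ContinuousOn u (closure Ω ∩ ball 0 1))
    (hu : ∀ x ∈ Ω, ‖x‖ < 1 → |u x| ≤ K * ‖x‖ ^ κ) : u 0 = 0 := by
  have h0' : (0 : En n) ∈ closure (Ω ∩ ball 0 1) :=
    isOpen_ball.closure_inter ⟨h0, mem_ball_self one_pos⟩
  have := mem_closure_iff_nhdsWithin_neBot.1 h0'
  have hlim : Tendsto u (𝓝[Ω ∩ ball 0 1] 0) (𝓝 (u 0)) :=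
    (hcont 0 ⟨h0, mem_ball_self one_pos⟩).mono (inter_subset_inter_left _ subset_closure)
  have hbound : Tendsto (fun x : En n => K * ‖x‖ ^ κ) (𝓝[Ω ∩ ball 0 1] 0) (𝓝 0) := by
    have hcont : Continuous fun x : En n => K * ‖x‖ ^ κ :=
      continuous_const.mul (continuous_norm.rpow_const fun _ => Or.inr hκ.le)
    simpa [Real.zero_rpow hκ.ne'] using (hcont.tendsto 0).mono_left nhdsWithin_le_nhds
  refine tendsto_nhds_unique hlim (squeeze_zero_norm' ?_ hbound)
  filter_upwards [self_mem_nhdsWithin] with x hx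
  exact hu x hx.1 (mem_ball_zero_iff.1 hx.2)

namespace SolvesDirichlet

variable {k l N : ℕ} {α κ e K K' M M' Ku Kf Kg Mu : ℝ} {Ω : Set (En n)}
  {u f g : En n → ℝ} {F G Q : RealPoly n}

theorem abs_hasLap_sub_le (h : SolvesDirichlet Ω u f g) (hΩ : IsOpen Ω)
    (hf : ∀ x ∈ Ω ∩ ball (0 : En n) 1, |f x - peval F x| ≤ K * ‖x‖ ^ e) (hKK' : K ≤ K') :
    ∀ x ∈ Ω, ‖x‖ < 1 → ∃ L, |L - peval F x| ≤ K' * ‖x‖ ^ e ∧ HasLap u x L := by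
  intro x hx hx1
  have hxB : x ∈ Ω ∩ ball (0 : En n) 1 := ⟨hx, mem_ball_zero_iff.2 hx1⟩
  obtain ⟨-, hdiff, hlap⟩ := h.2.1 x hxB
  refine ⟨f x, (hf x hxB).trans (by gcongr), hlap ▸ ?_⟩
  exact hasLap_lapAt (hΩ.inter isOpen_ball) hxB (fun y hy => (h.2.1 y hy).1) hdiff

theorem rhs_mem_pow [NeZero n] (h : SolvesDirichlet Ω u f g) (hΩ : IsOpen Ω) (hα : 0 < α)
    (hM : 1 ≤ M) (hcone : ∀ x : En n, ‖x‖ < 1 → M * ‖x‖ ^ (1 + α) < xn x → x ∈ Ω)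
    (hKu : 0 ≤ Ku) (hu : ∀ x ∈ Ω, ‖x‖ < 1 → |u x| ≤ Ku * ‖x‖ ^ κ) (hKf : 0 ≤ Kf)
    (hf : ∀ x ∈ Ω ∩ ball (0 : En n) 1, |f x - peval F x| ≤ Kf * ‖x‖ ^ e)
    (hκ : k < κ) (he : (k : ℝ) - 2 < e) : F ∈ idealOfVars (Fin n) ℝ ^ (k - 1) := by
  cases k with
  | zero => simp
  | succ k =>
    obtain ⟨ρ, hρ, hρ1, hsub⟩ := exists_normalCone_subset hα hM hcone
    have hnorm {x : En n} (hx : x ∈ normalCone ρ) : ‖x‖ < 1 := hx.1.trans_le hρ1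
    have hsol : IsConeSolution ρ κ e (Ku + Kf) u F :=
      { radius_pos := hρ
        radius_le := hρ1
        const_nonneg := by positivity
        continuousOn := h.1.mono fun x hx =>
          ⟨subset_closure (hsub hx), mem_ball_zero_iff.2 (hnorm hx)⟩
        abs_hasLap_sub_le := fun x hx =>
          h.abs_hasLap_sub_le hΩ hf (by linarith) x (hsub hx) (hnorm hx)
        abs_le_rpow := fun x hx => (hu x (hsub hx) (hnorm hx)).trans (by gcongr; linarith) }
    push_cast at hκ he
    exact hsol.mem_pow_idealOfVars (j := k) hκ (by linarith)

theorem boundary_mem_pow (h : SolvesDirichlet Ω u f g) (h0 : (0 : En n) ∈ frontier Ω)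
    (hκ : 0 < κ) (hu : ∀ x ∈ Ω, ‖x‖ < 1 → |u x| ≤ Ku * ‖x‖ ^ κ) (he : 0 < e)
    (hg : ∀ x ∈ frontier Ω ∩ ball (0 : En n) 1, |g x - peval G x| ≤ Kg * ‖x‖ ^ e)
    (hG : ∀ d : Fin n →₀ ℕ, 1 ≤ mdeg d → mdeg d ≤ k → coeff d G = 0) :
    G ∈ idealOfVars (Fin n) ℝ ^ (k + 1) := by
  have h0B : (0 : En n) ∈ frontier Ω ∩ ball 0 1 := ⟨h0, mem_ball_self one_pos⟩
  have hG0 : coeff 0 G = 0 := by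
    have hg0 := hg 0 h0B
    rw [← h.2.2 0 h0B, eq_zero_of_abs_le_norm_rpow hκ (frontier_subset_closure h0) h.1 hu,
      norm_zero, Real.zero_rpow he.ne', mul_zero, zero_sub, abs_neg] at hg0
    rw [coeff_zero_eq_peval_zero, abs_nonpos_iff.1 hg0]
  refine (mem_pow_idealOfVars_iff' _ _).2 fun d hd => ?_
  rcases Nat.eq_zero_or_pos d.degree with hd0 | hdpos
  · rw [(Finsupp.degree_eq_zero_iff d).1 hd0, hG0]
  · exact hG d hdpos (Nat.lt_succ_iff.1 hd)

theorem dirichletProblem [NeZero n] (h : SolvesDirichlet Ω u f g) (hl : 1 ≤ l)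
    (hN : k + l = N + 2) (hα : 0 < α) (hα1 : α ≤ 1) (hΩ : IsOpen Ω)
    (h0 : (0 : En n) ∈ frontier Ω) (hK : 0 ≤ K) (hdom : DomainCmα l α K Q Ω)
    (hM : pnorm Q + K ≤ M) (hM' : 1 ≤ M') (hMM' : ((multiIndices n l).card + 1) * M ≤ M')
    (hKu : 0 ≤ Ku) (hu : ∀ x ∈ Ω, ‖x‖ < 1 → |u x| ≤ Ku * ‖x‖ ^ ((k : ℝ) + α))
    (hFdeg : F.totalDegree ≤ N) (hKf : 0 ≤ Kf)
    (hf : ∀ x ∈ Ω ∩ ball (0 : En n) 1, |f x - peval F x| ≤ Kf * ‖x‖ ^ ((N : ℝ) + α))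
    (hGdeg : G.totalDegree ≤ N + 2) (hKg : 0 ≤ Kg)
    (hg : ∀ x ∈ frontier Ω ∩ ball (0 : En n) 1,
      |g x - peval G x| ≤ Kg * ‖x‖ ^ ((N : ℝ) + 2 + α))
    (hG : ∀ d : Fin n →₀ ℕ, 1 ≤ mdeg d → mdeg d ≤ k → coeff d G = 0)
    (hMu : 0 ≤ Mu) (hub : ∀ x ∈ Ω ∩ ball (0 : En n) 1, |u x| ≤ Mu)
    (hD : 0 < Mu + (pnorm F + Kf) + (pnorm G + Kg)) :
    DirichletProblem k l N α M' Ω u F G Q (Mu + (pnorm F + Kf) + (pnorm G + Kg)) := by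
  have hF := pnorm_nonneg F
  have hG' := pnorm_nonneg G
  have hQ := pnorm_nonneg Q
  have hMleM' : M ≤ M' := (le_mul_of_one_le_left (by linarith)
    (le_add_of_nonneg_left (Nat.cast_nonneg _))).trans hMM'
  have hNr : (k : ℝ) + l = N + 2 := by exact_mod_cast hN
  have hcone (x : En n) (hx1 : ‖x‖ < 1) (hx : M' * ‖x‖ ^ (1 + α) < xn x) : x ∈ Ω :=
    hdom.mem_of_lt_xn hl hα.le hα1 hK hM hx1 (hx.trans_le' (by gcongr))
  have hFpow := h.rhs_mem_pow hΩ hα hM' hcone hKu hu hKf hf (k := k) (by linarith)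
    (by linarith [(Nat.cast_nonneg l : (0 : ℝ) ≤ l)])
  have hGpow := h.boundary_mem_pow h0 (by positivity) hu (by positivity) hg hG
  exact
    { isOpen := hΩ
      zero_notMem := (hΩ.frontier_eq ▸ h0).2
      bound_pos := hD
      isBoundaryGraph := hdom.isBoundaryGraph hl (by linarith)
      totalDegree_graph_le := hdom.1
      abs_xn_sub_le := fun x hx hx1 =>
        (hdom.abs_xn_sub_le_of_mem_frontier hα.le hΩ hx hx1).trans
          (mul_xpn_rpow_le hK (by linarith) (by positivity) x)
      neg_le_xn := fun x hx hx1 => (hdom.neg_le_xn hl hα.le hα1 hK hM hx1 hx).trans'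
        (neg_le_neg (by gcongr))
      mem_of_lt_xn := hcone
      continuousOn := h.1
      abs_hasLap_sub_le := h.abs_hasLap_sub_le hΩ hf (by linarith)
      abs_sub_le_of_mem_frontier := fun x hx hx1 => by
        have hxB : x ∈ frontier Ω ∩ ball (0 : En n) 1 := ⟨hx, mem_ball_zero_iff.2 hx1⟩
        rw [h.2.2 x hxB]
        exact (hg x hxB).trans (mul_le_mul_of_nonneg_right (by linarith) (by positivity))
      isControlled_rhs :=
        ⟨hFpow, hFdeg, fun d => (abs_coeff_le_pnorm F d).trans (by linarith)⟩
      isControlled_boundary :=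
        ⟨hGpow, hGdeg, fun d => (abs_coeff_le_pnorm G d).trans (by linarith)⟩
      exists_abs_le_rpow := ⟨Ku, hKu, hu⟩
      abs_le_bound := fun x hx hx1 =>
        (hub x ⟨hx, mem_ball_zero_iff.2 hx1⟩).trans (by linarith) }

end SolvesDirichlet

theorem eq_zero_of_data_bound_eq_zero {F G : RealPoly n} {Mu Kf Kg : ℝ} (hMu : 0 ≤ Mu)
    (hKf : 0 ≤ Kf) (hKg : 0 ≤ Kg) (h : Mu + (pnorm F + Kf) + (pnorm G + Kg) = 0) :
    Mu = 0 ∧ F = 0 ∧ G = 0 := by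
  have hF := pnorm_nonneg F
  have hG := pnorm_nonneg G
  exact ⟨by linarith, eq_zero_of_pnorm_eq_zero (by linarith),
    eq_zero_of_pnorm_eq_zero (by linarith)⟩

theorem abs_le_of_abs_sub_peval_le {k : ℕ} {K κ : ℝ} {Ω : Set (En n)} {u : En n → ℝ}
    {P : RealPoly n} (hdeg : P.totalDegree ≤ k) (hP : ∀ d, mdeg d ≤ k → coeff d P = 0)
    (hu : ∀ x ∈ Ω ∩ ball (0 : En n) 1, |u x - peval P x| ≤ K * ‖x‖ ^ κ) :
    ∀ x ∈ Ω, ‖x‖ < 1 → |u x| ≤ |K| * ‖x‖ ^ κ := by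
  intro x hx hx1
  have hP0 : P = 0 := eq_zero_of_mem_pow_idealOfVars
    (mem_pow_idealOfVars.2 fun d hd => hP d (Nat.lt_succ_iff.1 hd)) (Nat.lt_succ_iff.2 hdeg)
  have hux := hu x ⟨hx, mem_ball_zero_iff.2 hx1⟩
  rw [hP0, peval, map_zero, sub_zero] at hux
  exact hux.trans (by gcongr; exact le_abs_self K)

namespace IsPolyApprox

variable [NeZero n] {k N : ℕ} {Ω : Set (En n)} {u : En n → ℝ} {F G Q P : RealPoly n} {B β : ℝ}

theorem zero (hu : ∀ x ∈ Ω, ‖x‖ < 1 → u x = 0) : IsPolyApprox k N Ω u 0 0 Q 0 β 0 where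
  plap_eq := by simp [plap]
  graphTrace_eq := rfl
  isControlled := IsControlled.zero _ _
  abs_sub_le x hx hx1 := by simp [hu x hx hx1, peval]

theorem coeff_substLast_eq (hP : IsPolyApprox k N Ω u F G Q B β P) {d : Fin n →₀ ℕ}
    (hd : mdeg d ≤ N + 2) : coeff d (substLast Q P) = coeff d (substLast Q G) := by
  simpa only [graphTrace, coeff_truncDegree, Nat.lt_succ_iff, if_pos hd] using
    congrArg (coeff d) hP.graphTrace_eq

theorem sum_derivNorm_le (hP : IsPolyApprox k N Ω u F G Q B β P) (s : Finset ℕ) :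
    ∑ i ∈ s, derivNorm i P ≤ (∑ d ∈ multiIndices n (N + 2), (mfact d : ℝ)) * B :=
  (sum_derivNorm_le_pnorm s P).trans hP.isControlled.pnorm_le

end IsPolyApprox

theorem stmt_0_general (n : ℕ) [NeZero n] (k l : ℕ) (hkl : 2 ≤ k + l) (hl : 1 ≤ l)
    (α : ℝ) (hα0 : 0 < α) (hα1 : α < 1) (M : ℝ) :
    ∃ C : ℝ, 0 < C ∧
      ∀ (Ω : Set (En n)) (u f g : En n → ℝ)
        (Pu Pf Pg PΩ : RealPoly n) (Ku Kf Kg KΩ Mu : ℝ),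
        IsOpen Ω → (0 : En n) ∈ frontier Ω → SolvesDirichlet Ω u f g →
        0 ≤ KΩ → DomainCmα l α KΩ PΩ Ω → pnorm PΩ + KΩ ≤ M →
        Pu.totalDegree ≤ k →
        (∀ x ∈ Ω ∩ ball (0 : En n) 1, |u x - peval Pu x| ≤ Ku * ‖x‖ ^ ((k : ℝ) + α)) →
        (∀ d : Fin n →₀ ℕ, mdeg d ≤ k → coeff d Pu = 0) →
        Pf.totalDegree ≤ k + l - 2 → 0 ≤ Kf →
        (∀ x ∈ Ω ∩ ball (0 : En n) 1,
          |f x - peval Pf x| ≤ Kf * ‖x‖ ^ (((k + l - 2 : ℕ) : ℝ) + α)) →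
        Pg.totalDegree ≤ k + l → 0 ≤ Kg →
        (∀ x ∈ frontier Ω ∩ ball (0 : En n) 1,
          |g x - peval Pg x| ≤ Kg * ‖x‖ ^ (((k + l : ℕ) : ℝ) + α)) →
        (∀ d : Fin n →₀ ℕ, 1 ≤ mdeg d → mdeg d ≤ k → coeff d Pg = 0) →
        0 ≤ Mu → (∀ x ∈ Ω ∩ ball (0 : En n) 1, |u x| ≤ Mu) →
        ∃ P : RealPoly n, P.totalDegree ≤ k + l ∧ (∀ d, mdeg d ≤ k → coeff d P = 0) ∧
          (∀ x ∈ Ω ∩ ball (0 : En n) 1,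
            |u x - peval P x| ≤
              C * ‖x‖ ^ (((k + l : ℕ) : ℝ) + α) * (Mu + (pnorm Pf + Kf) + (pnorm Pg + Kg))) ∧
          (∑ i ∈ Finset.Icc (k + 1) (k + l), derivNorm i P) ≤
            C * (Mu + (pnorm Pf + Kf) + (pnorm Pg + Kg)) ∧
          plap P = Pf ∧
          (∀ d : Fin n →₀ ℕ, mdeg d ≤ k + l →
            coeff d (substLast PΩ P) = coeff d (substLast PΩ Pg)) := by
  obtain ⟨N, hN⟩ : ∃ N, k + l = N + 2 := ⟨k + l - 2, by omega⟩
  set M' : ℝ := ((multiIndices n l).card + 1) * |M| + 1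
  have hM' : 1 ≤ M' := le_add_of_nonneg_left (by positivity)
  have hMM' : ((multiIndices n l).card + 1) * M ≤ M' :=
    (mul_le_mul_of_nonneg_left (le_abs_self M) (by positivity)).trans
      (le_add_of_nonneg_right one_pos.le)
  obtain ⟨C, hC, happrox⟩ := hasApproxOrder n hl hN hα0 hα1 hM'
  set S : ℝ := ∑ d ∈ multiIndices n (N + 2), (mfact d : ℝ)
  have hS : 0 ≤ S := by positivity
  refine ⟨C + S * C, add_pos_of_pos_of_nonneg hC (mul_nonneg hS hC.le), ?_⟩
  intro Ω u f g Pu Pf Pg PΩ Ku Kf Kg KΩ Mu hΩ h0 hsol hKΩ hdom hM hPudeg hu hPu hfdeg hKf hf hgdeg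
    hKg hg hPg hMu hub
  rw [show k + l - 2 = N by omega] at hfdeg hf
  simp only [hN, Nat.cast_add, Nat.cast_ofNat] at hgdeg hg ⊢
  set D := Mu + (pnorm Pf + Kf) + (pnorm Pg + Kg)
  have hD : 0 ≤ D := by linarith [pnorm_nonneg Pf, pnorm_nonneg Pg]
  obtain ⟨P, hP⟩ : ∃ P, IsPolyApprox k N Ω u Pf Pg PΩ (C * D) ((N : ℝ) + 2 + α) P := by
    rcases hD.eq_or_lt with hD0 | hDpos
    · obtain ⟨hMu0, rfl, rfl⟩ := eq_zero_of_data_bound_eq_zero hMu hKf hKg hD0.symm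
      rw [← hD0, mul_zero]
      exact ⟨0, IsPolyApprox.zero fun x hx hx1 =>
        abs_nonpos_iff.1 (hMu0 ▸ hub x ⟨hx, mem_ball_zero_iff.2 hx1⟩)⟩
    · exact happrox _ _ _ _ _ _ (hsol.dirichletProblem hl hN hα0 hα1.le hΩ h0 hKΩ hdom hM
        hM' hMM' (abs_nonneg Ku) (abs_le_of_abs_sub_peval_le hPudeg hPu hu) hfdeg hKf hf hgdeg hKg
        hg hPg hMu hub hDpos)
  refine ⟨P, hP.isControlled.totalDegree_le, fun d hd =>
    mem_pow_idealOfVars.1 hP.isControlled.mem_pow d (Nat.lt_succ_iff.2 hd), fun x hx => ?_,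
    (hP.sum_derivNorm_le _).trans ?_, hP.plap_eq, fun d hd => hP.coeff_substLast_eq hd⟩
  · refine (hP.abs_sub_le x hx.1 (mem_ball_zero_iff.1 hx.2)).trans ?_
    rw [mul_right_comm]
    gcongr
    exact le_add_of_nonneg_right (by positivity)
  · rw [add_mul, mul_assoc]
    exact le_add_of_nonneg_left (by positivity)

/-- Theorem 1.1: higher boundary pointwise regularity for the Dirichlet
problem when the derivatives of `u` and `g` vanish at `0 ∈ ∂Ω`. -/
theorem stmt_0 (n : ℕ) [NeZero n] (hn : 2 ≤ n) (k l : ℕ) (hk : 1 ≤ k) (hl : 1 ≤ l)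
    (α : ℝ) (hα0 : 0 < α) (hα1 : α < 1) (M : ℝ) :
    ∃ C : ℝ, 0 < C ∧
      ∀ (Ω : Set (En n)) (u f g : En n → ℝ)
        (Pu Pf Pg PΩ : MvPolynomial (Fin n) ℝ) (Ku Kf Kg KΩ Mu : ℝ),
        IsOpen Ω → IsConnected Ω → IsBounded Ω → (0 : En n) ∈ frontier Ω →
        SolvesDirichlet Ω u f g →
        -- `∂Ω ∈ C^{l,α}(0)` with `‖∂Ω∩B₁‖_{C^{l,α}(0)} ≤ M`
        0 ≤ KΩ → DomainCmα l α KΩ PΩ Ω → pnorm PΩ + KΩ ≤ M →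
        -- `u ∈ C^{k,α}(0)` with `u(0) = |Du(0)| = ⋯ = |D^k u(0)| = 0`
        Pu.totalDegree ≤ k →
        (∀ x ∈ Ω ∩ ball (0 : En n) 1, |u x - peval Pu x| ≤ Ku * ‖x‖ ^ ((k : ℝ) + α)) →
        (∀ d : Fin n →₀ ℕ, mdeg d ≤ k → MvPolynomial.coeff d Pu = 0) →
        -- `f ∈ C^{k+l-2,α}(0)`
        Pf.totalDegree ≤ k + l - 2 → 0 ≤ Kf →
        (∀ x ∈ Ω ∩ ball (0 : En n) 1,
          |f x - peval Pf x| ≤ Kf * ‖x‖ ^ (((k + l - 2 : ℕ) : ℝ) + α)) →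
        -- `g ∈ C^{k+l,α}(0)` with `|Dg(0)| = ⋯ = |D^k g(0)| = 0`
        Pg.totalDegree ≤ k + l → 0 ≤ Kg →
        (∀ x ∈ frontier Ω ∩ ball (0 : En n) 1,
          |g x - peval Pg x| ≤ Kg * ‖x‖ ^ (((k + l : ℕ) : ℝ) + α)) →
        (∀ d : Fin n →₀ ℕ, 1 ≤ mdeg d → mdeg d ≤ k → MvPolynomial.coeff d Pg = 0) →
        -- `‖u‖_{L^∞(Ω∩B₁)} ≤ Mu`
        0 ≤ Mu → (∀ x ∈ Ω ∩ ball (0 : En n) 1, |u x| ≤ Mu) →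
        -- conclusion: `u ∈ C^{k+l,α}(0)`
        ∃ P : MvPolynomial (Fin n) ℝ, P.totalDegree ≤ k + l ∧
          (∀ x ∈ Ω ∩ ball (0 : En n) 1,
            |u x - peval P x| ≤
              C * ‖x‖ ^ (((k + l : ℕ) : ℝ) + α) * (Mu + (pnorm Pf + Kf) + (pnorm Pg + Kg))) ∧
          (∑ i ∈ Finset.Icc (k + 1) (k + l), derivNorm i P) ≤
            C * (Mu + (pnorm Pf + Kf) + (pnorm Pg + Kg)) ∧
          plap P = Pf ∧
          (∀ d : Fin n →₀ ℕ, mdeg d ≤ k + l →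
            MvPolynomial.coeff d (substLast PΩ P) = MvPolynomial.coeff d (substLast PΩ Pg)) := by
  obtain ⟨C, hC, hreg⟩ := stmt_0_general n k l (by omega) hl α hα0 hα1 M
  refine ⟨C, hC, ?_⟩
  intro Ω u f g Pu Pf Pg PΩ Ku Kf Kg KΩ Mu hΩ _ _ h0 hsol hKΩ hdom hM hPudeg hu hPu hfdeg hKf hf
    hgdeg hKg hg hPg hMu hub
  obtain ⟨P, hdeg, -, hP⟩ := hreg Ω u f g Pu Pf Pg PΩ Ku Kf Kg KΩ Mu hΩ h0 hsol hKΩ hdom hM hPudeg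
    hu hPu hfdeg hKf hf hgdeg hKg hg hPg hMu hub
  exact ⟨P, hdeg, hP⟩
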